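/- Let K be a number field, B ⊆ K an order, S ⊆ B a multiplicative submonoid with 0 ∉ S, and R = BS⁻¹ the localization of B at S. Let n ≥ 3 and let τ : SLₙ(R) → ℂ be an extremal normalized character. Then either (1) τ factors through a finite quotient of SLₙ(R), or (2) τ(g) = 0 for every g ∈ SLₙ(R) not in the center of SLₙ(R) (i.e. τ is induced from the center). -/

import Mathlib

/-!
Let `Γ = SL_ι(R)` and let `φ` be an extremal character. The GNS construction gives commuting unitary
representations `π`, `ρ` of `Γ` on a Hilbert space `H` and a cyclic vector `ξ`, fixed by all `π g ρ g`,
with `φ g = ⟪ξ, π g ξ⟫`. The functional `a ↦ ⟪ξ, a ξ⟫` is a trace on the operators commuting with `ρ`,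
and extremality means that a `ρ`-invariant closed subspace onto which `ξ` projects to a vector fixed
by the diagonal action `π g ρ g` is either orthogonal to `ξ` or contains it
(`GNSData.proj_eq_zero_or`).

*Dichotomy* (`IsExtremalCharacter.dichotomy`). For each pair `i ≠ j` consider the projection `η` of `ξ`
to the closure of the space of vectors fixed by the elementary matrices `1 + x z e_ij`, `z ∈ R`, for
some `x ≠ 0`. The commutator relations show that `η` does not depend on `(i, j)`. It is then fixed by
the diagonal action of the `2 × 2` blocks, and these generate `Γ` because of the stable range condition
which the finiteness of the rings `R / x` provides. So `η = 0` or `η = ξ`.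

* If `η = 0`, the character vanishes on all nontrivial elementary matrices, hence on all nontrivial
  transvections, hence off the center, since `φ` vanishes at an element with infinitely many
  conjugates `g_k` such that `φ (g_k⁻¹ g_l) = 0` for `k ≠ l` (`IsCharacter.eq_zero_of_conj`).
* If `η = ξ`, the dimension inequality `dim (A ∩ B) ≥ dim A + dim B - 1` for the trace dimension gives
  a nonzero vector fixed by all elementary matrices of some level `x`. The group these generate
  contains the normal closure of the elementary matrices of level `x²`, so the vectors fixed by this
  normal closure are the whole space by extremality: `φ = 1` on the elementary matrices of some level.

*Finiteness in the second case* (`Matrix.SpecialLinearGroup.factorsThroughFiniteQuotient`). Let `N` be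
the kernel of `φ`, which contains all elementary matrices of level `x`. Stable range reduces matrices
of the congruence subgroup of level `x` to `2 × 2` blocks, and identities for Mennicke symbols show
that this congruence subgroup is central modulo `N`. So the center of `Γ / N` has finite index, and
the transfer is a power map from `Γ / N` to its center. A homomorphism from `Γ` to an abelian group is
given by a Mennicke symbol `(a, b)`. For every prime `l`, Dirichlet's theorem and a congruence in the
number field replace a power of this symbol by one whose second entry is a prime `q` in a residue
class for which the `l`-parts of the orders of the groups `GL_d(𝔽_q)` are bounded; this bounds the
exponent of the symbol (`IsMennicke.pow_factorial`). Hence the center of `Γ / N` has finite exponent.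
Since `φ` embeds this center in the roots of unity, it is finite, and so is `Γ / N`.
-/

open scoped ComplexOrder

/-- A normalized character on a group: positive definite, conjugation invariant,
and taking the value `1` at the identity. -/
def IsCharacter {Γ : Type*} [Group Γ] (φ : Γ → ℂ) : Prop :=
  (∀ (n : ℕ) (lam : Fin n → ℂ) (g : Fin n → Γ),
      0 ≤ ∑ i, ∑ j, lam i * (starRingEnd ℂ) (lam j) * φ ((g j)⁻¹ * g i)) ∧
  (∀ g h : Γ, φ (h * g * h⁻¹) = φ g) ∧
  φ 1 = 1

/-- An extremal normalized character: an extreme point (over `ℝ`) of the convex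
set of normalized characters. -/
def IsExtremalCharacter {Γ : Type*} [Group Γ] (τ : Γ → ℂ) : Prop :=
  τ ∈ Set.extremePoints ℝ {φ : Γ → ℂ | IsCharacter φ}

/-- A function on a group factors through a finite quotient if it is constant
on the cosets of some finite-index normal subgroup. -/
def FactorsThroughFiniteQuotient {Γ : Type*} [Group Γ] (φ : Γ → ℂ) : Prop :=
  ∃ N : Subgroup Γ, N.Normal ∧ N.FiniteIndex ∧ ∀ g h : Γ, g⁻¹ * h ∈ N → φ g = φ h

open scoped InnerProductSpace

/-! ### The GNS construction -/

section GNS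

variable {Γ : Type*} [Group Γ]

/-- The data produced by the GNS construction from a character `φ` of `Γ`: two commuting unitary
representations `π`, `ρ` (left and right translation) and a vector `ξ`, cyclic for `π` and fixed by
all `π g * ρ g`, such that `φ` is the matrix coefficient of `π` at `ξ`. -/
structure GNSData (φ : Γ → ℂ) (H : Type*) [NormedAddCommGroup H] [InnerProductSpace ℂ H] where
  /-- the left representation -/
  π : Γ →* (H ≃ₗᵢ[ℂ] H)
  /-- the right representation -/
  ρ : Γ →* (H ≃ₗᵢ[ℂ] H)
  /-- the cyclic vector -/
  ξ : H
  comm : ∀ g h w, π g (ρ h w) = ρ h (π g w)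
  fix : ∀ g, π g (ρ g ξ) = ξ
  cyc : Dense (Submodule.span ℂ (Set.range fun g => π g ξ) : Set H)
  coeff : ∀ g, ⟪ξ, π g ξ⟫_ℂ = φ g

theorem IsCharacter.apply_inv {φ : Γ → ℂ} (h : IsCharacter φ) (g : Γ) :
    φ g⁻¹ = (starRingEnd ℂ) (φ g) := by
  have key : ∀ c : ℂ, (c * φ g⁻¹ + (starRingEnd ℂ) c * φ g).im = 0 := by
    intro c
    have := h.1 2 ![c, 1] ![1, g]
    simp only [Fin.sum_univ_two, Matrix.cons_val_zero, Matrix.cons_val_one] at this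
    have him := (Complex.nonneg_iff.1 this).2
    simp [h.2.2] at him ⊢
    linarith
  have h1 := key 1
  have h2 := key Complex.I
  simp at h1 h2
  apply Complex.ext <;> simp <;> linarith

/-- The positive semidefinite form on finitely supported functions on `Γ` defined by `φ`. -/
noncomputable abbrev IsCharacter.core {φ : Γ → ℂ} (h : IsCharacter φ) :
    PreInnerProductSpace.Core ℂ (Γ →₀ ℂ) where
  inner u w := u.sum fun x a => w.sum fun y b => (starRingEnd ℂ) a * b * φ (x⁻¹ * y)
  conj_inner_symm u w := by
    simp only [Finsupp.sum]
    rw [map_sum, Finset.sum_comm]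
    refine Finset.sum_congr rfl fun x _ => ?_
    rw [map_sum]
    refine Finset.sum_congr rfl fun y _ => ?_
    rw [map_mul, map_mul, ← h.apply_inv]
    simp [mul_comm]
  re_inner_nonneg u := by
    classical
    let e := u.support.equivFin
    have h1 := h.1 u.support.card (fun i => u (e.symm i)) (fun i => (e.symm i : Γ))
    have h2 : (u.sum fun x a => u.sum fun y b => (starRingEnd ℂ) a * b * φ (x⁻¹ * y))
        = ∑ i, ∑ j, u (e.symm i) * (starRingEnd ℂ) (u (e.symm j)) *
          φ ((e.symm j : Γ)⁻¹ * (e.symm i : Γ)) := by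
      rw [Finset.sum_comm]
      simp only [Finsupp.sum]
      rw [← Finset.sum_coe_sort u.support]
      rw [← Equiv.sum_comp e.symm]
      refine Finset.sum_congr rfl fun j _ => ?_
      rw [← Finset.sum_coe_sort u.support, ← Equiv.sum_comp e.symm]
      refine Finset.sum_congr rfl fun i _ => ?_
      ring
    change 0 ≤ RCLike.re (u.sum fun x a => u.sum fun y b => (starRingEnd ℂ) a * b * φ (x⁻¹ * y))
    rw [h2]
    exact (Complex.nonneg_iff.1 h1).1
  add_left u w z := by
    classical
    refine Finsupp.sum_add_index' (by simp) ?_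
    intro x a b
    rw [← Finsupp.sum_add]
    refine Finsupp.sum_congr fun y _ => ?_
    rw [map_add]; ring
  smul_left u w r := by
    rw [Finsupp.sum_smul_index' (by simp), Finsupp.mul_sum]
    refine Finsupp.sum_congr fun x _ => ?_
    rw [Finsupp.mul_sum]
    refine Finsupp.sum_congr fun y _ => ?_
    simp; ring

theorem IsCharacter.exists_gram {Γ : Type u} [Group Γ] {φ : Γ → ℂ} (h : IsCharacter φ) :
    ∃ (H : Type u) (_ : NormedAddCommGroup H) (_ : InnerProductSpace ℂ H) (_ : CompleteSpace H)
      (v : Γ → H), (∀ x y, ⟪v x, v y⟫_ℂ = φ (x⁻¹ * y)) ∧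
        DenseRange (Finsupp.linearCombination ℂ v) := by
  let c := h.core
  let : SeminormedAddCommGroup (Γ →₀ ℂ) := InnerProductSpace.Core.toSeminormedAddCommGroup (𝕜 := ℂ)
  let : InnerProductSpace ℂ (Γ →₀ ℂ) := InnerProductSpace.ofCore c
  refine ⟨UniformSpace.Completion (Γ →₀ ℂ), inferInstance, inferInstance, inferInstance,
    fun x => ((Finsupp.single x 1 : Γ →₀ ℂ) : UniformSpace.Completion (Γ →₀ ℂ)), ?_, ?_⟩
  · intro x y
    rw [UniformSpace.Completion.inner_coe]
    change (Finsupp.sum _ fun x a => Finsupp.sum _ fun y b => (starRingEnd ℂ) a * b * φ (x⁻¹ * y)) = _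
    simp
  · have : ⇑(Finsupp.linearCombination ℂ (fun x : Γ => ((Finsupp.single x 1 : Γ →₀ ℂ) :
        UniformSpace.Completion (Γ →₀ ℂ)))) = fun f : Γ →₀ ℂ =>
          (f : UniformSpace.Completion (Γ →₀ ℂ)) := by
      have h2 : Finsupp.linearCombination ℂ (fun x : Γ => ((Finsupp.single x 1 : Γ →₀ ℂ) :
        UniformSpace.Completion (Γ →₀ ℂ))) =
          (UniformSpace.Completion.toComplL (𝕜 := ℂ) (E := Γ →₀ ℂ)).toLinearMap := by
        ext x
        simp
      rw [h2]; rfl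
    rw [this]
    exact UniformSpace.Completion.denseRange_coe

/-- Two total families with the same Gram matrix are related by a unitary operator. -/
theorem exists_unitary_of_gram {ι H : Type*} [NormedAddCommGroup H] [InnerProductSpace ℂ H]
    [CompleteSpace H] (v w : ι → H) (hv : DenseRange (Finsupp.linearCombination ℂ v))
    (hw : DenseRange (Finsupp.linearCombination ℂ w)) (hg : ∀ i j, ⟪w i, w j⟫_ℂ = ⟪v i, v j⟫_ℂ) :
    ∃ U : H ≃ₗᵢ[ℂ] H, ∀ i, U (v i) = w i := by
  have hn : ∀ f : ι →₀ ℂ, ‖Finsupp.linearCombination ℂ w ((LinearEquiv.refl ℂ (ι →₀ ℂ)) f)‖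
      = ‖Finsupp.linearCombination ℂ v f‖ := by
    intro f
    rw [LinearEquiv.refl_apply, @norm_eq_sqrt_re_inner ℂ, @norm_eq_sqrt_re_inner ℂ]
    congr 2
    simp only [Finsupp.linearCombination_apply, Finsupp.sum, sum_inner, inner_sum, inner_smul_left,
      inner_smul_right, hg]
  refine ⟨(LinearEquiv.refl ℂ (ι →₀ ℂ)).extendOfIsometry _ _ hv hw hn, fun i => ?_⟩
  have := LinearEquiv.extendOfIsometry_eq (LinearEquiv.refl ℂ (ι →₀ ℂ)) _ _ hv hw hn
    (Finsupp.single i 1)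
  simpa using this

theorem LinearIsometryEquiv.eq_of_total {ι H : Type*} [NormedAddCommGroup H]
    [InnerProductSpace ℂ H] {v : ι → H} (hv : DenseRange (Finsupp.linearCombination ℂ v))
    {U W : H ≃ₗᵢ[ℂ] H} (h : ∀ i, U (v i) = W (v i)) : U = W := by
  apply LinearIsometryEquiv.ext
  intro x
  refine congrFun (hv.equalizer U.continuous W.continuous ?_) x
  have : (U.toLinearEquiv.toLinearMap ∘ₗ Finsupp.linearCombination ℂ v) =
    (W.toLinearEquiv.toLinearMap ∘ₗ Finsupp.linearCombination ℂ v) := by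
      ext i; simpa using h i
  ext f
  exact congrArg (fun F : (ι →₀ ℂ) →ₗ[ℂ] H => F f) this

theorem IsCharacter.exists_gns {Γ : Type u} [Group Γ] {φ : Γ → ℂ} (h : IsCharacter φ) :
    ∃ (H : Type u) (_ : NormedAddCommGroup H) (_ : InnerProductSpace ℂ H) (_ : CompleteSpace H),
      Nonempty (GNSData φ H) := by
  obtain ⟨H, i1, i2, i3, v, hv, hd⟩ := h.exists_gram
  refine ⟨H, i1, i2, i3, ?_⟩
  have hcomp : ∀ e : Γ ≃ Γ, DenseRange (Finsupp.linearCombination ℂ (v ∘ e)) := by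
    intro e
    have : Set.range (Finsupp.linearCombination ℂ (v ∘ e)) =
        Set.range (Finsupp.linearCombination ℂ v) := by
      have := congrArg (fun S : Submodule ℂ H => (S : Set H))
        (show LinearMap.range (Finsupp.linearCombination ℂ (v ∘ e)) =
          LinearMap.range (Finsupp.linearCombination ℂ v) by
          rw [Finsupp.range_linearCombination, Finsupp.range_linearCombination,
            e.surjective.range_comp])
      simpa only [LinearMap.coe_range] using this
    unfold DenseRange
    rw [this]; exact hd
  have hl : ∀ g : Γ, ∃ U : H ≃ₗᵢ[ℂ] H, ∀ x, U (v x) = v (g * x) := fun g =>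
    exists_unitary_of_gram v (v ∘ (Equiv.mulLeft g)) hd (hcomp _) (by
      intro i j; simp [hv, mul_assoc])
  have hr : ∀ g : Γ, ∃ U : H ≃ₗᵢ[ℂ] H, ∀ x, U (v x) = v (x * g⁻¹) := fun g =>
    exists_unitary_of_gram v (v ∘ (Equiv.mulRight g⁻¹)) hd (hcomp _) (by
      intro i j
      simp only [Function.comp_apply, Equiv.coe_mulRight, hv]
      rw [← h.2.1 (i⁻¹ * j) g]; congr 1; group)
  choose π hπ using hl
  choose ρ hρ using hr
  refine ⟨{
    π := { toFun := π, map_one' := ?_, map_mul' := ?_ }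
    ρ := { toFun := ρ, map_one' := ?_, map_mul' := ?_ }
    ξ := v 1
    comm := ?_
    fix := ?_
    cyc := ?_
    coeff := ?_ }⟩
  · exact LinearIsometryEquiv.eq_of_total hd fun i => by simp [hπ]
  · exact fun g g' => LinearIsometryEquiv.eq_of_total hd fun i => by simp [hπ, mul_assoc]
  · exact LinearIsometryEquiv.eq_of_total hd fun i => by simp [hρ]
  · exact fun g g' => LinearIsometryEquiv.eq_of_total hd fun i => by simp [hρ, mul_assoc]
  · intro g g' w
    have : (ρ g').trans (π g) = (π g).trans (ρ g') :=
      LinearIsometryEquiv.eq_of_total hd fun i => by simp [hπ, hρ, mul_assoc]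
    exact congrArg (fun U : H ≃ₗᵢ[ℂ] H => U w) this
  · intro g; simp [hπ, hρ]
  · have : (Set.range fun g => π g (v 1)) = Set.range v := by
      congr 1; ext g; simp [hπ]
    simp only [MonoidHom.coe_mk, OneHom.coe_mk]
    rw [this, ← Finsupp.range_linearCombination, LinearMap.coe_range]
    exact hd
  · intro g
    simp [hπ, hv]

end GNS

/-! ### Consequences of positivity, and of extremality -/

section Hilbert

variable {H : Type*} [NormedAddCommGroup H] [InnerProductSpace ℂ H]

theorem inner_self_eq_ofReal (u : H) : ⟪u, u⟫_ℂ = ((‖u‖ ^ 2 : ℝ) : ℂ) := by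
  rw [inner_self_eq_norm_sq_to_K]; simp

/-- An infinite orthogonal family of vectors of equal length has constant inner product with a given
vector only if that constant vanishes. -/
theorem eq_zero_of_orthogonal_family {ι : Type*} [Infinite ι] (v : ι → H) (ξ : H) (C : ℝ) (c : ℂ)
    (hv : Pairwise fun k l => ⟪v k, v l⟫_ℂ = 0) (hC : ∀ k, ‖v k‖ = C)
    (hc : ∀ k, ⟪v k, ξ⟫_ℂ = c) : c = 0 := by
  classical
  have main : ∀ N : ℕ, (N : ℝ) * ‖c‖ ^ 2 ≤ C ^ 2 * ‖ξ‖ ^ 2 := by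
    intro N
    rcases Nat.eq_zero_or_pos N with rfl | hN
    · simp; positivity
    let e := Infinite.natEmbedding ι
    set s := ∑ k ∈ Finset.range N, v (e k)
    have h1 : ⟪s, ξ⟫_ℂ = N * c := by simp [s, sum_inner, hc]
    have h2 : ‖s‖ ^ 2 = N * C ^ 2 := by
      have : ⟪s, s⟫_ℂ = ((N * C ^ 2 : ℝ) : ℂ) := by
        simp only [s, sum_inner, inner_sum]
        rw [Finset.sum_congr rfl (g := fun _ => ((C ^ 2 : ℝ) : ℂ))]
        · simp
        · intro k hk
          rw [Finset.sum_eq_single k]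
          · rw [inner_self_eq_ofReal, hC]
          · intro l _ hl
            exact hv (fun h => hl (e.injective h))
          · exact fun h => absurd hk h
      rw [inner_self_eq_ofReal] at this
      exact_mod_cast this
    have h3 := norm_inner_le_norm (𝕜 := ℂ) s ξ
    rw [h1, norm_mul, Complex.norm_natCast] at h3
    have h4 : ((N : ℝ) * ‖c‖) ^ 2 ≤ (N * C ^ 2) * ‖ξ‖ ^ 2 := by
      rw [← h2, ← mul_pow]
      exact pow_le_pow_left₀ (by positivity) h3 2
    have hN' : (0 : ℝ) < N := by exact_mod_cast hN
    refine le_of_mul_le_mul_left ?_ hN'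
    nlinarith
  by_contra hne
  have hp : 0 < ‖c‖ ^ 2 := by positivity
  obtain ⟨N, hN⟩ := exists_nat_gt (C ^ 2 * ‖ξ‖ ^ 2 / ‖c‖ ^ 2)
  rw [div_lt_iff₀ hp] at hN
  exact absurd (main N) (not_le.2 hN)

variable [CompleteSpace H]

/-- Orthogonal projection onto the closure of a subspace. -/
noncomputable def proj (A : Submodule ℂ H) : H →L[ℂ] H := A.topologicalClosure.starProjection

theorem proj_mem (A : Submodule ℂ H) (u : H) : proj A u ∈ A.topologicalClosure :=
  Submodule.starProjection_apply_mem _ _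

theorem proj_of_mem {A : Submodule ℂ H} {u : H} (h : u ∈ A.topologicalClosure) : proj A u = u :=
  Submodule.starProjection_eq_self_iff.2 h

theorem mem_of_proj {A : Submodule ℂ H} {u : H} (h : proj A u = u) : u ∈ A.topologicalClosure :=
  Submodule.starProjection_eq_self_iff.1 h

theorem proj_idem (A : Submodule ℂ H) (u : H) : proj A (proj A u) = proj A u :=
  proj_of_mem (proj_mem A u)

theorem inner_proj (A : Submodule ℂ H) (u w : H) : ⟪proj A u, w⟫_ℂ = ⟪u, proj A w⟫_ℂ :=
  Submodule.inner_starProjection_left_eq_right _ _ _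

theorem inner_sub_proj {A : Submodule ℂ H} {w : H} (hw : w ∈ A.topologicalClosure) (u : H) :
    ⟪w, u - proj A u⟫_ℂ = 0 := by
  rw [inner_sub_right, ← inner_proj, proj_of_mem hw, sub_self]

theorem inner_proj_self (A : Submodule ℂ H) (u : H) : ⟪proj A u, u⟫_ℂ = (‖proj A u‖ : ℂ) ^ 2 := by
  have : ⟪proj A u, u⟫_ℂ = ⟪proj A u, proj A u⟫_ℂ := by
    rw [inner_proj A u (proj A u), proj_idem, inner_proj]
  rw [this, inner_self_eq_ofReal]
  simp

theorem proj_unique {A : Submodule ℂ H} {u v : H} (hv : v ∈ A.topologicalClosure)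
    (h : ∀ w ∈ A.topologicalClosure, ⟪u - v, w⟫_ℂ = 0) : proj A u = v :=
  (Submodule.eq_starProjection_of_mem_of_inner_eq_zero hv h).symm.symm

theorem norm_proj_le (A : Submodule ℂ H) (u : H) : ‖proj A u‖ ≤ ‖u‖ :=
  Submodule.norm_starProjection_apply_le _ _

theorem map_mem_closure_of {A B : Submodule ℂ H} (U : H ≃ₗᵢ[ℂ] H) (h : ∀ w ∈ A, U w ∈ B) {w : H}
    (hw : w ∈ A.topologicalClosure) : U w ∈ B.topologicalClosure :=
  map_mem_closure (f := U) U.continuous hw h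

/-- A projection commutes with the unitary operators preserving the subspace. -/
theorem proj_comm {A : Submodule ℂ H} (U : H ≃ₗᵢ[ℂ] H) (h : ∀ w ∈ A, U w ∈ A)
    (h' : ∀ w ∈ A, U.symm w ∈ A) (u : H) : proj A (U u) = U (proj A u) := by
  refine proj_unique (map_mem_closure_of U h (proj_mem A u)) fun w hw => ?_
  rw [← map_sub, ← LinearIsometryEquiv.inner_map_map U.symm, U.symm_apply_apply,
    ← inner_conj_symm, inner_sub_proj (map_mem_closure_of U.symm h' hw), map_zero]

end Hilbert

section Positive

variable {Γ : Type*} [Group Γ]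

/-- Positive definite class functions, not necessarily normalized. -/
def IsPosClass (φ : Γ → ℂ) : Prop :=
  (∀ (n : ℕ) (lam : Fin n → ℂ) (g : Fin n → Γ),
      0 ≤ ∑ i, ∑ j, lam i * (starRingEnd ℂ) (lam j) * φ ((g j)⁻¹ * g i)) ∧
  (∀ g h : Γ, φ (h * g * h⁻¹) = φ g)

theorem IsPosClass.one_nonneg {φ : Γ → ℂ} (h : IsPosClass φ) : 0 ≤ φ 1 := by
  simpa using h.1 1 ![1] ![1]

theorem IsPosClass.eq_zero {φ : Γ → ℂ} (h : IsPosClass φ) (h1 : φ 1 = 0) (g : Γ) : φ g = 0 := by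
  have key : ∀ c : ℂ, 0 ≤ c * φ g⁻¹ + (starRingEnd ℂ) c * φ g := by
    intro c
    have := h.1 2 ![c, 1] ![1, g]
    simpa [Fin.sum_univ_two, h1] using this
  have e1 := key 1
  have e2 := key (-1)
  have e3 := key Complex.I
  have e4 := key (-Complex.I)
  simp only [map_one, map_neg, Complex.conj_I, Complex.nonneg_iff] at e1 e2 e3 e4
  simp at e1 e2 e3 e4
  apply Complex.ext <;> simp <;> linarith

theorem IsPosClass.normalize {φ : Γ → ℂ} (h : IsPosClass φ) (h1 : φ 1 ≠ 0) :
    IsCharacter fun g => (φ 1)⁻¹ * φ g := by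
  refine ⟨fun n lam g => ?_, fun g k => by simp only [h.2 g k], by simp [h1]⟩
  have := mul_nonneg (inv_nonneg.2 h.one_nonneg) (h.1 n lam g)
  simp only [Finset.mul_sum] at this
  refine this.trans_eq (Finset.sum_congr rfl fun i _ => Finset.sum_congr rfl fun j _ => ?_)
  ring

theorem IsExtremalCharacter.isCharacter {φ : Γ → ℂ} (hφ : IsExtremalCharacter φ) : IsCharacter φ :=
  (mem_extremePoints.1 hφ).1

theorem IsExtremalCharacter.eq_of_mem {φ ψ ψ' : Γ → ℂ} (hφ : IsExtremalCharacter φ)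
    (h1 : IsCharacter ψ) (h2 : IsCharacter ψ') (h : φ ∈ openSegment ℝ ψ ψ') : ψ = φ :=
  ((mem_extremePoints.1 hφ).2 ψ h1 ψ' h2 h).1

/-- Extremality: a decomposition of an extremal character as a sum of positive definite
class functions is a decomposition into multiples of the character. -/
theorem IsExtremalCharacter.eq_smul {φ ψ ψ' : Γ → ℂ} (hφ : IsExtremalCharacter φ)
    (hψ : IsPosClass ψ) (hψ' : IsPosClass ψ') (hs : ∀ g, ψ g + ψ' g = φ g) (g : Γ) :
    ψ g = ψ 1 * φ g := by
  have h11 := hs 1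
  rw [hφ.isCharacter.2.2] at h11
  by_cases h1 : ψ 1 = 0
  · rw [h1, hψ.eq_zero h1]; simp
  by_cases h2 : ψ' 1 = 0
  · have := hψ'.eq_zero h2 g
    rw [h2, add_zero] at h11
    rw [h11, ← hs, this]; simp
  have n1 := hψ.one_nonneg
  have n2 := hψ'.one_nonneg
  rw [Complex.nonneg_iff] at n1 n2
  have r1 : ψ 1 = ((ψ 1).re : ℂ) := Complex.ext (Complex.ofReal_re _).symm ((Complex.ofReal_im _).trans n1.2).symm
  have r2 : ψ' 1 = ((ψ' 1).re : ℂ) := Complex.ext (Complex.ofReal_re _).symm ((Complex.ofReal_im _).trans n2.2).symm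
  have p1 : 0 < (ψ 1).re := lt_of_le_of_ne n1.1 fun h => h1 (by rw [r1, ← h, Complex.ofReal_zero])
  have p2 : 0 < (ψ' 1).re := lt_of_le_of_ne n2.1 fun h => h2 (by rw [r2, ← h, Complex.ofReal_zero])
  have hseg : φ ∈ openSegment ℝ (fun g => (ψ 1)⁻¹ * ψ g) (fun g => (ψ' 1)⁻¹ * ψ' g) := by
    refine ⟨(ψ 1).re, (ψ' 1).re, p1, p2, by simpa using congrArg Complex.re h11, ?_⟩
    ext k
    simp only [Pi.add_apply, Pi.smul_apply, Complex.real_smul, ← r1, ← r2]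
    rw [mul_inv_cancel_left₀ h1, mul_inv_cancel_left₀ h2, hs]
  have := hφ.eq_of_mem (hψ.normalize h1) (hψ'.normalize h2) hseg
  have := congrFun this g
  rw [← this, mul_inv_cancel_left₀ h1]

namespace GNSData

variable {φ : Γ → ℂ} {H : Type*} [NormedAddCommGroup H] [InnerProductSpace ℂ H] (D : GNSData φ H)

theorem π_inv (g : Γ) (w : H) : D.π g⁻¹ w = (D.π g).symm w := by rw [map_inv]; rfl

theorem ρ_inv (g : Γ) (w : H) : D.ρ g⁻¹ w = (D.ρ g).symm w := by rw [map_inv]; rfl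

theorem π_mul (g h : Γ) (w : H) : D.π (g * h) w = D.π g (D.π h w) := by rw [map_mul]; rfl

theorem ρ_mul (g h : Γ) (w : H) : D.ρ (g * h) w = D.ρ g (D.ρ h w) := by rw [map_mul]; rfl

theorem inner_π (g : Γ) (u w : H) : ⟪u, D.π g w⟫_ℂ = ⟪D.π g⁻¹ u, w⟫_ℂ := by
  rw [π_inv, ← LinearIsometryEquiv.inner_map_map (D.π g) (_ : H) w, LinearIsometryEquiv.apply_symm_apply]

theorem inner_ρ (g : Γ) (u w : H) : ⟪u, D.ρ g w⟫_ℂ = ⟪D.ρ g⁻¹ u, w⟫_ℂ := by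
  rw [ρ_inv, ← LinearIsometryEquiv.inner_map_map (D.ρ g) (_ : H) w, LinearIsometryEquiv.apply_symm_apply]

theorem π_of_fix {η : H} (h : ∀ g, D.π g (D.ρ g η) = η) (g : Γ) : D.π g η = D.ρ g⁻¹ η := by
  have := h g⁻¹
  rw [π_inv, LinearIsometryEquiv.symm_apply_eq] at this
  exact this.symm

theorem eq_of_inner {u w : H} (h : ∀ g, ⟪D.π g D.ξ, u⟫_ℂ = ⟪D.π g D.ξ, w⟫_ℂ) : u = w := by
  rw [← sub_eq_zero, ← inner_self_eq_zero (𝕜 := ℂ)]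
  have hc : Continuous fun v : H => ⟪v, u - w⟫_ℂ := by fun_prop
  refine congrFun (hc.ext_on D.cyc (continuous_const (y := (0 : ℂ))) ?_) (u - w)
  intro v hv
  induction hv using Submodule.span_induction with
  | mem x hx => obtain ⟨g, rfl⟩ := hx; simp [inner_sub_right, h g]
  | zero => simp
  | add x y _ _ hx hy => simp only [inner_add_left] at *; rw [hx, hy]; simp
  | smul a x _ hx => simp only [inner_smul_left] at *; rw [hx]; simp

theorem inner_ππ (g h : Γ) : ⟪D.π g D.ξ, D.π h D.ξ⟫_ℂ = φ (g⁻¹ * h) := by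
  rw [← D.coeff, π_mul, inner_π _ g⁻¹, inv_inv]

theorem norm_ξ (h : φ 1 = 1) : ‖D.ξ‖ = 1 := by
  have := D.coeff 1
  rw [h, map_one] at this
  change ⟪D.ξ, D.ξ⟫_ℂ = 1 at this
  rw [inner_self_eq_ofReal] at this
  have h2 : ‖D.ξ‖ ^ 2 = 1 := by exact_mod_cast this
  nlinarith [norm_nonneg D.ξ]

/-- The coefficient of `π` at a vector fixed by the diagonal action is a positive definite class
function. -/
theorem isPosClass {η : H} (hη : ∀ g, D.π g (D.ρ g η) = η) :
    IsPosClass fun g => ⟪η, D.π g η⟫_ℂ := by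
  refine ⟨fun n lam g => ?_, fun g h => ?_⟩
  · have : ∑ i, ∑ j, lam i * (starRingEnd ℂ) (lam j) * ⟪η, D.π ((g j)⁻¹ * g i) η⟫_ℂ =
        ⟪∑ i, lam i • D.π (g i) η, ∑ i, lam i • D.π (g i) η⟫_ℂ := by
      rw [sum_inner, Finset.sum_comm]
      refine Finset.sum_congr rfl fun i _ => ?_
      rw [inner_sum]
      refine Finset.sum_congr rfl fun j _ => ?_
      rw [inner_smul_left, inner_smul_right, π_mul, inner_π, inv_inv]
      ring
    rw [this, inner_self_eq_ofReal, Complex.zero_le_real]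
    positivity
  · change ⟪η, D.π (h * g * h⁻¹) η⟫_ℂ = ⟪η, D.π g η⟫_ℂ
    rw [π_mul, π_mul, inner_π, D.π_of_fix hη h⁻¹, inv_inv, D.comm,
      LinearIsometryEquiv.inner_map_map]

variable [CompleteSpace H]

/-- For an extremal character there is no nontrivial `ρ`-invariant subspace onto which `ξ` projects
to a vector fixed by the diagonal action. -/
theorem proj_eq_zero_or (hφ : IsExtremalCharacter φ) (A : Submodule ℂ H)
    (hA : ∀ g, ∀ w ∈ A, D.ρ g w ∈ A) (hη : ∀ g, D.π g (D.ρ g (proj A D.ξ)) = proj A D.ξ) :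
    proj A D.ξ = 0 ∨ proj A D.ξ = D.ξ := by
  set η := proj A D.ξ with hηd
  have hηA : η ∈ A.topologicalClosure := proj_mem _ _
  have hcl : ∀ g, ∀ w ∈ A.topologicalClosure, D.ρ g w ∈ A.topologicalClosure :=
    fun g w hw => map_mem_closure_of _ (hA g) hw
  have hperp : ∀ w ∈ A.topologicalClosure, ⟪w, D.ξ - η⟫_ℂ = 0 := fun w hw => inner_sub_proj hw _
  have hη' : ∀ g, D.π g (D.ρ g (D.ξ - η)) = D.ξ - η := fun g => by
    rw [map_sub, map_sub, D.fix, hη]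
  have hs : ∀ g, ⟪η, D.π g η⟫_ℂ + ⟪D.ξ - η, D.π g (D.ξ - η)⟫_ℂ = φ g := by
    intro g
    rw [← D.coeff]
    have e1 : ⟪η, D.π g (D.ξ - η)⟫_ℂ = 0 := by
      rw [D.π_of_fix hη', inner_ρ]; exact hperp _ (hcl _ _ hηA)
    have e2 : ⟪D.ξ - η, D.π g η⟫_ℂ = 0 := by
      rw [D.π_of_fix hη, ← inner_conj_symm, hperp _ (hcl _ _ hηA), map_zero]
    have e3 : D.ξ = η + (D.ξ - η) := by abel
    rw [show ⟪D.ξ, D.π g D.ξ⟫_ℂ = ⟪η + (D.ξ - η), D.π g (η + (D.ξ - η))⟫_ℂ by rw [← e3]]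
    rw [map_add, inner_add_left, inner_add_right, inner_add_right, e1, e2]
    ring
  have hψ := hφ.eq_smul (D.isPosClass hη) (D.isPosClass hη') hs
  obtain ⟨c, hc⟩ : ∃ c : ℂ, ∀ g, ⟪η, D.π g η⟫_ℂ = c * φ g := ⟨_, hψ⟩
  have hcξ : η = c • D.ξ := by
    apply D.eq_of_inner
    intro g
    have e1 : ⟪D.π g D.ξ, η⟫_ℂ = ⟪η, D.π g⁻¹ η⟫_ℂ := by
      rw [show D.π g D.ξ = D.π g⁻¹⁻¹ D.ξ by rw [inv_inv], ← inner_π]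
      rw [D.π_of_fix hη, hηd, inner_proj, proj_of_mem (hcl _ _ hηA)]
    rw [e1, hc, inner_smul_right, ← D.coeff, inner_π, inv_inv]
  have h2 : c • η = η := by
    conv_rhs => rw [← proj_of_mem hηA, hcξ, map_smul, ← hηd]
  by_cases h0 : η = 0
  · exact Or.inl h0
  · right
    have : (c - 1) • η = 0 := by rw [sub_smul, h2, one_smul, sub_self]
    have hc1 : c = 1 := by
      rcases smul_eq_zero.1 this with h | h
      · exact sub_eq_zero.1 h
      · exact absurd h h0
    rw [hcξ, hc1, one_smul]

theorem π_ξ_of_eq_one (hφ : φ 1 = 1) {k : Γ} (hk : φ k = 1) : D.π k D.ξ = D.ξ := by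
  have h1 : ⟪D.ξ, D.π k D.ξ⟫_ℂ = 1 := by rw [D.coeff, hk]
  exact ((inner_eq_one_iff_of_norm_eq_one (𝕜 := ℂ) (D.norm_ξ hφ)
    (by rw [LinearIsometryEquiv.norm_map, D.norm_ξ hφ])).1 h1).symm

end GNSData

theorem IsCharacter.eq_zero_of_conj {φ : Γ → ℂ} (h : IsCharacter φ) {ι : Type*} [Infinite ι]
    (g : Γ) (x : ι → Γ) (hx : ∀ k, IsConj g (x k))
    (h0 : Pairwise fun k l => φ ((x k)⁻¹ * x l) = 0) : φ g = 0 := by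
  obtain ⟨H, i1, i2, i3, ⟨D⟩⟩ := h.exists_gns
  have := eq_zero_of_orthogonal_family (fun k => D.π (x k) D.ξ) D.ξ 1
    ((starRingEnd ℂ) (φ g)) (fun k l hkl => by simp only [D.inner_ππ]; exact h0 hkl)
    (fun k => by rw [LinearIsometryEquiv.norm_map, D.norm_ξ h.2.2])
    (fun k => by
      rw [← inner_conj_symm, D.coeff]
      obtain ⟨c, hc⟩ := isConj_iff.1 (hx k)
      rw [← hc, h.2.1])
  simpa using this

theorem IsCharacter.mul_of_eq_one {φ : Γ → ℂ} (h : IsCharacter φ) {k : Γ} (hk : φ k = 1) (g : Γ) :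
    φ (g * k) = φ g := by
  obtain ⟨H, i1, i2, i3, ⟨D⟩⟩ := h.exists_gns
  rw [← D.coeff, D.π_mul, D.π_ξ_of_eq_one h.2.2 hk, D.coeff]

/-- The kernel `{g | φ g = 1}` of a character. -/
def IsCharacter.ker {φ : Γ → ℂ} (h : IsCharacter φ) : Subgroup Γ where
  carrier := {g | φ g = 1}
  one_mem' := h.2.2
  mul_mem' {a b} ha hb := by
    change φ (a * b) = 1
    rw [h.mul_of_eq_one hb]; exact ha
  inv_mem' {a} ha := by
    change φ a⁻¹ = 1
    rw [h.apply_inv, show φ a = 1 from ha, map_one]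

theorem IsCharacter.mem_ker {φ : Γ → ℂ} (h : IsCharacter φ) {g : Γ} : g ∈ h.ker ↔ φ g = 1 :=
  Iff.rfl

theorem IsCharacter.normal_ker {φ : Γ → ℂ} (h : IsCharacter φ) : h.ker.Normal :=
  ⟨fun n hn g => by rw [h.mem_ker] at *; rw [h.2.1, hn]⟩

/-- An extremal character is multiplicative on elements central modulo its kernel. -/
theorem IsExtremalCharacter.mul_of_central {φ : Γ → ℂ} (hφ : IsExtremalCharacter φ) {z : Γ}
    (hz : ∀ g, φ (z⁻¹ * g⁻¹ * z * g) = 1) (g : Γ) : φ (g * z) = φ z * φ g := by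
  have h := hφ.isCharacter
  obtain ⟨H, i1, i2, i3, ⟨D⟩⟩ := h.exists_gns
  have hcomm : ∀ g, D.π z (D.π g D.ξ) = D.π g (D.π z D.ξ) := by
    intro g
    rw [← D.π_mul, ← D.π_mul, show z * g = g * z * (z⁻¹ * g⁻¹ * z * g) by group, D.π_mul,
      D.π_ξ_of_eq_one h.2.2 (hz g)]
  have h1 : ∀ (lam : ℂ), (starRingEnd ℂ) lam * lam = 1 → lam * φ (g * z) +
      (starRingEnd ℂ) lam * φ (z⁻¹ * g) =
      (lam * φ z + (starRingEnd ℂ) lam * φ z⁻¹) * φ g := by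
    have hfix : ∀ (l : ℂ) (g : Γ), D.π g (D.ρ g ((1 / 2 : ℂ) • (D.ξ + l • D.π z D.ξ))) =
        (1 / 2 : ℂ) • (D.ξ + l • D.π z D.ξ) := by
      intro l g
      simp only [map_smul, map_add, D.fix]
      congr 3
      rw [← D.comm, ← D.π_of_fix (fun g => D.fix g) |> fun _ => D.π_mul g z, D.π_mul]
      have : D.ρ g D.ξ = D.π g⁻¹ D.ξ := by rw [D.π_of_fix D.fix, inv_inv]
      rw [this, hcomm, ← D.π_mul g, mul_inv_cancel, map_one]; rfl
    have hval : ∀ (l : ℂ), (starRingEnd ℂ) l * l = 1 → ∀ g,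
        ⟪(1 / 2 : ℂ) • (D.ξ + l • D.π z D.ξ), D.π g ((1 / 2 : ℂ) • (D.ξ + l • D.π z D.ξ))⟫_ℂ =
        (1 / 4) * (2 * φ g + l * φ (g * z) + (starRingEnd ℂ) l * φ (z⁻¹ * g)) := by
      intro l hl g
      simp only [map_smul, map_add, inner_smul_left, inner_smul_right, inner_add_left,
        inner_add_right]
      have a1 : ⟪D.ξ, D.π g (D.π z D.ξ)⟫_ℂ = φ (g * z) := by rw [← D.π_mul, D.coeff]
      have a2 : ⟪D.π z D.ξ, D.π g D.ξ⟫_ℂ = φ (z⁻¹ * g) := D.inner_ππ _ _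
      have a3 : ⟪D.π z D.ξ, D.π g (D.π z D.ξ)⟫_ℂ = φ g := by
        rw [← hcomm, LinearIsometryEquiv.inner_map_map, D.coeff]
      rw [a1, a2, a3, D.coeff]
      simp only [map_div₀, map_one, map_ofNat]
      linear_combination (φ g / 4) * hl
    intro l hl
    have hl' : (starRingEnd ℂ) (-l) * (-l) = 1 := by simpa using hl
    have := hφ.eq_smul (D.isPosClass (hfix l)) (D.isPosClass (hfix (-l))) (fun g => by
      simp only [hval l hl, hval (-l) hl', map_neg]; ring) g
    simp only [hval l hl, mul_one, one_mul, h.2.2] at this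
    linear_combination 4 * this
  have e1 := h1 1 (by simp)
  have e2 := h1 Complex.I (by simp)
  simp only [map_one, Complex.conj_I, one_mul] at e1 e2
  have hI : Complex.I * Complex.I = -1 := Complex.I_mul_I
  linear_combination (1 / 2) * e1 - (Complex.I / 2) * e2 +
    (1 / 2 * (φ (g * z) - φ (z⁻¹ * g)) - (1 / 2) * (φ z - φ z⁻¹) * φ g) * hI

end Positive

/-! ### The trace and the dimension inequality for intersections -/

namespace GNSData

variable {Γ : Type*} [Group Γ] {φ : Γ → ℂ} {H : Type*} [NormedAddCommGroup H]
  [InnerProductSpace ℂ H] (D : GNSData φ H)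

theorem denseRange : DenseRange (Finsupp.linearCombination ℂ fun g => D.π g D.ξ) := by
  have := D.cyc
  rw [← Finsupp.range_linearCombination, LinearMap.coe_range] at this
  exact this

/-- Coordinatewise complex conjugation of finitely supported functions. -/
noncomputable def finsuppConj (Γ : Type*) : (Γ →₀ ℂ) ≃ₛₗ[starRingEnd ℂ] (Γ →₀ ℂ) :=
  { Finsupp.mapRange.addEquiv (starRingAut (R := ℂ)).toAddEquiv with
    map_smul' := fun c f => by
      ext x
      simp [Finsupp.mapRange.addEquiv] }

theorem finsuppConj_single (g : Γ) : finsuppConj Γ (Finsupp.single g 1) = Finsupp.single g 1 := by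
  ext x
  by_cases h : g = x <;> simp [finsuppConj, Finsupp.mapRange.addEquiv, Finsupp.single_apply, h]

variable [CompleteSpace H]

/-- The modular conjugation: the antiunitary operator exchanging `π g ξ` and `π g⁻¹ ξ`. -/
theorem exists_conjugation (h : IsCharacter φ) :
    ∃ J : H → H, (∀ g, J (D.π g D.ξ) = D.π g⁻¹ D.ξ) ∧ ∀ u w, ⟪J u, J w⟫_ℂ = ⟪w, u⟫_ℂ := by
  have hd' : DenseRange (Finsupp.linearCombination ℂ fun g => D.π g⁻¹ D.ξ) := by
    have := D.cyc
    rw [show (Set.range fun g => D.π g D.ξ) = Set.range fun g => D.π g⁻¹ D.ξ from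
      ((Equiv.inv Γ).surjective.range_comp fun g => D.π g D.ξ).symm,
      ← Finsupp.range_linearCombination, LinearMap.coe_range] at this
    exact this
  have hinner : ∀ c d : Γ →₀ ℂ,
      ⟪Finsupp.linearCombination ℂ (fun g => D.π g⁻¹ D.ξ) (finsuppConj Γ c),
        Finsupp.linearCombination ℂ (fun g => D.π g⁻¹ D.ξ) (finsuppConj Γ d)⟫_ℂ =
      ⟪Finsupp.linearCombination ℂ (fun g => D.π g D.ξ) d,
        Finsupp.linearCombination ℂ (fun g => D.π g D.ξ) c⟫_ℂ := by
    intro c d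
    induction c using Finsupp.induction_linear with
    | zero => simp
    | add f g hf hg => simp only [map_add, inner_add_left, inner_add_right, hf, hg]
    | single x a =>
      induction d using Finsupp.induction_linear with
      | zero => simp
      | add f g hf hg => simp only [map_add, inner_add_left, inner_add_right, hf, hg]
      | single y b =>
        rw [← mul_one a, ← mul_one b, ← smul_eq_mul, ← smul_eq_mul, ← Finsupp.smul_single,
          ← Finsupp.smul_single]
        simp only [map_smulₛₗ, finsuppConj_single, inner_smul_left, inner_smul_right, map_smul,
          Finsupp.linearCombination_single, one_smul, D.inner_ππ]
        rw [inv_inv, ← h.2.1 (x * y⁻¹) x⁻¹, show x⁻¹ * (x * y⁻¹) * x⁻¹⁻¹ = y⁻¹ * x by group]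
        simp; ring
  have hn : ∀ c : Γ →₀ ℂ,
      ‖Finsupp.linearCombination ℂ (fun g => D.π g⁻¹ D.ξ) (finsuppConj Γ c)‖ =
      ‖Finsupp.linearCombination ℂ (fun g => D.π g D.ξ) c‖ := by
    intro c
    rw [@norm_eq_sqrt_re_inner ℂ, @norm_eq_sqrt_re_inner ℂ, hinner]
  let J := (finsuppConj Γ).extendOfIsometry _ _ D.denseRange hd' hn
  have hJ : ∀ c, J (Finsupp.linearCombination ℂ (fun g => D.π g D.ξ) c) =
      Finsupp.linearCombination ℂ (fun g => D.π g⁻¹ D.ξ) (finsuppConj Γ c) :=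
    LinearEquiv.extendOfIsometry_eq _ _ _ D.denseRange hd' hn
  refine ⟨J, fun g => ?_, ?_⟩
  · have := hJ (Finsupp.single g 1)
    rw [finsuppConj_single] at this
    simpa using this
  · have hJc : Continuous J := J.continuous
    have h1 : ∀ c w, ⟪J (Finsupp.linearCombination ℂ (fun g => D.π g D.ξ) c), J w⟫_ℂ =
        ⟪w, Finsupp.linearCombination ℂ (fun g => D.π g D.ξ) c⟫_ℂ := by
      intro c
      refine congrFun (D.denseRange.equalizer (by fun_prop) (by fun_prop) ?_)
      ext d
      simp only [Function.comp_apply, hJ, hinner]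
    intro u w
    refine congrFun (D.denseRange.equalizer
      (show Continuous fun u => ⟪J u, J w⟫_ℂ by fun_prop)
      (show Continuous fun u => ⟪w, u⟫_ℂ by fun_prop) ?_) u
    ext d
    exact h1 d w

/-- Operators commuting with the right representation. -/
def Commutes (a : H →L[ℂ] H) : Prop := ∀ h w, a (D.ρ h w) = D.ρ h (a w)

variable {D}

theorem Commutes.mul {a b : H →L[ℂ] H} (ha : D.Commutes a) (hb : D.Commutes b) :
    D.Commutes (a * b) := fun h w => by
  simp only [mul_apply_eq_comp]
  rw [hb, ha]

theorem Commutes.sub {a b : H →L[ℂ] H} (ha : D.Commutes a) (hb : D.Commutes b) :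
    D.Commutes (a - b) := fun h w => by simp [ha h w, hb h w]

theorem Commutes.one : D.Commutes (1 : H →L[ℂ] H) := fun _ _ => rfl

theorem Commutes.pow {a : H →L[ℂ] H} (ha : D.Commutes a) (n : ℕ) : D.Commutes (a ^ n) := by
  induction n with
  | zero => exact Commutes.one
  | succ n ih => rw [pow_succ]; exact ih.mul ha

theorem Commutes.adjoint {a : H →L[ℂ] H} (ha : D.Commutes a) :
    D.Commutes (ContinuousLinearMap.adjoint a) := fun h w => by
  apply ext_inner_left ℂ
  intro v
  rw [ContinuousLinearMap.adjoint_inner_right, inner_ρ, inner_ρ,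
    ContinuousLinearMap.adjoint_inner_right, ha]

theorem commutes_proj {A : Submodule ℂ H} (hA : ∀ g, ∀ w ∈ A, D.ρ g w ∈ A) :
    D.Commutes (proj A) := fun h w =>
  proj_comm (D.ρ h) (hA h) (fun w hw => by rw [← ρ_inv]; exact hA _ w hw) w

/-- The functional `a ↦ ⟪ξ, a ξ⟫` is a trace on the operators commuting with `ρ`. -/
theorem trace_comm (h : IsCharacter φ) {a b : H →L[ℂ] H} (ha : D.Commutes a) (hb : D.Commutes b) :
    ⟪D.ξ, a (b D.ξ)⟫_ℂ = ⟪D.ξ, b (a D.ξ)⟫_ℂ := by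
  obtain ⟨J, hJ, hJi⟩ := D.exists_conjugation h
  have key : ∀ a : H →L[ℂ] H, D.Commutes a → J (a D.ξ) = ContinuousLinearMap.adjoint a D.ξ := by
    intro a ha
    apply D.eq_of_inner
    intro g
    have e1 := hJi (D.π g⁻¹ D.ξ) (a D.ξ)
    rw [hJ, inv_inv] at e1
    rw [e1, ContinuousLinearMap.adjoint_inner_right, D.π_of_fix D.fix, D.π_of_fix D.fix, ha,
      inner_ρ, inv_inv]
  have hb' : J (ContinuousLinearMap.adjoint b D.ξ) = b D.ξ := by
    rw [key _ hb.adjoint, ContinuousLinearMap.adjoint_adjoint]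
  rw [← ContinuousLinearMap.adjoint_inner_left, ← key a ha, ← hb', hJi,
    ContinuousLinearMap.adjoint_inner_left]

theorem trace_mul_comm (h : IsCharacter φ) {a b : H →L[ℂ] H} (ha : D.Commutes a)
    (hb : D.Commutes b) : ⟪D.ξ, (a * b) D.ξ⟫_ℂ = ⟪D.ξ, (b * a) D.ξ⟫_ℂ := trace_comm h ha hb

/-- For idempotents `p'`, `q`, consecutive powers of `q (1 - p') q` and of `p' (1 - q) p'` differ by
products of the same two elements in opposite orders. -/
theorem pow_sub_pow_eq {M : Type*} [Ring M] {p' q x y : M} (hpp : p' * p' = p') (hqq : q * q = q)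
    (hx : x = q * (1 - p') * q) (hy : y = p' * (1 - q) * p') (n : ℕ) :
    x ^ n * q - x ^ (n + 1) * q = (q * p' * y ^ n) * (p' * q) ∧
      (p' * q) * (q * p' * y ^ n) = y ^ n * p' - y ^ (n + 1) * p' := by
  have hxq : x * q = x := by rw [hx, mul_assoc, hqq]
  have hyp : y * p' = y := by rw [hy, mul_assoc, hpp]
  have hpy : p' * y = y := by rw [hy, ← mul_assoc, ← mul_assoc, hpp]
  have e2 : q - x = (q * p') * (p' * q) := by
    rw [mul_assoc, ← mul_assoc p' p' q, hpp, hx]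
    simp only [sub_mul, mul_sub, mul_one, hqq, mul_assoc]
    abel
  have e3 : (p' * q) * (q * p') = p' - y := by
    rw [mul_assoc, ← mul_assoc q q, hqq, hy]
    simp only [sub_mul, mul_sub, mul_one, hpp, mul_assoc]
    abel
  have e0 : x * (q * p') = (q * p') * y := by
    have h1 : x = q - (q * p') * (p' * q) := by rw [← e2]; abel
    have h2 : y = p' - (p' * q) * (q * p') := by rw [e3]; abel
    rw [h1, h2, sub_mul, mul_sub, ← mul_assoc q q, hqq, mul_assoc q p' p', hpp, mul_assoc (q * p')]
  have e1 : ∀ n, x ^ n * (q * p') = (q * p') * y ^ n := by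
    intro n
    induction n with
    | zero => simp
    | succ n ih => rw [pow_succ', mul_assoc, ih, ← mul_assoc, e0, mul_assoc, ← pow_succ']
  have hyc : ∀ n, p' * y ^ n = y ^ n * p' := by
    intro n
    induction n with
    | zero => simp
    | succ n ih => rw [pow_succ, ← mul_assoc, ih, mul_assoc, mul_assoc, hpy, hyp]
  constructor
  · rw [pow_succ, mul_assoc, hxq, ← mul_sub, e2, ← mul_assoc, e1]
  · rw [← mul_assoc, e3, sub_mul, pow_succ', mul_assoc, ← hyc, ← mul_assoc y p', hyp]

/-- For idempotents `p`, `q`, the powers of `q p q` and of `(1 - p) (1 - q) (1 - p)` have traces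
decreasing by the same amounts. -/
theorem trace_pow_sub (h : IsCharacter φ) {p q : H →L[ℂ] H} (hp : D.Commutes p)
    (hq : D.Commutes q) (hpp : p * p = p) (hqq : q * q = q) (n : ℕ) :
    ⟪D.ξ, ((q * p * q) ^ n * q) D.ξ⟫_ℂ - ⟪D.ξ, q D.ξ⟫_ℂ =
    ⟪D.ξ, (((1 - p) * (1 - q) * (1 - p)) ^ n * (1 - p)) D.ξ⟫_ℂ - ⟪D.ξ, (1 - p) D.ξ⟫_ℂ := by
  have hp'p' : (1 - p) * (1 - p) = 1 - p := by
    simp only [sub_mul, mul_sub, one_mul, mul_one, hpp]; abel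
  have hcp' : D.Commutes (1 - p) := Commutes.one.sub hp
  have hcy : D.Commutes ((1 - p) * (1 - q) * (1 - p)) := (hcp'.mul (Commutes.one.sub hq)).mul hcp'
  induction n with
  | zero => simp
  | succ n ih =>
    obtain ⟨f1, f2⟩ := pow_sub_pow_eq hp'p' hqq
      (show q * p * q = q * (1 - (1 - p)) * q by rw [sub_sub_cancel]) rfl n
    have step := trace_mul_comm h ((hq.mul hcp').mul (hcy.pow n)) (hcp'.mul hq)
    rw [← f1, f2, _root_.sub_apply, _root_.sub_apply, inner_sub_right, inner_sub_right] at step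
    linear_combination ih - step

/-- The dimension inequality `dim (A ∩ B) ≥ dim A + dim B - 1`, where the dimension of a subspace
invariant under `ρ` is the square of the length of the projection of `ξ`. -/
theorem norm_proj_inf (h : IsCharacter φ) {A B : Submodule ℂ H} (hA : ∀ g, ∀ w ∈ A, D.ρ g w ∈ A)
    (hB : ∀ g, ∀ w ∈ B, D.ρ g w ∈ B) :
    ‖proj A D.ξ‖ ^ 2 + ‖proj B D.ξ‖ ^ 2 - 1 ≤
      ‖proj (A.topologicalClosure ⊓ B.topologicalClosure) D.ξ‖ ^ 2 := by
  set p := proj A with hp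
  set q := proj B with hq
  have hξ : ⟪D.ξ, D.ξ⟫_ℂ = 1 := by rw [inner_self_eq_ofReal, D.norm_ξ h.2.2]; simp
  have hcp : D.Commutes p := commutes_proj hA
  have hcq : D.Commutes q := commutes_proj hB
  have hpp : p * p = p := by ext w; exact proj_idem A w
  have hqq : q * q = q := by ext w; exact proj_idem B w
  have hps : ∀ u w, ⟪p u, w⟫_ℂ = ⟪u, p w⟫_ℂ := inner_proj A
  have hqs : ∀ u w, ⟪q u, w⟫_ℂ = ⟪u, q w⟫_ℂ := inner_proj B
  set x := q * p * q with hx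
  have hxs : ∀ u w, ⟪x u, w⟫_ℂ = ⟪u, x w⟫_ℂ := fun u w => by
    simp only [hx, mul_apply_eq_comp, hqs, hps]
  set y := (1 - p) * (1 - q) * (1 - p) with hy
  have hys : ∀ u w, ⟪y u, w⟫_ℂ = ⟪u, y w⟫_ℂ := fun u w => by
    simp only [hy, mul_apply_eq_comp, _root_.sub_apply,
      one_apply_eq_self, hqs, hps, inner_sub_left, inner_sub_right, map_sub]
    ring
  have hpow : ∀ z : H →L[ℂ] H, (∀ u w, ⟪z u, w⟫_ℂ = ⟪u, z w⟫_ℂ) → ∀ n u w,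
      ⟪(z ^ n) u, w⟫_ℂ = ⟪u, (z ^ n) w⟫_ℂ := by
    intro z hz n
    induction n with
    | zero => intro u w; rfl
    | succ n ih =>
      intro u w
      rw [pow_succ, mul_apply_eq_comp, ih, hz, ← mul_apply_eq_comp,
        ← pow_succ', pow_succ]
  have tp : ⟪D.ξ, p D.ξ⟫_ℂ = ((‖p D.ξ‖ ^ 2 : ℝ) : ℂ) := by
    rw [← hps, hp, inner_proj_self]; push_cast; rfl
  have tq : ⟪D.ξ, q D.ξ⟫_ℂ = ((‖q D.ξ‖ ^ 2 : ℝ) : ℂ) := by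
    rw [← hqs, hq, inner_proj_self]; push_cast; rfl
  have even : ∀ z : H →L[ℂ] H, (∀ u w, ⟪z u, w⟫_ℂ = ⟪u, z w⟫_ℂ) → ∀ n,
      ⟪D.ξ, (z ^ (2 * n)) D.ξ⟫_ℂ = ((‖(z ^ n) D.ξ‖ ^ 2 : ℝ) : ℂ) := by
    intro z hz n
    rw [two_mul, pow_add, mul_apply_eq_comp, ← hpow z hz, inner_self_eq_ofReal]
  have main : ∀ n : ℕ, ‖p D.ξ‖ ^ 2 + ‖q D.ξ‖ ^ 2 - 1 ≤ (⟪D.ξ, ((x ^ 2) ^ (n + 1)) D.ξ⟫_ℂ).re := by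
    intro n
    have h1 := trace_pow_sub h hcp hcq hpp hqq (2 * (n + 1))
    have hxq : x ^ (2 * (n + 1)) * q = x ^ (2 * (n + 1)) := by
      rw [show 2 * (n + 1) = (2 * n + 1) + 1 by ring, pow_succ, mul_assoc, hx, mul_assoc (q * p),
        hqq]
    have hp' : (1 - p) * (1 - p) = 1 - p := by
      simp only [sub_mul, mul_sub, one_mul, mul_one, hpp]; abel
    have hyp : y ^ (2 * (n + 1)) * (1 - p) = y ^ (2 * (n + 1)) := by
      rw [show 2 * (n + 1) = (2 * n + 1) + 1 by ring, pow_succ, mul_assoc, hy, mul_assoc _ (1 - p),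
        hp']
    rw [← hx, ← hy, hxq, hyp, even x hxs, even y hys, tq, _root_.sub_apply,
      inner_sub_right, tp, one_apply_eq_self, hξ] at h1
    rw [← pow_mul, even x hxs]
    rw [Complex.ofReal_re]
    have h2 : ‖(x ^ (n + 1)) D.ξ‖ ^ 2 - ‖q D.ξ‖ ^ 2 =
        ‖(y ^ (n + 1)) D.ξ‖ ^ 2 - (1 - ‖p D.ξ‖ ^ 2) := by exact_mod_cast h1
    nlinarith [sq_nonneg ‖(y ^ (n + 1)) D.ξ‖]
  have nq : ∀ w, ‖q w‖ ≤ ‖w‖ := norm_proj_le B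
  have np : ∀ w, ‖p w‖ ≤ ‖w‖ := norm_proj_le A
  have nx : ∀ w, ‖x w‖ ≤ ‖w‖ := fun w => (nq _).trans ((np _).trans (nq _))
  have nx2 : ‖x ^ 2‖ ≤ 1 := ContinuousLinearMap.opNorm_le_bound _ zero_le_one fun w => by
    rw [one_mul, pow_two]; exact (nx _).trans (nx _)
  have lim := (x ^ 2).tendsto_birkhoffAverage_orthogonalProjection nx2 D.ξ
  set F := (x ^ 2).eqLocus (1 : H →L[ℂ] H) with hF
  have hFcl : F.topologicalClosure = F :=
    IsClosed.submodule_topologicalClosure_eq (isClosed_eq (x ^ 2).continuous continuous_id)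
  have hle : F ≤ A.topologicalClosure ⊓ B.topologicalClosure := by
    intro v hv
    have hv' : x (x v) = v := hv
    have hvB : q v = v := by
      rw [← hv', hx]
      simp only [mul_apply_eq_comp]
      exact proj_idem B _
    refine ⟨?_, mem_of_proj hvB⟩
    have hn : ‖p v‖ = ‖v‖ := by
      refine le_antisymm (np v) ?_
      have h1 : ‖x (x v)‖ ≤ ‖p v‖ := (nx _).trans (by
        rw [hx]
        simp only [mul_apply_eq_comp]
        rw [hvB]; exact nq _)
      rwa [hv'] at h1
    exact (Submodule.mem_iff_norm_starProjection _ v).2 hn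
  have hlim2 : ‖p D.ξ‖ ^ 2 + ‖q D.ξ‖ ^ 2 - 1 ≤ ‖proj F D.ξ‖ ^ 2 := by
    have e1 : (⟪D.ξ, proj F D.ξ⟫_ℂ).re = ‖proj F D.ξ‖ ^ 2 := by
      rw [← inner_proj, inner_proj_self]; norm_cast
    rw [← e1]
    have hproj : proj F D.ξ = (F.orthogonalProjectionOnto D.ξ : H) := by
      refine proj_unique (Submodule.le_topologicalClosure _ (Subtype.coe_prop _)) fun w hw => ?_
      rw [hFcl] at hw
      rw [← inner_conj_symm, (map_eq_zero _).2]
      exact (Submodule.sub_starProjection_mem_orthogonal (K := F) D.ξ) w hw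
    have hc : Continuous fun w => (⟪D.ξ, w⟫_ℂ).re := by fun_prop
    have lim' := (hc.tendsto _).comp lim
    rw [← hproj] at lim'
    refine ge_of_tendsto lim' (Filter.eventually_atTop.2 ⟨1, fun N hN => ?_⟩)
    have hN' : (0 : ℝ) < N := by exact_mod_cast hN
    rw [Function.comp_apply, birkhoffAverage, birkhoffSum]
    simp only [id]
    rw [inner_smul_right, inner_sum, ← Complex.ofReal_natCast, ← Complex.ofReal_inv,
      Complex.re_ofReal_mul, Complex.re_sum, inv_mul_eq_div, le_div_iff₀ hN']
    rw [mul_comm, ← nsmul_eq_mul]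
    have := Finset.card_nsmul_le_sum (Finset.range N)
      (fun k => (⟪D.ξ, ((x ^ 2 : H →L[ℂ] H))^[k] D.ξ⟫_ℂ).re) (‖p D.ξ‖ ^ 2 + ‖q D.ξ‖ ^ 2 - 1) ?_
    · rwa [Finset.card_range] at this
    · intro k _
      have hk : ((x ^ 2 : H →L[ℂ] H))^[k] D.ξ = ((x ^ 2) ^ k) D.ξ := by
        exact congrFun (FunLike.coe_pow_eq_iterate (x ^ 2) k).symm _
      rw [hk]
      rcases k with _ | k
      · rw [pow_zero, one_apply_eq_self, hξ]
        have := np D.ξ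
        have := nq D.ξ
        rw [D.norm_ξ h.2.2] at *
        simp only [Complex.one_re]
        nlinarith [norm_nonneg (p D.ξ), norm_nonneg (q D.ξ)]
      · exact main k
  refine hlim2.trans (pow_le_pow_left₀ (norm_nonneg _) ?_ 2)
  have : proj F D.ξ = proj F (proj (A.topologicalClosure ⊓ B.topologicalClosure) D.ξ) := by
    apply ext_inner_left ℂ
    intro v
    rw [← inner_proj, ← inner_proj, ← inner_proj, proj_of_mem
      (Submodule.topologicalClosure_mono hle (proj_mem F v))]
  rw [this]
  exact norm_proj_le _ _

end GNSData

/-! ### Vectors fixed by congruence subgroups of one-parameter families -/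

namespace GNSData

variable {Γ : Type*} [Group Γ] {φ : Γ → ℂ} {H : Type*} [NormedAddCommGroup H]
  [InnerProductSpace ℂ H] (D : GNSData φ H) {R : Type*} [CommRing R]

/-- The conjugation action `π g ρ g` on the Hilbert space. -/
def α (g : Γ) : H ≃ₗᵢ[ℂ] H := D.π g * D.ρ g

theorem α_apply (g : Γ) (w : H) : D.α g w = D.π g (D.ρ g w) := rfl

theorem α_ξ (g : Γ) : D.α g D.ξ = D.ξ := D.fix g

theorem α_mul (g h : Γ) (w : H) : D.α (g * h) w = D.α g (D.α h w) := by
  simp only [α_apply, π_mul, ρ_mul, D.comm]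

theorem α_one (w : H) : D.α 1 w = w := by simp [α_apply]

theorem π_α (g h : Γ) (w : H) : D.π g (D.α h w) = D.α h (D.π (h⁻¹ * g * h) w) := by
  rw [α_apply, α_apply, ← D.comm, ← D.π_mul, ← D.π_mul]
  congr 2
  group

theorem inner_α (g : Γ) (u w : H) : ⟪D.α g u, w⟫_ℂ = ⟪u, D.α g⁻¹ w⟫_ℂ := by
  rw [← (D.α g).inner_map_map u, ← α_mul, mul_inv_cancel, α_one]

/-- The vectors fixed by `a (x z)` for all `z`. -/
def fixedBy (a : R → Γ) (x : R) : Submodule ℂ H where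
  carrier := {w | ∀ z, D.π (a (x * z)) w = w}
  add_mem' hu hw z := by rw [map_add, hu z, hw z]
  zero_mem' z := map_zero _
  smul_mem' c w hw z := by rw [map_smul, hw z]

variable {D} {a b c : R → Γ}

theorem fixedBy_closed (a : R → Γ) (x : R) : (D.fixedBy a x).topologicalClosure = D.fixedBy a x := by
  refine IsClosed.submodule_topologicalClosure_eq ?_
  have : (D.fixedBy a x : Set H) = ⋂ z, {w | D.π (a (x * z)) w = w} := by
    ext w; simp [fixedBy]
  rw [this]
  exact isClosed_iInter fun z => isClosed_eq (D.π _).continuous continuous_id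

theorem ρ_mem_fixedBy (a : R → Γ) (x : R) (g : Γ) {w : H} (hw : w ∈ D.fixedBy a x) :
    D.ρ g w ∈ D.fixedBy a x := fun z => by rw [D.comm, hw z]

theorem π_mem_fixedBy {g : Γ} (hg : ∀ z, Commute g (a z)) (x : R) {w : H}
    (hw : w ∈ D.fixedBy a x) : D.π g w ∈ D.fixedBy a x := fun z => by
  rw [← D.π_mul, ← (hg _).eq, D.π_mul, hw z]

theorem fixedBy_mono (a : R → Γ) (x y : R) : D.fixedBy a x ≤ D.fixedBy a (x * y) := fun w hw z => by
  rw [mul_assoc]; exact hw _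

variable [CompleteSpace H]

theorem proj_fixedBy_π {g : Γ} (hg : ∀ z, Commute g (a z)) (x : R) (w : H) :
    proj (D.fixedBy a x) (D.π g w) = D.π g (proj (D.fixedBy a x) w) :=
  proj_comm _ (fun _ => π_mem_fixedBy hg x)
    (fun w hw => by rw [← π_inv]; exact π_mem_fixedBy (fun z => (hg z).inv_left) x hw) w

theorem proj_fixedBy_mem (a : R → Γ) (x : R) (w : H) : proj (D.fixedBy a x) w ∈ D.fixedBy a x := by
  have := proj_mem (D.fixedBy a x) w
  rwa [fixedBy_closed] at this

theorem proj_fixedBy_of_mem {x : R} {w : H} (hw : w ∈ D.fixedBy a x) :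
    proj (D.fixedBy a x) w = w := proj_of_mem (Submodule.le_topologicalClosure _ hw)

variable [IsDomain R]

omit [CompleteSpace H] in
variable (D) in
/-- The vectors fixed by some congruence subgroup of the family `a`. -/
def nearFixed (a : R → Γ) : Submodule ℂ H where
  carrier := {w | ∃ x ≠ 0, w ∈ D.fixedBy a x}
  add_mem' := by
    rintro u w ⟨x, hx, hu⟩ ⟨y, hy, hw⟩
    refine ⟨x * y, mul_ne_zero hx hy, add_mem (fixedBy_mono a x y hu) ?_⟩
    rw [mul_comm]
    exact fixedBy_mono a y x hw
  zero_mem' := ⟨1, one_ne_zero, zero_mem _⟩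
  smul_mem' := by
    rintro c w ⟨x, hx, hw⟩
    exact ⟨x, hx, Submodule.smul_mem _ c hw⟩

omit [CompleteSpace H] in
theorem fixedBy_le (a : R → Γ) {x : R} (hx : x ≠ 0) : D.fixedBy a x ≤ D.nearFixed a :=
  fun _ hw => ⟨x, hx, hw⟩

omit [CompleteSpace H] in
theorem ρ_mem_nearFixed (a : R → Γ) (g : Γ) {w : H} (hw : w ∈ D.nearFixed a) :
    D.ρ g w ∈ D.nearFixed a := by
  obtain ⟨x, hx, hw⟩ := hw
  exact ⟨x, hx, ρ_mem_fixedBy a x g hw⟩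

omit [CompleteSpace H] in
theorem π_mem_nearFixed {g : Γ} (hg : ∀ z, Commute g (a z)) {w : H} (hw : w ∈ D.nearFixed a) :
    D.π g w ∈ D.nearFixed a := by
  obtain ⟨x, hx, hw⟩ := hw
  exact ⟨x, hx, π_mem_fixedBy hg x hw⟩

theorem proj_nearFixed_π {g : Γ} (hg : ∀ z, Commute g (a z)) (w : H) :
    proj (D.nearFixed a) (D.π g w) = D.π g (proj (D.nearFixed a) w) :=
  proj_comm _ (fun _ => π_mem_nearFixed hg)
    (fun w hw => by rw [← π_inv]; exact π_mem_nearFixed (fun z => (hg z).inv_left) hw) w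

theorem proj_fixedBy_proj (a : R → Γ) {x : R} (hx : x ≠ 0) (w : H) :
    proj (D.fixedBy a x) (proj (D.nearFixed a) w) = proj (D.fixedBy a x) w := by
  apply ext_inner_left ℂ
  intro v
  rw [← inner_proj, ← inner_proj, ← inner_proj, proj_of_mem
    (Submodule.topologicalClosure_mono (fixedBy_le a hx) (proj_mem _ v))]

/-- The projections to the vectors fixed by smaller and smaller congruence subgroups converge. -/
theorem exists_proj_near (a : R → Γ) (w : H) {ε : ℝ} (hε : 0 < ε) : ∃ x : R, x ≠ 0 ∧ ∀ y, y ≠ 0 →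
    ‖proj (D.fixedBy a (x * y)) w - proj (D.nearFixed a) w‖ < ε := by
  obtain ⟨u, ⟨x, hx, hu⟩, hd⟩ := Metric.mem_closure_iff.1 (proj_mem (D.nearFixed a) w) (ε / 2)
    (half_pos hε)
  refine ⟨x, hx, fun y hy => ?_⟩
  set η := proj (D.nearFixed a) w
  rw [dist_eq_norm] at hd
  have h1 : proj (D.fixedBy a (x * y)) w - η = proj (D.fixedBy a (x * y)) (η - u) - (η - u) := by
    rw [map_sub, proj_fixedBy_proj a (mul_ne_zero hx hy), proj_fixedBy_of_mem (fixedBy_mono a x y hu)]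
    abel
  rw [h1]
  calc _ ≤ ‖proj (D.fixedBy a (x * y)) (η - u)‖ + ‖η - u‖ := norm_sub_le _ _
    _ ≤ ‖η - u‖ + ‖η - u‖ := by gcongr; exact norm_proj_le _ _
    _ < ε := by linarith

/-- If a third family conjugates `a z` to `a z * b (z y)`, then the vectors `p ξ`, with `p` the
projection to the vectors fixed by a congruence subgroup of `a`, are limits of vectors fixed by
congruence subgroups of `b`. -/
theorem proj_mem_nearFixed [CharZero R] (haa : ∀ y z, Commute (a y) (a z))
    (hab : ∀ y z, Commute (a y) (b z))
    (hc : ∀ y z, c (y + z) = c y * c z)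
    (hca : ∀ y z, c y * a z * (c y)⁻¹ = a z * b (z * y)) {x : R} (hx : x ≠ 0) :
    proj (D.fixedBy a x) D.ξ ∈ (D.nearFixed b).topologicalClosure := by
  set u := proj (D.fixedBy a x) D.ξ with hu
  have hum : u ∈ D.fixedBy a x := proj_fixedBy_mem a x D.ξ
  set v := u - proj (D.nearFixed b) u with hv
  have hvm : v ∈ D.fixedBy a x := fun z => by
    rw [hv, map_sub, ← proj_nearFixed_π (fun t => hab _ _), hum z]
  have hvo : ∀ w ∈ (D.nearFixed b).topologicalClosure, ⟪v, w⟫_ℂ = 0 := fun w hw => by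
    rw [← inner_conj_symm, inner_sub_proj hw, map_zero]
  have hvξ : ⟪v, D.ξ⟫_ℂ = ((‖v‖ ^ 2 : ℝ) : ℂ) := by
    rw [← proj_fixedBy_of_mem hvm, inner_proj, ← hu, proj_fixedBy_of_mem hvm,
      ← inner_self_eq_ofReal]
    nth_rewrite 3 [hv]
    rw [inner_sub_right, hvo _ (proj_mem _ _), sub_zero]
  have horth : ∀ y, y ≠ 0 → ⟪v, D.α (c y) v⟫_ℂ = 0 := by
    intro y hy
    set w := D.α (c y) v with hw
    have hwf : ∀ z, D.π (a (x * z) * b (x * z * y)) w = w := fun z => by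
      rw [hw, ← hca, π_α]
      congr 1
      rw [show (c y)⁻¹ * (c y * a (x * z) * (c y)⁻¹) * c y = a (x * z) by group]
      exact hvm z
    rw [← proj_fixedBy_of_mem hvm, inner_proj]
    apply hvo
    apply Submodule.le_topologicalClosure
    refine ⟨x * y, mul_ne_zero hx hy, fun z => ?_⟩
    rw [show x * y * z = x * z * y by ring]
    conv_rhs => rw [← hwf z, proj_fixedBy_π fun t => (haa _ _).mul_left (hab _ _).symm,
      (hab _ _).eq, π_mul, proj_fixedBy_mem a x w z]
  have h0 := eq_zero_of_orthogonal_family (fun k : ℕ => D.α (c k) v) D.ξ ‖v‖ _ ?_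
    (fun k => (D.α _).norm_map _) (fun k => by
      rw [inner_α, ← D.α_ξ (c k), ← α_mul, inv_mul_cancel, α_one, hvξ])
  · have : v = 0 := by
      simpa using h0
    rw [hv, sub_eq_zero] at this
    exact mem_of_proj this.symm
  · intro k l hkl
    have : c l = c k * c ((l : R) - k) := by rw [← hc]; congr 1; ring
    show ⟪D.α (c k) v, D.α (c l) v⟫_ℂ = 0
    rw [this, α_mul, LinearIsometryEquiv.inner_map_map]
    exact horth _ (sub_ne_zero.2 fun h => hkl (Nat.cast_injective h).symm)

/-- The two projections agree as soon as each lies in the closure of the other space. -/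
theorem proj_eq_proj {A B : Submodule ℂ H} {ξ : H} (hA : proj A ξ ∈ B.topologicalClosure)
    (hB : proj B ξ ∈ A.topologicalClosure) : proj A ξ = proj B ξ := by
  have h1 : ⟪proj A ξ, proj A ξ⟫_ℂ = ⟪proj A ξ, proj B ξ⟫_ℂ := by
    rw [← inner_proj B, proj_of_mem hA, inner_proj A ξ (proj A ξ), proj_idem, inner_proj]
  have h2 : ⟪proj B ξ, proj B ξ⟫_ℂ = ⟪proj B ξ, proj A ξ⟫_ℂ := by
    rw [← inner_proj A, proj_of_mem hB, inner_proj B ξ (proj B ξ), proj_idem, inner_proj]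
  rw [← sub_eq_zero, ← inner_self_eq_zero (𝕜 := ℂ), inner_sub_left, inner_sub_right,
    inner_sub_right, h1, h2]
  ring

theorem proj_nearFixed_mem [CharZero R] (haa : ∀ y z, Commute (a y) (a z))
    (hab : ∀ y z, Commute (a y) (b z))
    (hc : ∀ y z, c (y + z) = c y * c z)
    (hca : ∀ y z, c y * a z * (c y)⁻¹ = a z * b (z * y)) :
    proj (D.nearFixed a) D.ξ ∈ (D.nearFixed b).topologicalClosure := by
  have hcl : IsClosed ((D.nearFixed b).topologicalClosure : Set H) :=
    Submodule.isClosed_topologicalClosure _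
  refine hcl.closure_subset (Metric.mem_closure_iff.2 fun ε hε => ?_)
  obtain ⟨x, hx, h⟩ := exists_proj_near a D.ξ hε
  refine ⟨proj (D.fixedBy a (x * 1)) D.ξ,
    proj_mem_nearFixed haa hab hc hca (by simpa using hx), ?_⟩
  rw [dist_comm, dist_eq_norm]
  exact h 1 one_ne_zero

/-- If `g` conjugates the family `a` into the group generated by two commuting families `a`, `b`
with the same limit projection `η` of `ξ`, then `η` is invariant under the conjugation action
of `g`. -/
theorem α_proj_nearFixed (hab : ∀ y z, Commute (a y) (b z))
    (hη : proj (D.nearFixed a) D.ξ = proj (D.nearFixed b) D.ξ) {g : Γ} {r s : R}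
    (hg : ∀ z, g * a z * g⁻¹ = a (z * r) * b (z * s)) :
    D.α g (proj (D.nearFixed a) D.ξ) = proj (D.nearFixed a) D.ξ := by
  set η := proj (D.nearFixed a) D.ξ with hηd
  have hmem : D.α g⁻¹ η ∈ (D.nearFixed a).topologicalClosure := by
    have hcl : IsClosed ((D.nearFixed a).topologicalClosure : Set H) :=
      Submodule.isClosed_topologicalClosure _
    refine hcl.closure_subset (Metric.mem_closure_iff.2 fun ε hε => ?_)
    obtain ⟨x, hx, h⟩ := exists_proj_near a D.ξ (half_pos hε)
    obtain ⟨y, hy, h'⟩ := exists_proj_near b D.ξ (half_pos hε)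
    replace h := h y hy
    replace h' := h' x hx
    rw [mul_comm y x, ← hη] at h'
    rw [← hηd] at h
    have hxy := mul_ne_zero hx hy
    set t := x * y
    set p := proj (D.fixedBy a t) D.ξ with hp
    have hpm : p ∈ D.fixedBy a t := proj_fixedBy_mem a t _
    set w := proj (D.fixedBy b t) p with hw
    have hwb : w ∈ D.fixedBy b t := proj_fixedBy_mem b t _
    have hwa : w ∈ D.fixedBy a t := fun z => by
      rw [hw, ← proj_fixedBy_π (fun s => hab _ _), hpm z]
    refine ⟨D.α g⁻¹ w, Submodule.le_topologicalClosure _ ⟨t, hxy, fun z => ?_⟩, ?_⟩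
    · rw [π_α]
      congr 1
      rw [inv_inv, hg, π_mul, mul_assoc t, mul_assoc t, hwb, hwa]
    · rw [dist_eq_norm, ← map_sub, LinearIsometryEquiv.norm_map]
      have e : η - w = -(proj (D.fixedBy b t) (p - η) + (proj (D.fixedBy b t) D.ξ - η)) := by
        rw [map_sub, hw]
        nth_rewrite 2 [hη]
        rw [proj_fixedBy_proj b hxy]
        abel
      rw [e, norm_neg]
      calc _ ≤ ‖proj (D.fixedBy b t) (p - η)‖ + ‖proj (D.fixedBy b t) D.ξ - η‖ := norm_add_le _ _
        _ ≤ ‖p - η‖ + ‖proj (D.fixedBy b t) D.ξ - η‖ := by gcongr; exact norm_proj_le _ _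
        _ < ε := by linarith
  have h1 : ⟪D.α g⁻¹ η, η⟫_ℂ = ⟪η, η⟫_ℂ := by
    nth_rewrite 2 [hηd]
    rw [← inner_proj, proj_of_mem hmem, inner_α, α_ξ, hηd,
      inner_proj _ _ (proj (D.nearFixed a) D.ξ), proj_idem, inner_proj]
  have h2 : D.α g⁻¹ η = η := by
    rw [← sub_eq_zero, ← inner_self_eq_zero (𝕜 := ℂ), inner_sub_left, inner_sub_right,
      inner_sub_right, LinearIsometryEquiv.inner_map_map, h1, ← inner_conj_symm η (D.α g⁻¹ η), h1,
      inner_self_conj]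
    ring
  conv_lhs => rw [← h2]
  rw [← α_mul, mul_inv_cancel, α_one]

/-- If no vector is fixed by a congruence subgroup of `b`, then `φ` vanishes on the elements all of
whose multiples by such a congruence subgroup are conjugate. -/
theorem eq_zero_of_isConj (hb : proj (D.nearFixed b) D.ξ = 0)
    (hadd : ∀ y z, b (y + z) = b y * b z) {g : Γ} {x : R} (hx : x ≠ 0)
    (hgb : ∀ z, φ (b (x * z) * g) = φ g) : φ g = 0 := by
  have hb0 : b 0 = 1 := by
    have := hadd 0 0
    rwa [add_zero, left_eq_mul] at this
  have hneg : ∀ z, (b z)⁻¹ = b (-z) := fun z => by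
    rw [inv_eq_iff_mul_eq_one, ← hadd, add_neg_cancel, hb0]
  set V := Submodule.span ℂ (Set.range fun z => D.π (b (x * z)) D.ξ) with hV
  set ζ := proj V (D.π g D.ξ) with hζ
  have hVm : ∀ z, D.π (b (x * z)) D.ξ ∈ V.topologicalClosure := fun z =>
    Submodule.le_topologicalClosure _ (Submodule.subset_span ⟨z, rfl⟩)
  have hc : ∀ z, ⟪D.π (b (x * z)) D.ξ, ζ⟫_ℂ = φ g := fun z => by
    rw [hζ, ← inner_proj, proj_of_mem (hVm z), inner_ππ, hneg, ← mul_neg, hgb]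
  have hinv : ∀ t, ∀ w ∈ V, D.π (b (x * t)) w ∈ V := by
    intro t w hw
    refine Submodule.span_induction (fun w hw => ?_) (by simp)
      (fun u w _ _ hu hw => by rw [map_add]; exact add_mem hu hw)
      (fun c w _ hw => by rw [map_smul]; exact Submodule.smul_mem _ _ hw) hw
    obtain ⟨z, rfl⟩ := hw
    refine Submodule.subset_span ⟨t + z, ?_⟩
    simp only
    rw [mul_add, hadd, π_mul]
  have hfix : ζ ∈ D.fixedBy b x := by
    intro t
    have hperp : ∀ w ∈ V, ⟪w, D.π (b (x * t)) ζ - ζ⟫_ℂ = 0 := by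
      intro w hw
      refine Submodule.span_induction (fun w hw => ?_) (by simp)
        (fun u w _ _ hu hw => by rw [inner_add_left, hu, hw, add_zero])
        (fun c w _ hw => by rw [inner_smul_left, hw, mul_zero]) hw
      obtain ⟨z, rfl⟩ := hw
      simp only
      rw [inner_sub_right, hc, inner_π, ← π_mul, hneg, ← mul_neg, ← hadd, ← mul_add, hc, sub_self]
    have hmem : D.π (b (x * t)) ζ - ζ ∈ V.topologicalClosure :=
      sub_mem (map_mem_closure_of _ (hinv t) (proj_mem _ _)) (proj_mem _ _)
    have hperp' : V.topologicalClosure ≤ (Submodule.span ℂ {D.π (b (x * t)) ζ - ζ})ᗮ :=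
      Submodule.topologicalClosure_minimal _
        (fun w hw => by
          rw [Submodule.mem_orthogonal_singleton_iff_inner_left]
          exact hperp w hw) (Submodule.isClosed_orthogonal _)
    have := hperp' hmem
    rw [Submodule.mem_orthogonal_singleton_iff_inner_left, inner_self_eq_zero, sub_eq_zero] at this
    exact this
  have h0 := hc 0
  rw [mul_zero, hb0, map_one, LinearIsometryEquiv.coe_one, id, ← proj_fixedBy_of_mem hfix,
    ← inner_proj, ← proj_fixedBy_proj b hx, hb, map_zero, inner_zero_left] at h0
  exact h0.symm

/-- If `ξ` is a limit of vectors fixed by congruence subgroups, for each of finitely many families,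
then some nonzero vector is fixed by a congruence subgroup of every family. -/
theorem exists_fixed (h : IsCharacter φ) {ι : Type*} [Finite ι] (f : ι → R → Γ)
    (hf : ∀ i, proj (D.nearFixed (f i)) D.ξ = D.ξ) :
    ∃ x : R, x ≠ 0 ∧ proj (⨅ i, D.fixedBy (f i) x) D.ξ ≠ 0 := by
  classical
  have := Fintype.ofFinite ι
  have hcl : ∀ (s : Finset ι) (x : R),
      (⨅ i ∈ s, D.fixedBy (f i) x).topologicalClosure = ⨅ i ∈ s, D.fixedBy (f i) x := by
    intro s x
    refine IsClosed.submodule_topologicalClosure_eq ?_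
    simp only [Submodule.coe_iInf]
    refine isClosed_biInter fun i _ => ?_
    rw [← fixedBy_closed]
    exact Submodule.isClosed_topologicalClosure _
  have hle : ∀ {A B : Submodule ℂ H}, A ≤ B → ‖proj A D.ξ‖ ≤ ‖proj B D.ξ‖ := by
    intro A B hAB
    have : proj A D.ξ = proj A (proj B D.ξ) := by
      apply ext_inner_left ℂ
      intro v
      rw [← inner_proj, ← inner_proj, ← inner_proj, proj_of_mem
        (Submodule.topologicalClosure_mono hAB (proj_mem _ v))]
    rw [this]
    exact norm_proj_le _ _
  have key : ∀ (s : Finset ι) (ε : ℝ), 0 < ε → ∃ x : R, x ≠ 0 ∧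
      1 - ε < ‖proj (⨅ i ∈ s, D.fixedBy (f i) x) D.ξ‖ ^ 2 := by
    intro s
    induction s using Finset.induction_on with
    | empty =>
      intro ε hε
      refine ⟨1, one_ne_zero, ?_⟩
      rw [proj_of_mem (Submodule.le_topologicalClosure _ (by simp)), D.norm_ξ h.2.2]
      linarith
    | insert i s his ih =>
      intro ε hε
      obtain ⟨x, hx, h1⟩ := ih (ε / 2) (half_pos hε)
      obtain ⟨y, hy, h2⟩ := exists_proj_near (f i) D.ξ (show 0 < ε / 4 by linarith)
      refine ⟨x * y, mul_ne_zero hx hy, ?_⟩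
      replace h2 := h2 x hx
      rw [hf i, mul_comm y x] at h2
      have h3 : 1 - ε / 4 < ‖proj (D.fixedBy (f i) (x * y)) D.ξ‖ := by
        have := norm_sub_norm_le D.ξ (proj (D.fixedBy (f i) (x * y)) D.ξ)
        rw [D.norm_ξ h.2.2, norm_sub_rev] at this
        linarith
      have h4 := norm_proj_inf (D := D) h (A := ⨅ i ∈ s, D.fixedBy (f i) (x * y))
        (B := D.fixedBy (f i) (x * y)) (fun g w hw => by
          simp only [Submodule.mem_iInf] at hw ⊢
          exact fun i hi => ρ_mem_fixedBy _ _ _ (hw i hi)) (fun g w hw => ρ_mem_fixedBy _ _ _ hw)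
      rw [hcl, fixedBy_closed, inf_comm,
        ← Finset.iInf_insert i s fun i => D.fixedBy (f i) (x * y)] at h4
      have h5 := hle (show (⨅ i ∈ s, D.fixedBy (f i) x) ≤ ⨅ i ∈ s, D.fixedBy (f i) (x * y) from
        iInf₂_mono fun i _ => fixedBy_mono _ _ _)
      have h6 := norm_nonneg (proj (⨅ i ∈ s, D.fixedBy (f i) x) D.ξ)
      have h7 := norm_nonneg (proj (D.fixedBy (f i) (x * y)) D.ξ)
      have h8 := pow_le_pow_left₀ h6 h5 2
      by_cases he : ε / 4 ≤ 1
      · nlinarith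
      · nlinarith [sq_nonneg ‖proj (⨅ a ∈ insert i s, D.fixedBy (f a) (x * y)) D.ξ‖]
  obtain ⟨x, hx, h1⟩ := key Finset.univ (1 / 2) (by norm_num)
  refine ⟨x, hx, fun h0 => ?_⟩
  simp only [Finset.mem_univ, iInf_pos, h0, norm_zero] at h1
  norm_num at h1

end GNSData

/-! ### Transvections -/

namespace Matrix.SpecialLinearGroup

variable {ι R : Type*} [Fintype ι] [DecidableEq ι] [CommRing R]

/-- The transvection `1 + y ⊗ w`, defined to be `1` if the functional `w` does not vanish at `y`. -/
noncomputable def tv (y w : ι → R) : SpecialLinearGroup ι R :=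
  open Classical in
  if h : w ⬝ᵥ y = 0 then
    ⟨1 + vecMulVec y w, by
      rw [vecMulVec_eq Unit, det_one_add_replicateCol_mul_replicateRow, h, add_zero]⟩
  else 1

theorem coe_tv {y w : ι → R} (h : w ⬝ᵥ y = 0) :
    (tv y w : Matrix ι ι R) = 1 + vecMulVec y w := by
  have := congrArg (Subtype.val (p := fun A : Matrix ι ι R => A.det = 1))
    (show tv y w = _ from dif_pos h)
  exact this

theorem tv_mulVec {y w : ι → R} (h : w ⬝ᵥ y = 0) (v : ι → R) :
    (tv y w : Matrix ι ι R) *ᵥ v = v + (w ⬝ᵥ v) • y := by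
  rw [coe_tv h, add_mulVec, one_mulVec, vecMulVec_mulVec]; simp

theorem vecMul_tv {y w : ι → R} (h : w ⬝ᵥ y = 0) (v : ι → R) :
    v ᵥ* (tv y w : Matrix ι ι R) = v + (v ⬝ᵥ y) • w := by
  rw [coe_tv h, vecMul_add, vecMul_one, vecMul_vecMulVec]

theorem tv_zero_left (w : ι → R) : tv 0 w = 1 := by
  ext1; simp [coe_tv]

theorem tv_zero_right (y : ι → R) : tv y 0 = 1 := by
  ext1; simp [coe_tv]

theorem tv_add_left {y y' w : ι → R} (h : w ⬝ᵥ y = 0) (h' : w ⬝ᵥ y' = 0) :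
    tv (y + y') w = tv y w * tv y' w := by
  apply Subtype.ext
  rw [coe_mul, coe_tv h, coe_tv h', coe_tv (by rw [dotProduct_add, h, h', add_zero]), add_mul,
    one_mul, mul_add, mul_one, vecMulVec_mul_vecMulVec, h']
  simp [add_vecMulVec, add_assoc, add_comm]

theorem tv_add_right {y w w' : ι → R} (h : w ⬝ᵥ y = 0) (h' : w' ⬝ᵥ y = 0) :
    tv y (w + w') = tv y w * tv y w' := by
  apply Subtype.ext
  rw [coe_mul, coe_tv h, coe_tv h', coe_tv (by rw [add_dotProduct, h, h', add_zero]), add_mul,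
    one_mul, mul_add, mul_one, vecMulVec_mul_vecMulVec, h]
  simp [vecMulVec_add, add_assoc, add_comm]

theorem tv_smul (c : R) (y w : ι → R) (h : w ⬝ᵥ y = 0) : tv (c • y) w = tv y (c • w) := by
  apply Subtype.ext
  rw [coe_tv (by simp [h]), coe_tv (by simp [h])]
  simp [smul_vecMulVec, vecMulVec_smul]

theorem tv_inv {y w : ι → R} (h : w ⬝ᵥ y = 0) : (tv y w)⁻¹ = tv (-y) w := by
  rw [inv_eq_iff_mul_eq_one, ← tv_add_left h (by simp [h]), add_neg_cancel, tv_zero_left]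

theorem coe_mul_coe_inv (g : SpecialLinearGroup ι R) :
    (g : Matrix ι ι R) * (↑g⁻¹ : Matrix ι ι R) = 1 := by
  rw [← coe_mul, mul_inv_cancel, coe_one]

theorem coe_inv_mul_coe (g : SpecialLinearGroup ι R) :
    (↑g⁻¹ : Matrix ι ι R) * (g : Matrix ι ι R) = 1 := by
  rw [← coe_mul, inv_mul_cancel, coe_one]

theorem dotProduct_conj (g : SpecialLinearGroup ι R) (w y : ι → R) :
    (w ᵥ* (↑g⁻¹ : Matrix ι ι R)) ⬝ᵥ ((g : Matrix ι ι R) *ᵥ y) = w ⬝ᵥ y := by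
  rw [← dotProduct_mulVec, mulVec_mulVec, coe_inv_mul_coe, one_mulVec]

theorem conj_tv (g : SpecialLinearGroup ι R) (y w : ι → R) (h : w ⬝ᵥ y = 0) :
    g * tv y w * g⁻¹ = tv ((g : Matrix ι ι R) *ᵥ y) (w ᵥ* (↑g⁻¹ : Matrix ι ι R)) := by
  apply Subtype.ext
  rw [coe_mul, coe_mul, coe_tv h, coe_tv (by rw [dotProduct_conj, h]), mul_add, add_mul, mul_one,
    coe_mul_coe_inv, mul_vecMulVec, vecMulVec_mul]

/-- Conjugating a transvection by a transvection. -/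
theorem tv_conj_tv {a b y w : ι → R} (hab : b ⬝ᵥ a = 0) (h : w ⬝ᵥ y = 0) :
    tv a b * tv y w * (tv a b)⁻¹ = tv (y + (b ⬝ᵥ y) • a) (w - (w ⬝ᵥ a) • b) := by
  rw [conj_tv _ _ _ h, tv_mulVec hab, tv_inv hab, vecMul_tv (by simp [hab])]
  congr 1
  simp [sub_eq_add_neg]

/-- The elementary matrix `1 + r e_ij`. -/
noncomputable def el (i j : ι) (r : R) : SpecialLinearGroup ι R :=
  tv (Pi.single i r) (Pi.single j 1)

theorem single_dot_single {i j : ι} (h : i ≠ j) (r s : R) :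
    (Pi.single i r : ι → R) ⬝ᵥ Pi.single j s = 0 := by simp [h]

theorem el_ok {i j : ι} (h : i ≠ j) (r : R) : (Pi.single j 1 : ι → R) ⬝ᵥ Pi.single i r = 0 :=
  single_dot_single h.symm _ _

theorem coe_el {i j : ι} (h : i ≠ j) (r : R) :
    (el i j r : Matrix ι ι R) = Matrix.transvection i j r := by
  rw [el, coe_tv (el_ok h r), Matrix.transvection]
  congr 1
  ext a b
  by_cases h1 : i = a <;> by_cases h2 : j = b <;>
    simp [vecMulVec_apply, Pi.single_apply, Matrix.single_apply, h1, h2, eq_comm]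

theorem el_eq {i j : ι} (h : i ≠ j) (r s : R) :
    tv (Pi.single i r) (Pi.single j s) = el i j (s * r) := by
  have h1 : (Pi.single j s : ι → R) = s • Pi.single j 1 := by simp [← Pi.single_smul]
  rw [h1, ← tv_smul _ _ _ (el_ok h r), ← Pi.single_smul, smul_eq_mul, el]

theorem el_add {i j : ι} (h : i ≠ j) (r s : R) : el i j (r + s) = el i j r * el i j s := by
  rw [el, Pi.single_add, tv_add_left (el_ok h r) (el_ok h s)]; rfl

theorem el_zero (i j : ι) : el i j (0 : R) = 1 := by rw [el, Pi.single_zero, tv_zero_left]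

theorem el_inv {i j : ι} (h : i ≠ j) (r : R) : (el i j r)⁻¹ = el i j (-r) := by
  rw [inv_eq_iff_mul_eq_one, ← el_add h, add_neg_cancel, el_zero]

theorem exists_third (h3 : 3 ≤ Fintype.card ι) (i j : ι) : ∃ k, k ≠ i ∧ k ≠ j := by
  have : ({i, j} : Finset ι).card < (Finset.univ : Finset ι).card :=
    lt_of_le_of_lt (Finset.card_le_two) (by rw [Finset.card_univ]; omega)
  obtain ⟨k, -, hk⟩ := Finset.exists_mem_notMem_of_card_lt_card this
  simp only [Finset.mem_insert, Finset.mem_singleton, not_or] at hk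
  exact ⟨k, hk⟩

end Matrix.SpecialLinearGroup

/-! ### Characters vanishing on elementary matrices -/

section Vanishing

open Matrix Matrix.SpecialLinearGroup

variable {ι R : Type*} [Fintype ι] [DecidableEq ι] [CommRing R] [IsDomain R] [CharZero R]
  {φ : SpecialLinearGroup ι R → ℂ}

/-- The conjugates of `tv y w` by multiples of a transvection `tv a b` with `w a = 0` and `b y ≠ 0` differ
by transvections `tv (c a) w`; if `φ` vanishes on the latter, it vanishes on `tv y w`. -/
theorem IsCharacter.tv_eq_zero_of_left (h : IsCharacter φ) {y w a b : ι → R} (hyw : w ⬝ᵥ y = 0)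
    (hab : b ⬝ᵥ a = 0) (hwa : w ⬝ᵥ a = 0) (hby : b ⬝ᵥ y ≠ 0)
    (h0 : ∀ c : R, c ≠ 0 → φ (tv (c • a) w) = 0) : φ (tv y w) = 0 := by
  have hconj : ∀ k : ℕ, tv ((k : R) • a) b * tv y w * (tv ((k : R) • a) b)⁻¹ =
      tv (y + ((k : R) * (b ⬝ᵥ y)) • a) w := fun k => by
    rw [tv_conj_tv (by simp [hab]) hyw, dotProduct_smul, hwa, smul_zero, zero_smul, sub_zero,
      smul_smul, mul_comm]
  refine h.eq_zero_of_conj _ (fun k : ℕ => tv (y + ((k : R) * (b ⬝ᵥ y)) • a) w)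
    (fun k => isConj_iff.2 ⟨_, hconj k⟩) fun k l hkl => ?_
  have hk : ∀ c : R, w ⬝ᵥ (y + c • a) = 0 := fun c => by simp [hyw, hwa]
  simp only
  rw [tv_inv (hk _), ← tv_add_left (by rw [dotProduct_neg, hk, neg_zero]) (hk _)]
  have : -(y + ((k : R) * (b ⬝ᵥ y)) • a) + (y + ((l : R) * (b ⬝ᵥ y)) • a) =
      (((l : R) - k) * (b ⬝ᵥ y)) • a := by module
  rw [this]
  exact h0 _ (mul_ne_zero (sub_ne_zero.2 fun e => hkl (Nat.cast_injective e).symm) hby)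

/-- The dual of `IsCharacter.tv_eq_zero_of_left`, moving the functional `w` instead of the vector `y`. -/
theorem IsCharacter.tv_eq_zero_of_right (h : IsCharacter φ) {y w a b : ι → R} (hyw : w ⬝ᵥ y = 0)
    (hab : b ⬝ᵥ a = 0) (hby : b ⬝ᵥ y = 0) (hwa : w ⬝ᵥ a ≠ 0)
    (h0 : ∀ c : R, c ≠ 0 → φ (tv y (c • b)) = 0) : φ (tv y w) = 0 := by
  have hconj : ∀ k : ℕ, tv a ((k : R) • b) * tv y w * (tv a ((k : R) • b))⁻¹ =
      tv y (w - ((k : R) * (w ⬝ᵥ a)) • b) := fun k => by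
    rw [tv_conj_tv (by simp [hab]) hyw, smul_dotProduct, hby, smul_zero, zero_smul, add_zero,
      smul_smul, mul_comm]
  refine h.eq_zero_of_conj _ (fun k : ℕ => tv y (w - ((k : R) * (w ⬝ᵥ a)) • b))
    (fun k => isConj_iff.2 ⟨_, hconj k⟩) fun k l hkl => ?_
  have hk : ∀ c : R, (w - c • b) ⬝ᵥ y = 0 := fun c => by simp [hyw, hby]
  simp only
  rw [tv_inv (hk _), ← neg_one_smul R y, tv_smul _ _ _ (hk _), ← tv_add_right
    (by rw [smul_dotProduct, hk, smul_zero]) (hk _)]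
  have : (-1 : R) • (w - ((k : R) * (w ⬝ᵥ a)) • b) + (w - ((l : R) * (w ⬝ᵥ a)) • b) =
      (((k : R) - l) * (w ⬝ᵥ a)) • b := by module
  rw [this]
  exact h0 _ (mul_ne_zero (sub_ne_zero.2 fun e => hkl (Nat.cast_injective e)) hwa)

variable (h3 : 3 ≤ Fintype.card ι)
include h3

/-- A character vanishing on the nontrivial elementary matrices vanishes on all nontrivial
transvections. -/
theorem IsCharacter.tv_eq_zero (h : IsCharacter φ)
    (h0 : ∀ (i j : ι) (r : R), i ≠ j → r ≠ 0 → φ (el i j r) = 0)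
    {y w : ι → R} (hyw : w ⬝ᵥ y = 0) (hy : y ≠ 0) (hw : w ≠ 0) : φ (tv y w) = 0 := by
  -- transvections with a single nonzero column
  have hcol : ∀ (j : ι) (y : ι → R) (s : R), y j = 0 → y ≠ 0 → s ≠ 0 →
      φ (tv y (Pi.single j s)) = 0 := by
    intro j y s hyj hy hs
    obtain ⟨i, hi⟩ := Function.ne_iff.1 hy
    have hij : i ≠ j := fun e => hi (by rw [e]; exact hyj)
    obtain ⟨k, hki, hkj⟩ := exists_third h3 i j
    refine h.tv_eq_zero_of_left (a := Pi.single k 1) (b := Pi.single i 1) (by simp [hyj])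
      (by simp [hki.symm]) (by simp [hkj.symm]) (by simpa using hi) fun c hc => ?_
    rw [← Pi.single_smul, smul_eq_mul, mul_one, el_eq hkj]
    exact h0 _ _ _ hkj (mul_ne_zero hs hc)
  have hb : ∀ (i j : ι) (y w : ι → R), w ⬝ᵥ y = 0 → y ≠ 0 → y i = 0 → j ≠ i → w j ≠ 0 →
      φ (tv y w) = 0 := by
    intro i j y w hyw hy hyi hji hwj
    refine h.tv_eq_zero_of_right (a := Pi.single j 1) (b := Pi.single i 1) hyw
      (by simp [hji.symm]) (by simp [hyi]) (by simpa using hwj) fun c hc => ?_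
    rw [← Pi.single_smul, smul_eq_mul, mul_one]
    exact hcol i y c hyi hy hc
  obtain ⟨j, hj⟩ := Function.ne_iff.1 hw
  by_cases hk : ∃ k, k ≠ j ∧ w k ≠ 0
  · obtain ⟨k, hkj, hk⟩ := hk
    obtain ⟨i, hij, hik⟩ := exists_third h3 j k
    by_cases hyi : y i = 0
    · exact hb i j y w hyw hy hyi hij.symm hj
    have hwa : w ⬝ᵥ (Pi.single j (w k) - Pi.single k (w j)) = 0 := by
      simp [dotProduct_sub, mul_comm]
    refine h.tv_eq_zero_of_left (a := Pi.single j (w k) - Pi.single k (w j)) (b := Pi.single i 1)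
      hyw (by simp [hij, hik]) hwa (by simpa using hyi)
      fun c hc => ?_
    refine hb i j _ w (by simp [hwa]) ?_ (by simp [hij, hik]) hij.symm hj
    refine Function.ne_iff.2 ⟨j, ?_⟩
    simpa [hkj] using ⟨hc, hk⟩
  · push Not at hk
    have : w = Pi.single j (w j) := by
      ext k
      by_cases hkj : k = j
      · subst hkj; simp
      · simp [hkj, hk k hkj]
    rw [this] at hyw ⊢
    refine hcol j y _ ?_ hy hj
    simpa [show w j ≠ 0 from hj] using hyw

/-- A character vanishing on the nontrivial elementary matrices vanishes off the center. -/
theorem IsCharacter.eq_zero_of_not_mem_center (h : IsCharacter φ)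
    (h0 : ∀ (i j : ι) (r : R), i ≠ j → r ≠ 0 → φ (el i j r) = 0)
    (g : SpecialLinearGroup ι R) (hg : g ∉ Subgroup.center (SpecialLinearGroup ι R)) : φ g = 0 := by
  obtain ⟨y, w, hyw, hgw⟩ : ∃ y w : ι → R, w ⬝ᵥ y = 0 ∧
      w ⬝ᵥ ((↑g⁻¹ : Matrix ι ι R) *ᵥ y) ≠ 0 := by
    by_contra hcon
    push Not at hcon
    apply hg
    rw [← inv_mem_iff, mem_center_iff]
    have hoff : ∀ i j, i ≠ j → (↑g⁻¹ : Matrix ι ι R) i j = 0 := fun i j hij => by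
      have := hcon (Pi.single j 1) (Pi.single i 1) (by simp [hij])
      simpa using this
    have hdiag : ∀ i j, (↑g⁻¹ : Matrix ι ι R) i i = (↑g⁻¹ : Matrix ι ι R) j j := fun i j => by
      by_cases hij : i = j
      · rw [hij]
      have := hcon (Pi.single i 1 - Pi.single j 1) (Pi.single i 1 + Pi.single j 1)
        (by simp [hij, Ne.symm hij])
      simp only [mulVec_sub, mulVec_single_one, add_dotProduct, single_one_dotProduct, Pi.sub_apply,
        col_apply, hoff i j hij, hoff j i (Ne.symm hij)] at this
      linear_combination this
    have : Nonempty ι := Fintype.card_pos_iff.1 (by omega)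
    obtain ⟨i⟩ := this
    have hs : scalar ι ((↑g⁻¹ : Matrix ι ι R) i i) = (↑g⁻¹ : Matrix ι ι R) := by
      ext a b
      by_cases hab : a = b
      · subst hab; simp [hdiag i a]
      · simp [hab, hoff a b hab]
    refine ⟨_, ?_, hs⟩
    have hd := (g⁻¹).2
    rw [← hs] at hd
    simpa using hd
  have hw : w ≠ 0 := fun e => hgw (by simp [e])
  have hy : y ≠ 0 := fun e => hgw (by simp [e])
  set w' := w ᵥ* (g : Matrix ι ι R) with hw'
  set y' := (↑g⁻¹ : Matrix ι ι R) *ᵥ y with hy'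
  obtain ⟨a, ha, hwa, hwa'⟩ : ∃ a : ι → R, a ≠ 0 ∧ w ⬝ᵥ a = 0 ∧ w' ⬝ᵥ a = 0 := by
    have : Nonempty ι := Fintype.card_pos_iff.1 (by omega)
    obtain ⟨i⟩ := this
    obtain ⟨j, hji, -⟩ := exists_third h3 i i
    obtain ⟨k, hki, hkj⟩ := exists_third h3 i j
    obtain ⟨a, ha, hMa⟩ := (exists_mulVec_eq_zero_iff (M := fun t => if t = i then w else
      if t = j then w' else 0)).2 (det_eq_zero_of_row_eq_zero k fun s => by simp [hki, hkj])
    refine ⟨a, ha, ?_, ?_⟩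
    · simpa [mulVec] using congrFun hMa i
    · simpa [mulVec, hji] using congrFun hMa j
  have hyw' : w' ⬝ᵥ y' = 0 := by
    have := dotProduct_conj g⁻¹ w y
    rw [inv_inv] at this
    rw [hw', hy', this, hyw]
  have hw'0 : w' ≠ 0 := fun e => hw (by
    have := congrArg (· ᵥ* (↑g⁻¹ : Matrix ι ι R)) e
    simpa only [hw', vecMul_vecMul, coe_mul_coe_inv, vecMul_one, zero_vecMul] using this)
  -- the commutator of `g⁻¹` with a nonzero multiple of `tv y w`
  have hcomm : ∀ m : R, m ≠ 0 → φ (tv (m • y') w' * (tv (m • y) w)⁻¹) = 0 := by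
    intro m hm
    have hconj : ∀ k : ℕ, tv ((k : R) • a) w * (tv (m • y') w' * (tv (m • y) w)⁻¹) *
        (tv ((k : R) • a) w)⁻¹ =
        tv (m • y' + ((k : R) * (m * (w ⬝ᵥ y'))) • a) w' * (tv (m • y) w)⁻¹ := fun k => by
      have e1 := tv_conj_tv (a := (k : R) • a) (b := w) (y := m • y') (w := w') (by simp [hwa])
        (by simp [hyw'])
      have e2 := tv_conj_tv (a := (k : R) • a) (b := w) (y := m • y) (w := w) (by simp [hwa])
        (by simp [hyw])
      rw [show w' ⬝ᵥ ((k : R) • a) = 0 by rw [dotProduct_smul, hwa', smul_zero], zero_smul,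
        sub_zero, dotProduct_smul, smul_smul, smul_eq_mul, mul_comm _ (k : R)] at e1
      rw [show w ⬝ᵥ ((k : R) • a) = 0 by rw [dotProduct_smul, hwa, smul_zero], zero_smul,
        sub_zero, dotProduct_smul, hyw, smul_zero, zero_smul, add_zero] at e2
      rw [← e1]
      nth_rewrite 2 [← e2]
      group
    refine h.eq_zero_of_conj _ _ (fun k : ℕ => isConj_iff.2 ⟨_, hconj k⟩) fun k l hkl => ?_
    have hk : ∀ c : R, w' ⬝ᵥ (m • y' + c • a) = 0 := fun c => by simp [hyw', hwa']
    simp only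
    rw [_root_.mul_inv_rev, mul_assoc, ← mul_assoc _ _ (tv (m • y) w)⁻¹, ← mul_assoc, inv_inv, h.2.1,
      tv_inv (hk _), ← tv_add_left (by rw [dotProduct_neg, hk, neg_zero]) (hk _)]
    have : -(m • y' + ((k : R) * (m * (w ⬝ᵥ y'))) • a) + (m • y' + ((l : R) * (m * (w ⬝ᵥ y'))) • a)
        = (((l : R) - k) * (m * (w ⬝ᵥ y'))) • a := by module
    rw [this]
    refine h.tv_eq_zero h3 h0 (by simp [hwa']) (smul_ne_zero ?_ ha) hw'0
    exact mul_ne_zero (sub_ne_zero.2 fun e => hkl (Nat.cast_injective e).symm) (mul_ne_zero hm hgw)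
  refine h.eq_zero_of_conj g (fun k : ℕ => tv ((k : R) • y) w * g * (tv ((k : R) • y) w)⁻¹)
    (fun k => isConj_iff.2 ⟨_, rfl⟩) fun k l hkl => ?_
  have hm : (l : R) - k ≠ 0 := sub_ne_zero.2 fun e => hkl (Nat.cast_injective e).symm
  have e3 : tv ((l : R) • y) w = tv ((k : R) • y) w * tv (((l : R) - k) • y) w := by
    rw [← tv_add_left (by simp [hyw]) (by simp [hyw])]
    congr 1; module
  have e4 : g⁻¹ * tv (((l : R) - k) • y) w * g = tv (((l : R) - k) • y') w' := by
    have := conj_tv g⁻¹ (((l : R) - k) • y) w (by simp [hyw])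
    rw [inv_inv] at this
    rw [this, mulVec_smul]
  simp only
  have e5 : (tv ((k : R) • y) w * g * (tv ((k : R) • y) w)⁻¹)⁻¹ *
      (tv ((l : R) • y) w * g * (tv ((l : R) • y) w)⁻¹) = tv ((k : R) • y) w *
      (g⁻¹ * tv (((l : R) - k) • y) w * g * (tv (((l : R) - k) • y) w)⁻¹) *
      (tv ((k : R) • y) w)⁻¹ := by
    rw [e3]; group
  rw [e5, h.2.1, e4, hcomm _ hm]

end Vanishing

/-! ### Stable range modulo nonzero elements and generation -/

section StableRange

/-- If the ring `R / c` is finite and `a`, `b` generate the unit ideal modulo `c`, then some `a + t b`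
is a unit modulo `c`. -/
theorem exists_isCoprime_add {R : Type*} [CommRing R] {c : R} (hc : Finite (R ⧸ Ideal.span {c}))
    {a b p q r : R} (h : p * a + q * b + r * c = 1) : ∃ t, IsCoprime (a + t * b) c := by
  obtain ⟨k, hk0, hk⟩ : ∃ k, 0 < k ∧ c ∣ a ^ k * (1 - a ^ k) := by
    obtain ⟨i, j, hij, he⟩ := Finite.exists_ne_map_eq_of_infinite
      (fun m : ℕ => (Ideal.Quotient.mk (Ideal.span {c}) a) ^ m)
    wlog hlt : i < j generalizing i j
    · exact this j i hij.symm he.symm (lt_of_le_of_ne (not_lt.1 hlt) hij.symm)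
    obtain ⟨d, rfl⟩ := Nat.exists_eq_add_of_lt hlt
    have hper : ∀ l, i ≤ l → ∀ m, (Ideal.Quotient.mk (Ideal.span {c}) a) ^ (l + (d + 1) * m) =
        (Ideal.Quotient.mk (Ideal.span {c}) a) ^ l := by
      intro l hl m
      induction m with
      | zero => simp
      | succ m ih =>
        obtain ⟨e, rfl⟩ := Nat.exists_eq_add_of_le hl
        rw [← ih, show i + e + (d + 1) * (m + 1) = (i + d + 1) + (e + (d + 1) * m) by ring, pow_add,
          ← he, ← pow_add]
        congr 1; ring
    refine ⟨(d + 1) * (i + 1), by positivity, ?_⟩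
    rw [← Ideal.mem_span_singleton, ← Ideal.Quotient.eq_zero_iff_mem]
    have := hper ((d + 1) * (i + 1)) (by nlinarith) (i + 1)
    rw [map_mul, map_sub, map_one, map_pow, mul_sub, mul_one, ← pow_add, this, sub_self]
  refine ⟨1 - a ^ k, ?_⟩
  rw [← Ideal.isCoprime_span_singleton_iff, Ideal.isCoprime_iff_sup_eq]
  by_contra hne
  obtain ⟨M, hM, hle⟩ := Ideal.exists_le_maximal _ hne
  have h1 : a + (1 - a ^ k) * b ∈ M := hle (Ideal.mem_sup_left (Ideal.mem_span_singleton_self _))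
  have h2 : c ∈ M := hle (Ideal.mem_sup_right (Ideal.mem_span_singleton_self _))
  have hone : (1 : R) ∉ M := fun h => hM.ne_top ((Ideal.eq_top_iff_one _).2 h)
  rcases hM.isPrime.mem_or_mem (Ideal.mem_of_dvd M hk h2) with h3 | h3
  · have ha : a ∈ M := hM.isPrime.mem_of_pow_mem _ h3
    have hb : b ∈ M := by
      have : b = (a + (1 - a ^ k) * b) - a + a ^ k * b := by ring
      rw [this]
      exact M.add_mem (M.sub_mem h1 ha) (M.mul_mem_right _ h3)
    exact hone (h ▸ M.add_mem (M.add_mem (M.mul_mem_left _ ha) (M.mul_mem_left _ hb))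
      (M.mul_mem_left _ h2))
  · have ha : a ∈ M := by
      have : a = (a + (1 - a ^ k) * b) - (1 - a ^ k) * b := by ring
      rw [this]
      exact M.sub_mem h1 (M.mul_mem_right _ h3)
    refine hone ?_
    have : (1 : R) = (1 - a ^ k) + a ^ k := by ring
    rw [this]
    exact M.add_mem h3 (M.pow_mem_of_mem ha _ hk0)

end StableRange

namespace Matrix.SpecialLinearGroup

variable {ι R : Type*} [Fintype ι] [DecidableEq ι] [CommRing R]

/-- The principal congruence subgroup of level `x`. -/
def cong (x : R) : Subgroup (SpecialLinearGroup ι R) :=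
  (map (n := ι) (Ideal.Quotient.mk (Ideal.span {x}))).ker

theorem mem_cong {x : R} {g : SpecialLinearGroup ι R} :
    g ∈ cong x ↔ ∀ i j, x ∣ g i j - (1 : Matrix ι ι R) i j := by
  rw [cong, MonoidHom.mem_ker, SpecialLinearGroup.ext_iff]
  refine forall_congr' fun i => forall_congr' fun j => ?_
  rw [← Ideal.mem_span_singleton, ← Ideal.Quotient.eq_zero_iff_mem, map_sub, sub_eq_zero]
  by_cases hij : i = j
  · subst hij; simp [map_apply_coe]
  · simp [map_apply_coe, hij]

instance (x : R) : (cong x : Subgroup (SpecialLinearGroup ι R)).Normal := MonoidHom.normal_ker _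

theorem tv_mem_cong {x : R} {y w : ι → R} (h : w ⬝ᵥ y = 0) (hx : ∀ i j, x ∣ y i * w j) :
    tv y w ∈ cong x := by
  rw [mem_cong]
  intro i j
  simpa [coe_tv h, vecMulVec_apply] using hx i j

/-- The subgroup of matrices agreeing with the identity in all rows and columns indexed by `S`. -/
def std (S : Set ι) : Subgroup (SpecialLinearGroup ι R) where
  carrier := {g | ∀ s ∈ S, (g : Matrix ι ι R) *ᵥ Pi.single s 1 = Pi.single s 1 ∧
    Pi.single s 1 ᵥ* (g : Matrix ι ι R) = Pi.single s 1}
  one_mem' := fun s _ => ⟨by rw [coe_one, one_mulVec], by rw [coe_one, vecMul_one]⟩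
  mul_mem' := fun {a b} ha hb s hs => ⟨by rw [coe_mul, ← mulVec_mulVec, (hb s hs).1, (ha s hs).1],
    by rw [coe_mul, ← vecMul_vecMul, (ha s hs).2, (hb s hs).2]⟩
  inv_mem' := fun {a} ha s hs => ⟨by
    nth_rewrite 1 [← (ha s hs).1]
    rw [mulVec_mulVec, coe_inv_mul_coe, one_mulVec], by
    nth_rewrite 1 [← (ha s hs).2]
    rw [vecMul_vecMul, coe_mul_coe_inv, vecMul_one]⟩

theorem mem_std {S : Set ι} {g : SpecialLinearGroup ι R} :
    g ∈ std S ↔ ∀ s ∈ S, (g : Matrix ι ι R) *ᵥ Pi.single s 1 = Pi.single s 1 ∧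
    Pi.single s 1 ᵥ* (g : Matrix ι ι R) = Pi.single s 1 := Iff.rfl

theorem tv_mem_std {S : Set ι} {y w : ι → R} (h : w ⬝ᵥ y = 0) (hy : ∀ s ∈ S, y s = 0)
    (hw : ∀ s ∈ S, w s = 0) : tv y w ∈ std S := by
  intro s hs
  rw [tv_mulVec h, vecMul_tv h]
  simp [hy s hs, hw s hs]

theorem el_mem_std {S : Set ι} {i j : ι} (hij : i ≠ j) (hi : i ∉ S) (hj : j ∉ S) (r : R) :
    el i j r ∈ std S :=
  tv_mem_std (el_ok hij r) (fun s hs => by simp [show i ≠ s from fun e => hi (e ▸ hs)])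
    (fun s hs => by simp [show j ≠ s from fun e => hj (e ▸ hs)])

theorem tv_single_left_mem {Hs : Subgroup (SpecialLinearGroup ι R)} {x : R}
    (hE : ∀ i j z, i ≠ j → el i j (x * z) ∈ Hs) (i : ι) (w : ι → R) (hi : w i = 0)
    (hw : ∀ j, x ∣ w j) : tv (Pi.single i 1) w ∈ Hs := by
  have key : ∀ T : Finset ι, tv (Pi.single i 1) (∑ j ∈ T, Pi.single j (w j)) ∈ Hs ∧
      (∑ j ∈ T, Pi.single j (w j)) ⬝ᵥ Pi.single i 1 = 0 := by
    intro T
    induction T using Finset.induction_on with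
    | empty => simpa [tv_zero_right] using Hs.one_mem
    | insert j T hj ih =>
      have h1 : (Pi.single j (w j) : ι → R) ⬝ᵥ Pi.single i 1 = 0 := by
        by_cases hij : j = i
        · subst hij; simp [hi]
        · simp [hij]
      rw [Finset.sum_insert hj]
      refine ⟨?_, by rw [add_dotProduct, h1, ih.2, add_zero]⟩
      rw [tv_add_right h1 ih.2]
      refine Hs.mul_mem ?_ ih.1
      by_cases hij : i = j
      · subst hij; rw [hi, Pi.single_zero, tv_zero_right]; exact Hs.one_mem
      · obtain ⟨z, hz⟩ := hw j
        rw [el_eq hij, mul_one, hz]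
        exact hE _ _ _ hij
  have := (key Finset.univ).1
  rwa [Finset.univ_sum_single] at this

theorem tv_single_right_mem {Hs : Subgroup (SpecialLinearGroup ι R)} {x : R}
    (hE : ∀ i j z, i ≠ j → el i j (x * z) ∈ Hs) (i : ι) (y : ι → R) (hi : y i = 0)
    (hy : ∀ j, x ∣ y j) : tv y (Pi.single i 1) ∈ Hs := by
  have key : ∀ T : Finset ι, tv (∑ j ∈ T, Pi.single j (y j)) (Pi.single i 1) ∈ Hs ∧
      Pi.single i 1 ⬝ᵥ (∑ j ∈ T, Pi.single j (y j)) = 0 := by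
    intro T
    induction T using Finset.induction_on with
    | empty => simpa [tv_zero_left] using Hs.one_mem
    | insert j T hj ih =>
      have h1 : (Pi.single i 1 : ι → R) ⬝ᵥ Pi.single j (y j) = 0 := by
        by_cases hij : i = j
        · subst hij; simp [hi]
        · simp [hij]
      rw [Finset.sum_insert hj]
      refine ⟨?_, by rw [dotProduct_add, h1, ih.2, add_zero]⟩
      rw [tv_add_left h1 ih.2]
      refine Hs.mul_mem ?_ ih.1
      by_cases hij : j = i
      · subst hij; rw [hi, Pi.single_zero, tv_zero_left]; exact Hs.one_mem
      · obtain ⟨z, hz⟩ := hy j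
        rw [el_eq hij, one_mul, hz]
        exact hE _ _ _ hij
  have := (key Finset.univ).1
  rwa [Finset.univ_sum_single] at this

theorem mulVec_single_eq (g : SpecialLinearGroup ι R) (k l : ι) :
    ((g : Matrix ι ι R) *ᵥ Pi.single k 1) l = g l k := by simp

section Induction

variable {x : R} {Hs : Subgroup (SpecialLinearGroup ι R)}
  (hE : ∀ i j z, i ≠ j → el i j (x * z) ∈ Hs)

include hE

/-- A matrix of the congruence subgroup with a standard column is moved to one which also has the
corresponding row standard. -/
theorem mem_of_col {S : Set ι} {k : ι} (hk : k ∉ S)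
    (hrec : ∀ g : SpecialLinearGroup ι R, g ∈ cong x → g ∈ std (insert k S) → g ∈ Hs)
    {g : SpecialLinearGroup ι R} (hg : g ∈ cong x) (hS : g ∈ std S)
    (hcol : (g : Matrix ι ι R) *ᵥ Pi.single k 1 = Pi.single k 1) : g ∈ Hs := by
  set w : ι → R := fun l => if l = k then 0 else - g k l with hw
  have hwk : w ⬝ᵥ Pi.single k 1 = 0 := by simp [hw]
  have hwx : ∀ j, x ∣ w j := by
    intro j
    by_cases hj : j = k
    · simp [hw, hj]
    · have := mem_cong.1 hg k j
      rw [Matrix.one_apply_ne (Ne.symm hj), sub_zero] at this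
      simpa [hw, hj] using this
  have hmem := tv_single_left_mem hE k w (by simp [hw]) hwx
  have hgk : g k k = 1 := by rw [← mulVec_single_eq, hcol]; simp
  have hws : ∀ s ∈ S, w s = 0 := by
    intro s hs
    have h1 : s ≠ k := fun e => hk (e ▸ hs)
    simp only [hw, h1, if_false, neg_eq_zero]
    rw [← mulVec_single_eq, (hS s hs).1]
    simp [h1]
  rw [← Subgroup.mul_mem_cancel_right Hs hmem]
  refine hrec _ ((cong x).mul_mem hg (tv_mem_cong hwk fun i j => (hwx j).mul_left _)) ?_
  have hstd := (std S).mul_mem hS (tv_mem_std hwk (fun s hs => by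
    simp [show k ≠ s from fun e => hk (e ▸ hs)]) hws)
  rintro s (rfl | hs)
  · constructor
    · rw [coe_mul, ← mulVec_mulVec, tv_mulVec hwk, hwk, zero_smul, add_zero, hcol]
    · rw [coe_mul, ← vecMul_vecMul, vecMul_tv hwk, ← dotProduct_mulVec, hcol]
      ext l
      by_cases hl : l = s
      · subst hl; simp [hw, hgk]
      · simp [hw, hl]
  · exact hstd s hs

variable (hnorm : ∀ i j r g, i ≠ j → el i j r * g * (el i j r)⁻¹ ∈ Hs → g ∈ Hs)
  (hfin : ∀ c : R, c ≠ 0 → Finite (R ⧸ Ideal.span {c})) [Nontrivial R]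

include hnorm hfin

/-- One more row and column: a matrix of the congruence subgroup which is standard in the rows and columns
indexed by `S` is reduced, by multiplication with elementary matrices of level `x` and conjugation
with elementary matrices, to one which is also standard in the row and column `k`. Stable range
makes an entry of the column `k` a unit modulo another one. -/
theorem mem_of_insert {S : Set ι} {k l1 l2 : ι} (hk : k ∉ S) (hl1 : l1 ∉ S) (hl2 : l2 ∉ S)
    (h1 : k ≠ l1) (h2 : k ≠ l2) (h12 : l1 ≠ l2)
    (hrec : ∀ g : SpecialLinearGroup ι R, g ∈ cong x → g ∈ std (insert k S) → g ∈ Hs)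
    (g : SpecialLinearGroup ι R) (hg : g ∈ cong x) (hS : g ∈ std S) : g ∈ Hs := by
  have hcol0 : ∀ g : SpecialLinearGroup ι R, g ∈ cong x → ∀ l, l ≠ k → x ∣ g l k := by
    intro g hg l hl
    have := mem_cong.1 hg l k
    rwa [Matrix.one_apply_ne hl, sub_zero] at this
  have hcol1 : ∀ g : SpecialLinearGroup ι R, g ∈ cong x → x ∣ g k k - 1 := by
    intro g hg
    have := mem_cong.1 hg k k
    rwa [Matrix.one_apply_eq] at this
  have hcolS : ∀ g : SpecialLinearGroup ι R, g ∈ std S → ∀ s ∈ S, g s k = 0 := by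
    intro g hg s hs
    have := congrFun (hg s hs).2 k
    simpa [show k ≠ s from fun e => hk (e ▸ hs)] using this
  have hSne : ∀ {i}, i ∉ S → ∀ s ∈ S, i ≠ s := fun hi s hs e => hi (e ▸ hs)
  -- multiplying by a transvection changing a single entry of the column `k`
  have hrow : ∀ (g : SpecialLinearGroup ι R) (i : ι) (w : ι → R), i ∉ S → w i = 0 →
      (∀ s ∈ S, w s = 0) → (∀ j, x ∣ w j) → g ∈ cong x → g ∈ std S →
      (∀ g' : SpecialLinearGroup ι R, g' ∈ cong x → g' ∈ std S → g' i k = g i k + ∑ j, w j * g j k →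
        (∀ l, l ≠ i → g' l k = g l k) → g' ∈ Hs) → g ∈ Hs := by
    intro g i w hi hwi hws hwx hg hS hyp
    have hwd : w ⬝ᵥ Pi.single i 1 = 0 := by simp [hwi]
    rw [← Subgroup.mul_mem_cancel_left Hs (tv_single_left_mem hE i w hwi hwx)]
    have hc : ∀ l, (tv (Pi.single i 1) w * g) l k = g l k + (∑ j, w j * g j k) *
        (Pi.single i 1 : ι → R) l := by
      intro l
      rw [← mulVec_single_eq, coe_mul, ← mulVec_mulVec, tv_mulVec hwd]
      simp [dotProduct]
    refine hyp _ ((cong x).mul_mem (tv_mem_cong hwd fun a j => (hwx j).mul_left _) hg)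
      ((std S).mul_mem (tv_mem_std hwd (fun s hs => by simp [hSne hi s hs]) hws) hS) ?_ ?_
    · rw [hc]; simp
    · intro l hl; rw [hc]; simp [hl]
  -- diagonal entry one
  have s1 : ∀ g : SpecialLinearGroup ι R, g ∈ cong x → g ∈ std S → g k k = 1 → g ∈ Hs := by
    intro g hg hS hkk
    set y : ι → R := fun l => if l = k then 0 else - g l k with hy
    have hyx : ∀ j, x ∣ y j := by
      intro j
      by_cases hj : j = k
      · simp [hy, hj]
      · simpa [hy, hj] using hcol0 g hg j hj
    have hyd : Pi.single k 1 ⬝ᵥ y = 0 := by simp [hy]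
    rw [← Subgroup.mul_mem_cancel_left Hs (tv_single_right_mem hE k y (by simp [hy]) hyx)]
    refine mem_of_col hE hk hrec ((cong x).mul_mem (tv_mem_cong hyd fun i j => (hyx i).mul_right _) hg)
      ((std S).mul_mem (tv_mem_std hyd (fun s hs => ?_) fun s hs => by simp [hSne hk s hs]) hS) ?_
    · simp [hy, (hSne hk s hs).symm, hcolS g hS s hs]
    · rw [coe_mul, ← mulVec_mulVec, tv_mulVec hyd]
      ext l
      by_cases hl : l = k
      · subst hl; simp [hy, hkk]
      · simp [hy, hl, hkk]
  -- diagonal entry complementary to another one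
  have s2 : ∀ g : SpecialLinearGroup ι R, g ∈ cong x → g ∈ std S → g l2 k = 1 - g k k → g ∈ Hs := by
    intro g hg hS hgk
    refine hnorm k l2 1 g h2 (s1 _ ((inferInstance : (cong x).Normal).conj_mem g hg _)
      ((std S).mul_mem ((std S).mul_mem (el_mem_std h2 hk hl2 1) hS)
        ((std S).inv_mem (el_mem_std h2 hk hl2 1))) ?_)
    rw [el_inv h2, ← mulVec_single_eq, coe_mul, coe_mul, ← mulVec_mulVec, ← mulVec_mulVec, el, el,
      tv_mulVec (el_ok h2 _), tv_mulVec (el_ok h2 _)]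
    simp [h2, hgk]
  have s3 : ∀ g : SpecialLinearGroup ι R, g ∈ cong x → g ∈ std S → IsCoprime (g l1 k) (g k k) →
      g ∈ Hs := by
    rintro g hg hS ⟨c', c, hc⟩
    have hd : x ∣ 1 - g k k - g l2 k :=
      dvd_sub (by simpa using (hcol1 g hg).neg_right) (hcol0 g hg l2 h2.symm)
    refine hrow g l2 ((1 - g k k - g l2 k) • (Pi.single k c + Pi.single l1 c')) hl2
      (by simp [h2.symm, h12.symm])
      (fun s hs => by simp [(hSne hk s hs).symm, (hSne hl1 s hs).symm])
      (fun j => by simpa using hd.mul_right _) hg hS fun g' hg' hS' e1 e2 => s2 g' hg' hS' ?_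
    rw [e1, e2 k h2]
    have : ∑ j, ((1 - g k k - g l2 k) • (Pi.single k c + Pi.single l1 c') : ι → R) j * g j k =
        (1 - g k k - g l2 k) * (c' * g l1 k + c * g k k) := by
      change ((1 - g k k - g l2 k) • (Pi.single k c + Pi.single l1 c') : ι → R) ⬝ᵥ (fun j => g j k) = _
      rw [smul_dotProduct, add_dotProduct, single_dotProduct, single_dotProduct, smul_eq_mul]
      ring
    rw [this, hc]
    ring
  have s4 : ∀ g : SpecialLinearGroup ι R, g ∈ cong x → g ∈ std S → g k k ≠ 0 → g ∈ Hs := by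
    intro g hg hS hgk
    classical
    obtain ⟨z, hz⟩ := hcol1 g hg
    have hu : ∑ j, (↑g⁻¹ : Matrix ι ι R) k j * g j k = 1 := by
      have := congrFun (congrFun (coe_inv_mul_coe g) k) k
      rwa [Matrix.mul_apply, Matrix.one_apply_eq] at this
    set u : ι → R := fun j => (↑g⁻¹ : Matrix ι ι R) k j with hu'
    set w : ι → R := fun j => if j = k ∨ j = l1 ∨ j ∈ S then 0 else u j with hw
    set σ := ∑ j, w j * g j k with hσ
    have hsum : u k * g k k + u l1 * g l1 k + σ = 1 := by
      refine Eq.trans ?_ hu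
      rw [← Finset.add_sum_erase _ _ (Finset.mem_univ k),
        ← Finset.add_sum_erase _ _ (Finset.mem_erase.2 ⟨h1.symm, Finset.mem_univ l1⟩), hσ,
        ← Finset.add_sum_erase _ (fun j => w j * g j k) (Finset.mem_univ k),
        ← Finset.add_sum_erase _ (fun j => w j * g j k)
          (Finset.mem_erase.2 ⟨h1.symm, Finset.mem_univ l1⟩)]
      have e : ∑ j ∈ (Finset.univ.erase k).erase l1, w j * g j k =
          ∑ j ∈ (Finset.univ.erase k).erase l1, u j * g j k := by
        refine Finset.sum_congr rfl fun j hj => ?_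
        simp only [Finset.mem_erase, Finset.mem_univ, and_true] at hj
        by_cases hjS : j ∈ S
        · rw [hcolS g hS j hjS, mul_zero, mul_zero]
        · simp [hw, hj.1, hj.2, hjS]
      rw [e]
      simp [hw, hu']
      ring
    -- `x` is invertible modulo the entry `g k k`, which is congruent to one modulo `x`
    obtain ⟨t, ht⟩ := exists_isCoprime_add (hfin _ hgk) (a := g l1 k) (b := x * σ) (p := u l1)
      (q := -z) (r := u k + σ) (by linear_combination hsum + σ * hz)
    refine hrow g l1 ((x * t) • w) hl1 (by simp [hw]) (fun s hs => by simp [hw, hs])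
      (fun j => ⟨t * w j, by simp [mul_assoc]⟩) hg hS fun g' hg' hS' e1 e2 => s3 g' hg' hS' ?_
    rw [e1, e2 k h1]
    convert ht using 2
    rw [hσ, Finset.mul_sum, Finset.mul_sum]
    refine Finset.sum_congr rfl fun j _ => ?_
    simp only [Pi.smul_apply, smul_eq_mul]
    ring
  by_cases hgk : g k k = 0
  · -- then `x` is a unit
    obtain ⟨z, hz⟩ := hcol1 g hg
    obtain ⟨l, hl⟩ : ∃ l, g l k ≠ 0 := by
      by_contra hcon
      push Not at hcon
      have : g.1.det = 0 := det_eq_zero_of_column_eq_zero k hcon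
      rw [g.2] at this
      exact one_ne_zero this
    have hlk : l ≠ k := fun e => hl (e ▸ hgk)
    have hlS : l ∉ S := fun hs => hl (hcolS g hS l hs)
    refine hrow g k (Pi.single l 1) hk (by simp [hlk]) (fun s hs => by simp [hSne hlS s hs])
      (fun j => ⟨-z * (Pi.single l 1 : ι → R) j, by
        rw [← mul_assoc, mul_neg, ← hz, hgk]; ring⟩) hg hS fun g' hg' hS' e1 e2 => s4 g' hg' hS' ?_
    rw [e1, hgk, zero_add]
    have : ∑ j, (Pi.single l 1 : ι → R) j * g j k = g l k := by
      change (Pi.single l 1 : ι → R) ⬝ᵥ (fun j => g j k) = _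
      rw [single_dotProduct, one_mul]
    rwa [this]
  · exact s4 g hg hS hgk

/-- A subgroup containing the elementary matrices of level `x` and a `2 × 2` block of the congruence
subgroup of level `x`, and stable under conjugation by all elementary matrices, contains the whole
congruence subgroup. -/
theorem cong_le {i0 i1 : ι} (h01 : i0 ≠ i1)
    (hblk : ∀ g : SpecialLinearGroup ι R, g ∈ cong x → g ∈ std {s | s ≠ i0 ∧ s ≠ i1} → g ∈ Hs)
    (g : SpecialLinearGroup ι R) (hg : g ∈ cong x) : g ∈ Hs := by
  have key : ∀ T : Finset ι, i0 ∉ T → i1 ∉ T → ∀ g : SpecialLinearGroup ι R, g ∈ cong x →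
      g ∈ std {s | s ≠ i0 ∧ s ≠ i1 ∧ s ∉ T} → g ∈ Hs := by
    intro T
    induction T using Finset.induction_on with
    | empty => intro _ _ g hg h; exact hblk g hg (by simpa using h)
    | insert k T hkT ih =>
      intro h0 h1 g hg h
      simp only [Finset.mem_insert, not_or] at h0 h1
      refine mem_of_insert hE hnorm hfin (S := {s | s ≠ i0 ∧ s ≠ i1 ∧ s ∉ insert k T}) (k := k)
        (l1 := i0) (l2 := i1) (by simp) (by simp) (by simp) (Ne.symm h0.1) (Ne.symm h1.1) h01
        (fun g hg hs => ih h0.2 h1.2 g hg ?_) g hg h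
      refine fun s hs' => hs s ?_
      by_cases hsk : s = k
      · exact Or.inl hsk
      · exact Or.inr ⟨hs'.1, hs'.2.1, by simp [hsk, hs'.2.2]⟩
  exact key (Finset.univ.filter fun s => s ≠ i0 ∧ s ≠ i1) (by simp) (by simp) g hg
    (fun s hs => by simp at hs; exact absurd hs.2.2 (by simp [hs.1, hs.2.1]))

end Induction

theorem cong_one : (cong (1 : R) : Subgroup (SpecialLinearGroup ι R)) = ⊤ := by
  ext g
  simp [mem_cong]

end Matrix.SpecialLinearGroup

/-! ### The dichotomy for extremal characters -/

namespace Matrix.SpecialLinearGroup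

variable {ι R : Type*} [Fintype ι] [DecidableEq ι] [CommRing R]

theorem tv_commute {y w y' w' : ι → R} (h : w ⬝ᵥ y = 0) (h' : w' ⬝ᵥ y' = 0) (h1 : w ⬝ᵥ y' = 0)
    (h2 : w' ⬝ᵥ y = 0) : Commute (tv y w) (tv y' w') := by
  have := tv_conj_tv h h'
  rw [h1, h2, zero_smul, zero_smul, add_zero, sub_zero, mul_inv_eq_iff_eq_mul] at this
  exact this

theorem el_commute_row {i j k : ι} (hij : i ≠ j) (hik : i ≠ k) (y z : R) :
    Commute (el i j y) (el i k z) :=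
  tv_commute (el_ok hij _) (el_ok hik _) (el_ok hij _) (el_ok hik _)

theorem el_commute_col {i j k : ι} (hij : i ≠ j) (hkj : k ≠ j) (y z : R) :
    Commute (el i j y) (el k j z) :=
  tv_commute (el_ok hij _) (el_ok hkj _) (el_ok hkj _) (el_ok hij _)

theorem el_conj_row {i j k : ι} (hij : i ≠ j) (hik : i ≠ k) (hjk : j ≠ k) (y z : R) :
    el j k (-y) * el i j z * (el j k (-y))⁻¹ = el i j z * el i k (z * y) := by
  have := tv_conj_tv (a := Pi.single j (-y)) (b := Pi.single k 1) (y := Pi.single i z)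
    (w := Pi.single j 1) (el_ok hjk _) (el_ok hij _)
  rw [show (Pi.single k 1 : ι → R) ⬝ᵥ Pi.single i z = 0 from el_ok hik _, zero_smul, add_zero,
    show (Pi.single j 1 : ι → R) - ((Pi.single j 1 : ι → R) ⬝ᵥ Pi.single j (-y)) • Pi.single k 1 =
      Pi.single j 1 + Pi.single k y by
        rw [single_dotProduct, Pi.single_eq_same, one_mul, ← Pi.single_smul, smul_eq_mul, mul_one,
          Pi.single_neg, sub_neg_eq_add],
    tv_add_right (el_ok hij _) (by simp [hik.symm]), el_eq hik] at this
  rw [mul_comm z y]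
  exact this

theorem el_conj_col {i j k : ι} (hij : i ≠ j) (hki : k ≠ i) (hkj : k ≠ j) (y z : R) :
    el k i y * el i j z * (el k i y)⁻¹ = el i j z * el k j (z * y) := by
  have := tv_conj_tv (a := Pi.single k y) (b := Pi.single i 1) (y := Pi.single i z)
    (w := Pi.single j 1) (el_ok hki _) (el_ok hij _)
  rw [show (Pi.single j 1 : ι → R) ⬝ᵥ Pi.single k y = 0 from el_ok hkj _, zero_smul, sub_zero,
    show (Pi.single i z : ι → R) + ((Pi.single i 1 : ι → R) ⬝ᵥ Pi.single i z) • Pi.single k y =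
      Pi.single i z + Pi.single k (z * y) by simp [← Pi.single_smul],
    tv_add_left (el_ok hij _) (el_ok hkj _)] at this
  exact this

theorem std_conj_el {i0 i1 k : ι} (h0 : k ≠ i0) (h1 : k ≠ i1) (h01 : i0 ≠ i1)
    {g : SpecialLinearGroup ι R} (hg : g ∈ std {s | s ≠ i0 ∧ s ≠ i1}) (z : R) :
    g * el i0 k z * g⁻¹ = el i0 k (z * g i0 i0) * el i1 k (z * g i1 i0) := by
  have hgi := (std _).inv_mem hg k ⟨h0, h1⟩
  have hcol : (g : Matrix ι ι R) *ᵥ Pi.single i0 z =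
      Pi.single i0 (z * g i0 i0) + Pi.single i1 (z * g i1 i0) := by
    ext l
    by_cases hl0 : l = i0
    · subst hl0; simp [h01.symm, mul_comm]
    by_cases hl1 : l = i1
    · subst hl1; simp [h01, mul_comm]
    · have := congrFun (hg l ⟨hl0, hl1⟩).2 i0
      simp only [single_one_vecMul, row_apply] at this
      simp [hl0, hl1, this, Ne.symm hl0]
  rw [el, conj_tv _ _ _ (el_ok h0.symm _), hgi.2, hcol, tv_add_left (el_ok h0.symm _)
    (el_ok h1.symm _)]
  rfl

theorem tv_sum_right_mem {Hs : Subgroup (SpecialLinearGroup ι R)} {y : ι → R} {κ : Type*}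
    (T : Finset κ) (w : κ → ι → R) (hw : ∀ i ∈ T, w i ⬝ᵥ y = 0) (hm : ∀ i ∈ T, tv y (w i) ∈ Hs) :
    tv y (∑ i ∈ T, w i) ∈ Hs := by
  classical
  suffices (∑ i ∈ T, w i) ⬝ᵥ y = 0 ∧ tv y (∑ i ∈ T, w i) ∈ Hs from this.2
  induction T using Finset.induction_on with
  | empty => simpa [tv_zero_right] using Hs.one_mem
  | insert j T hj ih =>
    have ih' := ih (fun i hi => hw i (Finset.mem_insert_of_mem hi))
      (fun i hi => hm i (Finset.mem_insert_of_mem hi))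
    have h1 := hw j (Finset.mem_insert_self _ _)
    rw [Finset.sum_insert hj]
    refine ⟨by rw [add_dotProduct, h1, ih'.1, add_zero], ?_⟩
    rw [tv_add_right h1 ih'.1]
    exact Hs.mul_mem (hm j (Finset.mem_insert_self _ _)) ih'.2

section Squared

variable (h3 : 3 ≤ Fintype.card ι) {Hs : Subgroup (SpecialLinearGroup ι R)} {x : R}
  (hE : ∀ i j z, i ≠ j → el i j (x * z) ∈ Hs)
include h3 hE

/-- Transvections along a vector `v` by the functional `v_a e_b - v_b e_a`, which spans the relations of
`v` in the coordinates `a`, `b`, are products of elementary matrices of level `x` once the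
functional is multiplied by `x²`. -/
theorem tv_sq_mem (v : ι → R) (c : R) {a b : ι} (hab : a ≠ b) :
    tv v (Pi.single b (x ^ 2 * c * v a) - Pi.single a (x ^ 2 * c * v b)) ∈ Hs := by
  obtain ⟨k, hka, hkb⟩ := exists_third h3 a b
  set w : R → ι → R := fun c => Pi.single b (c * v a) - Pi.single a (c * v b) with hw
  set v2 : ι → R := Pi.single a (v a) + Pi.single b (v b) with hv2
  set v1 : ι → R := v - v2 with hv1
  have hwv2 : ∀ c, w c ⬝ᵥ v2 = 0 := fun c => by
    simp only [hw, hv2, sub_dotProduct, dotProduct_add, single_dotProduct, Pi.single_eq_same,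
      Pi.single_eq_of_ne hab, Pi.single_eq_of_ne hab.symm]
    ring
  have hv1a : v1 a = 0 := by simp [hv1, hv2, hab]
  have hv1b : v1 b = 0 := by simp [hv1, hv2, hab.symm]
  have hwv1 : ∀ c, w c ⬝ᵥ v1 = 0 := fun c => by simp [hw, sub_dotProduct, hv1a, hv1b]
  have hvv : v = v1 + v2 := by rw [hv1, sub_add_cancel]
  have hwk : ∀ c, w c k = 0 := fun c => by simp [hw, hka, hkb]
  have hv2k : v2 k = 0 := by simp [hv2, hka, hkb]
  have hsingle : ∀ (i : ι) (d : R), v1 i = 0 → tv v1 (Pi.single i (x * d)) ∈ Hs := by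
    intro i d hi
    have : (Pi.single i (x * d) : ι → R) = (x * d) • Pi.single i 1 := by simp [← Pi.single_smul]
    rw [this, ← tv_smul _ _ _ (by simp [hi])]
    exact tv_single_right_mem hE i _ (by simp [hi]) fun j => ⟨d * v1 j, by simp [mul_assoc]⟩
  change tv v (w (x ^ 2 * c)) ∈ Hs
  rw [hvv, tv_add_left (hwv1 _) (hwv2 _)]
  refine Hs.mul_mem ?_ ?_
  · have : w (x ^ 2 * c) = Pi.single b (x * (x * c * v a)) + Pi.single a (x * -(x * c * v b)) := by
      simp only [hw, mul_neg, Pi.single_neg, sub_eq_add_neg]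
      congr 2
      · ring_nf
      · ring_nf
    rw [this, tv_add_right (by simp [hv1b]) (by simp [hv1a])]
    exact Hs.mul_mem (hsingle _ _ hv1b) (hsingle _ _ hv1a)
  -- the remaining transvection is a commutator of level `x` elementary products
  · have hA : tv v2 (Pi.single k x) ∈ Hs := by
      have : (Pi.single k x : ι → R) = x • Pi.single k 1 := by simp [← Pi.single_smul]
      rw [this, ← tv_smul _ _ _ (by simp [hv2k])]
      exact tv_single_right_mem hE k _ (by simp [hv2k]) fun j => ⟨v2 j, by simp⟩
    have hB : tv (Pi.single k 1) (w (x * -c)) ∈ Hs :=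
      tv_single_left_mem hE k _ (hwk _) fun j => by
        simp only [hw, Pi.sub_apply]
        refine dvd_sub ?_ ?_
        · by_cases hj : j = b
          · subst hj; simp [mul_assoc]
          · simp [hj]
        · by_cases hj : j = a
          · subst hj; simp [mul_assoc]
          · simp [hj]
    have key := tv_conj_tv (a := Pi.single k 1) (b := w (x * -c)) (y := v2) (w := Pi.single k x)
      (by simp [hwk]) (by simp [hv2k])
    rw [hwv2, zero_smul, add_zero, show (Pi.single k x : ι → R) -
      ((Pi.single k x : ι → R) ⬝ᵥ Pi.single k 1) • w (x * -c) = Pi.single k x + w (x ^ 2 * c) by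
        ext l
        simp [hw, Pi.single_apply]
        split_ifs <;> ring, tv_add_right (by simp [hv2k]) (hwv2 _)] at key
    rw [← Subgroup.mul_mem_cancel_left Hs hA, ← key]
    exact Hs.mul_mem (Hs.mul_mem hB hA) (Hs.inv_mem hB)

/-- The subgroup generated by the elementary matrices of level `x` contains the normal closure of
the elementary matrices of level `x²`. -/
theorem conj_el_mem (g : SpecialLinearGroup ι R) {i j : ι} (hij : i ≠ j) (z : R) :
    g * el i j (x ^ 2 * z) * g⁻¹ ∈ Hs := by
  rw [el, show (Pi.single i (x ^ 2 * z) : ι → R) = (x ^ 2 * z) • Pi.single i 1 by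
    rw [← Pi.single_smul, smul_eq_mul, mul_one], tv_smul _ _ _ (el_ok hij 1),
    conj_tv _ _ _ (by simp [hij])]
  set v := (g : Matrix ι ι R) *ᵥ Pi.single i 1 with hv
  set u : ι → R := Pi.single i 1 ᵥ* (↑g⁻¹ : Matrix ι ι R) with hu
  set w : ι → R := Pi.single j 1 ᵥ* (↑g⁻¹ : Matrix ι ι R) with hw
  have huv : ∑ a, u a * v a = 1 := by
    have := dotProduct_conj g (Pi.single i 1) (Pi.single i 1)
    rw [single_dotProduct, Pi.single_eq_same, one_mul] at this
    exact this
  have hwv : ∑ a, w a * v a = 0 := by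
    have := dotProduct_conj g (Pi.single j 1) (Pi.single i 1)
    rw [el_ok hij] at this
    exact this
  have hsum : ((x ^ 2 * z) • Pi.single j 1) ᵥ* (↑g⁻¹ : Matrix ι ι R) = ∑ p : ι × ι,
      (Pi.single p.2 (x ^ 2 * (z * u p.1 * w p.2) * v p.1) -
        Pi.single p.1 (x ^ 2 * (z * u p.1 * w p.2) * v p.2) : ι → R) := by
    rw [smul_vecMul, ← hw]
    ext l
    have e1 : ∑ a, ∑ b, (Pi.single b (x ^ 2 * (z * u a * w b) * v a) : ι → R) l =
        ∑ a, x ^ 2 * z * w l * (u a * v a) := by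
      refine Finset.sum_congr rfl fun a _ => ?_
      rw [Finset.sum_eq_single l (fun b _ hb => by simp [hb.symm]) (by simp), Pi.single_eq_same]
      ring
    have e2 : ∑ a, ∑ b, (Pi.single a (x ^ 2 * (z * u a * w b) * v b) : ι → R) l =
        ∑ b, x ^ 2 * z * u l * (w b * v b) := by
      rw [Finset.sum_eq_single l (fun a _ ha => by simp [ha.symm]) (by simp)]
      refine Finset.sum_congr rfl fun a _ => ?_
      rw [Pi.single_eq_same]
      ring
    rw [Finset.sum_apply]
    simp only [Pi.sub_apply, Finset.sum_sub_distrib, Fintype.sum_prod_type]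
    rw [e1, e2, ← Finset.mul_sum, ← Finset.mul_sum, huv, hwv]
    simp
  rw [hsum]
  refine tv_sum_right_mem _ _ (fun p _ => ?_) fun p _ => ?_
  · simp only [sub_dotProduct, single_dotProduct]; ring
  · by_cases hp : p.1 = p.2
    · rw [hp, sub_self, tv_zero_right]; exact Hs.one_mem
    · exact tv_sq_mem h3 hE v _ hp

end Squared

end Matrix.SpecialLinearGroup

section Dichotomy

open Matrix Matrix.SpecialLinearGroup

variable {ι R : Type*} [Fintype ι] [DecidableEq ι] [CommRing R] [IsDomain R] [CharZero R]
  {φ : SpecialLinearGroup ι R → ℂ}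

/-- An extremal character either vanishes on all nontrivial elementary matrices, or its kernel
contains all elementary matrices of some nonzero level. -/
theorem IsExtremalCharacter.dichotomy (h3 : 3 ≤ Fintype.card ι)
    (hfin : ∀ c : R, c ≠ 0 → Finite (R ⧸ Ideal.span {c})) (hφ : IsExtremalCharacter φ) :
    (∀ (i j : ι) (r : R), i ≠ j → r ≠ 0 → φ (el i j r) = 0) ∨
      ∃ x : R, x ≠ 0 ∧ ∀ (i j : ι) (z : R), i ≠ j → φ (el i j (x * z)) = 1 := by
  have h := hφ.isCharacter
  obtain ⟨H, i1, i2, i3, ⟨D⟩⟩ := h.exists_gns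
  set η : ι → ι → H := fun i j => proj (D.nearFixed (el i j : R → SpecialLinearGroup ι R)) D.ξ
    with hη
  have hrow1 : ∀ i j k, i ≠ j → i ≠ k → j ≠ k →
      η i j ∈ (D.nearFixed (el i k : R → SpecialLinearGroup ι R)).topologicalClosure :=
    fun i j k hij hik hjk => D.proj_nearFixed_mem (fun y z => el_commute_row hij hij y z)
      (fun y z => el_commute_row hij hik y z) (c := fun y => el j k (-y))
      (fun y z => by rw [neg_add, el_add hjk]) (fun y z => el_conj_row hij hik hjk y z)
  have hcol1 : ∀ i j k, i ≠ j → k ≠ i → k ≠ j →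
      η i j ∈ (D.nearFixed (el k j : R → SpecialLinearGroup ι R)).topologicalClosure :=
    fun i j k hij hki hkj => D.proj_nearFixed_mem (fun y z => el_commute_row hij hij y z)
      (fun y z => el_commute_col hij hkj y z) (c := fun y => el k i y)
      (fun y z => by rw [el_add hki]) (fun y z => el_conj_col hij hki hkj y z)
  have hrow : ∀ i j k, i ≠ j → i ≠ k → η i j = η i k := fun i j k hij hik => by
    by_cases hjk : j = k
    · rw [hjk]
    exact GNSData.proj_eq_proj (hrow1 i j k hij hik hjk) (hrow1 i k j hik hij (Ne.symm hjk))
  have hcol : ∀ i j k, i ≠ j → k ≠ j → η i j = η k j := fun i j k hij hkj => by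
    by_cases hik : i = k
    · rw [hik]
    exact GNSData.proj_eq_proj (hcol1 i j k hij (Ne.symm hik) hkj) (hcol1 k j i hkj hik hij)
  have hall : ∀ i j k l, i ≠ j → k ≠ l → η i j = η k l := by
    intro i j k l hij hkl
    by_cases hkj : k = j
    · subst hkj
      obtain ⟨m, hmi, hmk⟩ := exists_third h3 i k
      rw [hrow i k m hij hmi.symm, hcol i m k hmi.symm hmk.symm, hrow k m l hmk.symm hkl]
    · rw [hcol i j k hij hkj, hrow k j l hkj hkl]
  have hcard : 1 < Fintype.card ι := by omega
  obtain ⟨i0, i1', h01⟩ := Fintype.exists_pair_of_one_lt_card hcard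
  -- all these projections are fixed by conjugation
  have hblk : ∀ i j, i ≠ j → ∀ g : SpecialLinearGroup ι R, g ∈ std {s | s ≠ i ∧ s ≠ j} →
      D.α g (η i0 i1') = η i0 i1' := by
    intro i j hij g hg
    obtain ⟨k, hki, hkj⟩ := exists_third h3 i j
    rw [hall i0 i1' i k h01 hki.symm]
    exact GNSData.α_proj_nearFixed (fun y z => el_commute_col hki.symm hkj.symm y z)
      (hcol i k j hki.symm hkj.symm) fun z => std_conj_el hki hkj hij hg z
  let Hs : Subgroup (SpecialLinearGroup ι R) :=
    { carrier := {g | D.α g (η i0 i1') = η i0 i1'}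
      one_mem' := D.α_one _
      mul_mem' := fun {a b} ha hb => by
        change D.α (a * b) _ = _
        rw [D.α_mul, show D.α b _ = _ from hb, show D.α a _ = _ from ha]
      inv_mem' := fun {a} ha => by
        change D.α a⁻¹ _ = _
        have ha' : D.α a (η i0 i1') = η i0 i1' := ha
        nth_rewrite 1 [← ha']
        rw [← D.α_mul, inv_mul_cancel, D.α_one] }
  have hel : ∀ i j (r : R), i ≠ j → el i j r ∈ Hs := fun i j r hij =>
    hblk i j hij _ (el_mem_std hij (by simp) (by simp) r)
  have hHs : ∀ g, D.α g (η i0 i1') = η i0 i1' := fun g =>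
    cong_le (x := 1) (Hs := Hs) (fun i j z hij => hel i j _ hij)
      (fun i j r g hij hg => by
        have := Hs.mul_mem (Hs.mul_mem (Hs.inv_mem (hel i j r hij)) hg) (hel i j r hij)
        simpa [mul_assoc] using this) hfin h01 (fun g _ hg => hblk i0 i1' h01 g hg) g
      (by rw [cong_one]; trivial)
  rcases D.proj_eq_zero_or hφ (D.nearFixed (el i0 i1' : R → SpecialLinearGroup ι R))
    (fun g w hw => GNSData.ρ_mem_nearFixed _ g hw) hHs with hz | hz
  · left
    intro i j r hij hr
    obtain ⟨k, hki, hkj⟩ := exists_third h3 i j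
    refine D.eq_zero_of_isConj (b := el i k) (x := r) ?_ (fun y z => el_add hki.symm y z) hr
      fun z => ?_
    · rw [← hz]; exact hall _ _ _ _ hki.symm h01
    · rw [← (el_commute_row hij hki.symm _ _).eq, ← el_conj_row hij hki.symm hkj.symm z r, h.2.1]
  · right
    obtain ⟨x, hx, hne⟩ := D.exists_fixed h (ι := {p : ι × ι // p.1 ≠ p.2})
      (fun p => (el p.1.1 p.1.2 : R → SpecialLinearGroup ι R))
      (fun p => (hall _ _ _ _ p.2 h01).trans hz)
    let A : Submodule ℂ H :=
      { carrier := {v | ∀ (g : SpecialLinearGroup ι R) (i j : ι) (z : R), i ≠ j →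
          D.π (g * el i j (x ^ 2 * z) * g⁻¹) v = v}
        add_mem' := fun hu hw g i j z hij => by rw [map_add, hu g i j z hij, hw g i j z hij]
        zero_mem' := fun g i j z _ => map_zero _
        smul_mem' := fun c w hw g i j z hij => by rw [map_smul, hw g i j z hij] }
    have hAcl : A.topologicalClosure = A := by
      refine IsClosed.submodule_topologicalClosure_eq ?_
      have : (A : Set H) = ⋂ (g : SpecialLinearGroup ι R) (i : ι) (j : ι) (z : R) (_ : i ≠ j),
          {v | D.π (g * el i j (x ^ 2 * z) * g⁻¹) v = v} := by
        ext v; simp [A]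
      rw [this]
      exact isClosed_iInter fun g => isClosed_iInter fun i => isClosed_iInter fun j =>
        isClosed_iInter fun z => isClosed_iInter fun _ =>
          isClosed_eq (D.π _).continuous continuous_id
    have hle : (⨅ p : {p : ι × ι // p.1 ≠ p.2},
        D.fixedBy (el p.1.1 p.1.2 : R → SpecialLinearGroup ι R) x) ≤ A := by
      intro v hv g i j z hij
      rw [Submodule.mem_iInf] at hv
      let Hv : Subgroup (SpecialLinearGroup ι R) :=
        { carrier := {g | D.π g v = v}
          one_mem' := by change D.π 1 v = v; rw [map_one]; rfl
          mul_mem' := fun {a b} ha hb => by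
            change D.π (a * b) _ = _
            rw [D.π_mul, show D.π b _ = _ from hb, show D.π a _ = _ from ha]
          inv_mem' := fun {a} ha => by
            change D.π a⁻¹ _ = _
            rw [D.π_inv, LinearIsometryEquiv.symm_apply_eq]
            exact ha.symm }
      exact conj_el_mem (Hs := Hv) h3 (fun i j z hij => hv ⟨(i, j), hij⟩ z) g hij z
    have hαA : ∀ g, ∀ w ∈ A, D.α g w ∈ A := by
      intro g w hw g' i j z hij
      rw [D.π_α]
      congr 1
      have := hw (g⁻¹ * g') i j z hij
      convert this using 2
      group
    have hη' : ∀ g, D.π g (D.ρ g (proj A D.ξ)) = proj A D.ξ := by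
      intro g
      have := proj_comm (D.α g) (hαA g) (fun w hw => by
        have e : (D.α g).symm w = D.α g⁻¹ w := by
          rw [LinearIsometryEquiv.symm_apply_eq, ← D.α_mul, mul_inv_cancel, D.α_one]
        rw [e]; exact hαA _ _ hw) D.ξ
      rw [D.α_ξ] at this
      exact this.symm
    rcases D.proj_eq_zero_or hφ A (fun g w hw g' i j z hij => by rw [D.comm, hw g' i j z hij]) hη'
      with h0 | h0
    · exfalso
      apply hne
      set C := ⨅ p : {p : ι × ι // p.1 ≠ p.2},
        D.fixedBy (el p.1.1 p.1.2 : R → SpecialLinearGroup ι R) x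
      have hmem : proj C D.ξ ∈ A.topologicalClosure :=
        Submodule.topologicalClosure_mono hle (proj_mem _ _)
      have h1 := inner_proj_self C D.ξ
      rw [← proj_of_mem hmem, inner_proj, h0, inner_zero_right, proj_of_mem hmem] at h1
      simpa using h1.symm
    · have hξ : D.ξ ∈ A := by
        have := mem_of_proj h0
        rwa [hAcl] at this
      refine ⟨x ^ 2, pow_ne_zero _ hx, fun i j z hij => ?_⟩
      have := hξ 1 i j z hij
      rw [one_mul, inv_one, mul_one] at this
      rw [← D.coeff, this, inner_self_eq_ofReal, D.norm_ξ h.2.2]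
      simp

end Dichotomy

/-! ### Congruence subgroups are central modulo elementary matrices -/

namespace Matrix.SpecialLinearGroup

section Embeddings

variable {R : Type*} [CommRing R]

theorem det_two (A : SpecialLinearGroup (Fin 2) R) : A 0 0 * A 1 1 - A 0 1 * A 1 0 = 1 := by
  rw [← det_fin_two, A.det_coe]

/-- Embedding of `SL₂` in the rows and columns `0, 1` of `SL₃`. -/
def emb12 : SpecialLinearGroup (Fin 2) R →* SpecialLinearGroup (Fin 3) R where
  toFun A := ⟨!![A 0 0, A 0 1, 0; A 1 0, A 1 1, 0; 0, 0, 1], by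
    rw [det_fin_three]; simpa using det_two A⟩
  map_one' := by ext i j; fin_cases i <;> fin_cases j <;> simp
  map_mul' A B := by
    apply Subtype.ext
    change (!![(A * B) 0 0, (A * B) 0 1, 0; (A * B) 1 0, (A * B) 1 1, 0; 0, 0, 1] :
      Matrix (Fin 3) (Fin 3) R) = !![A 0 0, A 0 1, 0; A 1 0, A 1 1, 0; 0, 0, 1] *
        !![B 0 0, B 0 1, 0; B 1 0, B 1 1, 0; 0, 0, 1]
    rw [coe_mul]
    ext i j
    fin_cases i <;> fin_cases j <;> simp [Matrix.mul_apply, Fin.sum_univ_succ]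

/-- Embedding of `SL₂` in the rows and columns `0, 2` of `SL₃`. -/
def emb13 (A : SpecialLinearGroup (Fin 2) R) : SpecialLinearGroup (Fin 3) R :=
  ⟨!![A 0 0, 0, A 0 1; 0, 1, 0; A 1 0, 0, A 1 1], by
    rw [det_fin_three]; simpa using det_two A⟩

theorem coe_emb12 (A : SpecialLinearGroup (Fin 2) R) :
    (emb12 A : Matrix (Fin 3) (Fin 3) R) = !![A 0 0, A 0 1, 0; A 1 0, A 1 1, 0; 0, 0, 1] := rfl

theorem coe_emb13 (A : SpecialLinearGroup (Fin 2) R) :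
    (emb13 A : Matrix (Fin 3) (Fin 3) R) = !![A 0 0, 0, A 0 1; 0, 1, 0; A 1 0, 0, A 1 1] := rfl

theorem el_10 (r : R) :
    ((el 1 0 r : SpecialLinearGroup (Fin 3) R) : Matrix (Fin 3) (Fin 3) R) = !![1, 0, 0; r, 1, 0; 0, 0, 1] := by
  rw [coe_el (by decide)]
  ext i j; fin_cases i <;> fin_cases j <;> simp [Matrix.transvection, Matrix.single_apply]

theorem el_01 (r : R) :
    ((el 0 1 r : SpecialLinearGroup (Fin 3) R) : Matrix (Fin 3) (Fin 3) R) = !![1, r, 0; 0, 1, 0; 0, 0, 1] := by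
  rw [coe_el (by decide)]
  ext i j; fin_cases i <;> fin_cases j <;> simp [Matrix.transvection, Matrix.single_apply]

theorem el_12 (r : R) :
    ((el 1 2 r : SpecialLinearGroup (Fin 3) R) : Matrix (Fin 3) (Fin 3) R) = !![1, 0, 0; 0, 1, r; 0, 0, 1] := by
  rw [coe_el (by decide)]
  ext i j; fin_cases i <;> fin_cases j <;> simp [Matrix.transvection, Matrix.single_apply]

theorem el_21 (r : R) :
    ((el 2 1 r : SpecialLinearGroup (Fin 3) R) : Matrix (Fin 3) (Fin 3) R) = !![1, 0, 0; 0, 1, 0; 0, r, 1] := by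
  rw [coe_el (by decide)]
  ext i j; fin_cases i <;> fin_cases j <;> simp [Matrix.transvection, Matrix.single_apply]

theorem el_20 (r : R) :
    ((el 2 0 r : SpecialLinearGroup (Fin 3) R) : Matrix (Fin 3) (Fin 3) R) = !![1, 0, 0; 0, 1, 0; r, 0, 1] := by
  rw [coe_el (by decide)]
  ext i j; fin_cases i <;> fin_cases j <;> simp [Matrix.transvection, Matrix.single_apply]

theorem coe_el_two_01 (r : R) :
    ((el 0 1 r : SpecialLinearGroup (Fin 2) R) : Matrix (Fin 2) (Fin 2) R) = !![1, r; 0, 1] := by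
  rw [coe_el (by decide)]
  ext i j; fin_cases i <;> fin_cases j <;> simp [Matrix.transvection, Matrix.single_apply]

theorem coe_el_two_10 (r : R) :
    ((el 1 0 r : SpecialLinearGroup (Fin 2) R) : Matrix (Fin 2) (Fin 2) R) = !![1, 0; r, 1] := by
  rw [coe_el (by decide)]
  ext i j; fin_cases i <;> fin_cases j <;> simp [Matrix.transvection, Matrix.single_apply]

theorem emb12_el_01 (r : R) : emb12 (el 0 1 r) = el 0 1 r := by
  apply Subtype.ext
  rw [coe_emb12, el_01, coe_el_two_01]; simp

theorem emb12_el_10 (r : R) : emb12 (el 1 0 r) = el 1 0 r := by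
  apply Subtype.ext
  rw [coe_emb12, el_10, coe_el_two_10]; simp

variable {ι κ : Type*} [Fintype ι] [DecidableEq ι] [Fintype κ] [DecidableEq κ]

/-- Embedding of `SL₃` in the rows and columns picked by `e`. -/
def emb (e : Fin 3 ⊕ κ ≃ ι) : SpecialLinearGroup (Fin 3) R →* SpecialLinearGroup ι R where
  toFun A := ⟨(fromBlocks (A : Matrix (Fin 3) (Fin 3) R) 0 0 1).submatrix e.symm e.symm, by
    rw [det_submatrix_equiv_self, det_fromBlocks_zero₂₁, A.det_coe, det_one, mul_one]⟩
  map_one' := by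
    apply Subtype.ext
    simp
  map_mul' A B := by
    apply Subtype.ext
    change (fromBlocks (A * B : Matrix (Fin 3) (Fin 3) R) 0 0 1).submatrix e.symm e.symm =
      (fromBlocks (A : Matrix (Fin 3) (Fin 3) R) 0 0 1).submatrix e.symm e.symm *
        (fromBlocks (B : Matrix (Fin 3) (Fin 3) R) 0 0 1).submatrix e.symm e.symm
    rw [submatrix_mul_equiv, fromBlocks_multiply]
    simp

theorem coe_emb (e : Fin 3 ⊕ κ ≃ ι) (A : SpecialLinearGroup (Fin 3) R) :
    (emb e A : Matrix ι ι R) =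
      (fromBlocks (A : Matrix (Fin 3) (Fin 3) R) 0 0 1).submatrix e.symm e.symm := rfl

theorem emb_el (e : Fin 3 ⊕ κ ≃ ι) {i j : Fin 3} (hij : i ≠ j) (r : R) :
    emb e (el i j r) = el (e (Sum.inl i)) (e (Sum.inl j)) r := by
  apply Subtype.ext
  rw [coe_emb, coe_el hij, coe_el (by simpa using hij)]
  ext a b
  obtain ⟨a, rfl⟩ := e.surjective a
  obtain ⟨b, rfl⟩ := e.surjective b
  rcases a with a | a <;> rcases b with b | b <;>
    simp [Matrix.transvection, Matrix.single_apply, Matrix.one_apply]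

/-- A matrix standard outside two indices comes from `SL₂`. -/
theorem exists_emb (e : Fin 3 ⊕ κ ≃ ι) {g : SpecialLinearGroup ι R}
    (hg : g ∈ std {s | s ≠ e (Sum.inl 0) ∧ s ≠ e (Sum.inl 1)}) :
    ∃ A : SpecialLinearGroup (Fin 2) R, g = emb e (emb12 A) ∧
      ∀ i j : Fin 2, A i j = g (e (Sum.inl i.castSucc)) (e (Sum.inl j.castSucc)) := by
  set f : Fin 3 → ι := fun i => e (Sum.inl i) with hf
  have hr : ∀ s, s ≠ f 0 → s ≠ f 1 → ∀ l, g s l = (1 : Matrix ι ι R) s l := by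
    intro s h0 h1 l
    have := congrFun (hg s ⟨h0, h1⟩).2 l
    simpa [Matrix.one_apply, Pi.single_apply, eq_comm] using this
  have hc : ∀ s, s ≠ f 0 → s ≠ f 1 → ∀ l, g l s = (1 : Matrix ι ι R) l s := by
    intro s h0 h1 l
    have := congrFun (hg s ⟨h0, h1⟩).1 l
    simpa [Matrix.one_apply, Pi.single_apply, eq_comm] using this
  have hmat : (g : Matrix ι ι R) = (fromBlocks (!![g (f 0) (f 0), g (f 0) (f 1), 0;
      g (f 1) (f 0), g (f 1) (f 1), 0; 0, 0, 1] : Matrix (Fin 3) (Fin 3) R) 0 0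
      (1 : Matrix κ κ R)).submatrix e.symm e.symm := by
    ext a b
    obtain ⟨a, rfl⟩ := e.surjective a
    obtain ⟨b, rfl⟩ := e.surjective b
    rcases a with a | a
    · rcases b with b | b
      · fin_cases a <;> fin_cases b <;>
          simp [hf, hr (e (Sum.inl 2)) (by simp [hf]) (by simp [hf]),
            hc (e (Sum.inl 2)) (by simp [hf]) (by simp [hf])]
      · simp [hc (e (Sum.inr b)) (by simp [hf]) (by simp [hf])]
    · rw [hr (e (Sum.inr a)) (by simp [hf]) (by simp [hf])]
      rcases b with b | b <;> simp [Matrix.one_apply]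
  have hdet : (!![g (f 0) (f 0), g (f 0) (f 1); g (f 1) (f 0), g (f 1) (f 1)] :
      Matrix (Fin 2) (Fin 2) R).det = 1 := by
    have := g.det_coe
    rw [hmat, det_submatrix_equiv_self, det_fromBlocks_zero₂₁, det_one, mul_one, det_fin_three]
      at this
    rw [det_fin_two]
    simpa using this
  refine ⟨⟨_, hdet⟩, ?_, ?_⟩
  · apply Subtype.ext
    rw [coe_emb]
    exact hmat
  · intro i j
    fin_cases i <;> fin_cases j <;> rfl

theorem emb_mem_std (e : Fin 3 ⊕ κ ≃ ι) (A : SpecialLinearGroup (Fin 2) R) :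
    emb e (emb12 A) ∈ std {s | s ≠ e (Sum.inl 0) ∧ s ≠ e (Sum.inl 1)} := by
  rintro s ⟨h0, h1⟩
  have hsum : ∀ i : Fin 3, Sum.inl i = e.symm s → i = 2 := by
    intro i hi
    fin_cases i
    · exact absurd (by rw [← e.symm_apply_eq]; exact hi.symm) h0
    · exact absurd (by rw [← e.symm_apply_eq]; exact hi.symm) h1
    · rfl
  have hent : ∀ l, (emb e (emb12 A)) l s = (1 : Matrix ι ι R) l s ∧
      (emb e (emb12 A)) s l = (1 : Matrix ι ι R) s l := by
    intro l
    obtain ⟨l, rfl⟩ := e.surjective l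
    obtain ⟨s, rfl⟩ := e.surjective s
    rw [coe_emb, coe_emb12]
    rcases s with s | s
    · obtain rfl : s = 2 := hsum s (by simp)
      rcases l with l | l
      · fin_cases l <;> simp [Matrix.one_apply]
      · simp [Matrix.one_apply]
    · rcases l with l | l <;> simp [Matrix.one_apply]
  constructor
  · ext l
    rw [mulVec_single_eq, (hent l).1]
    simp [Matrix.one_apply, Pi.single_apply]
  · ext l
    rw [single_one_vecMul, row_apply, (hent l).2]
    simp [Matrix.one_apply, Pi.single_apply, eq_comm]

end Embeddings

section Mennicke

variable {R : Type*} [CommRing R] {Q : Type*} [Group Q]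

/-- Products of Mennicke symbols with a common second entry: a matrix identity in `SL₃`. -/
theorem emb_mul_emb (A A' B : SpecialLinearGroup (Fin 2) R) (h : A 0 1 = A' 0 1)
    (hB : B 0 0 = A 0 0 * A' 0 0) (hB1 : B 0 1 = A 0 1)
    (hB2 : B 1 0 = A' 1 0 + A' 1 1 * A 1 0 * A' 0 0) (hB3 : B 1 1 = A 1 1 * A' 1 1) :
    el 2 1 (A' 1 1) * emb12 A * emb13 A' * el 1 2 (-A 0 0) * el 2 0 (A 1 0 * A' 0 0) *
      el 2 1 (A 1 1) = el 2 1 1 * el 1 2 (-1) * el 2 1 1 * emb12 B := by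
  apply Subtype.ext
  simp only [coe_mul, el_21, el_12, el_20, coe_emb12, coe_emb13, hB, hB1, hB2, hB3, ← h]
  have e1 := det_two A
  have e2 := det_two A'
  rw [← h] at e2
  ext i j
  fin_cases i <;> fin_cases j <;> simp [Matrix.mul_apply, Fin.sum_univ_succ] <;>
    first
      | ring1
      | linear_combination (-1 : R) * e1
      | linear_combination (A' 0 0 * A' 1 1) * e1 + e2
      | linear_combination (-(A 1 0 * A' 0 0)) * e1
      | linear_combination (-A 1 1) * e1
      | linear_combination (-(A' 1 1 * A 1 0 * A' 0 0)) * e1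
      | linear_combination (-(A' 1 1 * A 1 1)) * e1
      | linear_combination (-A' 1 1) * e1

theorem conj_emb12 (A : SpecialLinearGroup (Fin 2) R) :
    (el 2 1 1 * el 1 2 (-1) * el 2 1 1) * emb12 A = emb13 A * (el 2 1 1 * el 1 2 (-1) * el 2 1 1) := by
  apply Subtype.ext
  simp only [coe_mul, el_21, el_12, coe_emb12, coe_emb13]
  ext i j
  fin_cases i <;> fin_cases j <;> simp [Matrix.mul_apply, Fin.sum_univ_succ]

theorem mem_cong_two {x : R} {A : SpecialLinearGroup (Fin 2) R} :
    A ∈ cong x ↔ x ∣ A 0 0 - 1 ∧ x ∣ A 0 1 ∧ x ∣ A 1 0 ∧ x ∣ A 1 1 - 1 := by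
  rw [mem_cong]
  simp [Fin.forall_fin_two, and_assoc]

variable {p : SpecialLinearGroup (Fin 3) R →* Q} {x : R}
  (hp : ∀ (i j : Fin 3) (z : R), i ≠ j → p (el i j (x * z)) = 1)
include hp

theorem map_el_congr {i j : Fin 3} (hij : i ≠ j) {r s : R} (h : x ∣ r - s) :
    p (el i j r) = p (el i j s) := by
  obtain ⟨z, hz⟩ := h
  rw [show r = x * z + s by rw [← hz]; ring, el_add hij, map_mul, hp _ _ _ hij, one_mul]

/-- Modulo elementary matrices of level `x`, a matrix of `SL₂` of level `x` depends on its first row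
only. -/
theorem map_emb12_eq {A A' : SpecialLinearGroup (Fin 2) R} (hA : A ∈ cong x) (hA' : A' ∈ cong x)
    (h0 : A 0 0 = A' 0 0) (h1 : A 0 1 = A' 0 1) : p (emb12 A) = p (emb12 A') := by
  have hx := (mem_cong_two.1 hA).2.2.1
  have hx' := (mem_cong_two.1 hA').2.2.1
  obtain ⟨y, hy⟩ : x ∣ A 1 0 * A' 1 1 - A 1 1 * A' 1 0 :=
    dvd_sub (hx.mul_right _) (hx'.mul_left _)
  have : A = el 1 0 (x * y) * A' := by
    have e1 := det_two A
    have e2 := det_two A'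
    rw [h0, h1] at e1
    apply Subtype.ext
    rw [coe_mul, coe_el_two_10, ← hy]
    ext i j
    fin_cases i <;> fin_cases j <;> simp [Matrix.mul_apply, Fin.sum_univ_succ, h0, h1]
    · linear_combination (-A 1 0) * e2 + (A' 1 0) * e1
    · linear_combination (-A 1 1) * e2 + (A' 1 1) * e1
  rw [this, map_mul, map_mul, emb12_el_10, hp _ _ _ (by decide), one_mul]

variable (hcomm : ∀ A : SpecialLinearGroup (Fin 2) R, A ∈ cong x → ∀ (i j : Fin 3) (r : R), i ≠ j →
    Commute (p (emb12 A)) (p (el i j r)))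
include hcomm

/-- The two embeddings of `SL₂` in the rows and columns `0, 1` and `0, 2` agree on a congruence subgroup
commuting with the elementary matrices, as they are conjugate by a product of these. -/
theorem map_emb13 {A : SpecialLinearGroup (Fin 2) R} (hA : A ∈ cong x) :
    p (emb13 A) = p (emb12 A) := by
  have h := congrArg p (conj_emb12 A)
  rw [map_mul, map_mul p (emb13 A)] at h
  have hc : Commute (p (emb12 A)) (p (el 2 1 1 * el 1 2 (-1) * el 2 1 1)) := by
    rw [map_mul, map_mul]
    exact ((hcomm A hA _ _ _ (by decide)).mul_right (hcomm A hA _ _ _ (by decide))).mul_right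
      (hcomm A hA _ _ _ (by decide))
  rw [← hc.eq] at h
  exact (mul_right_cancel h).symm

/-- Multiplicativity of Mennicke symbols of level `x`. -/
theorem map_emb12_mul {A A' B : SpecialLinearGroup (Fin 2) R} (hA : A ∈ cong x) (hA' : A' ∈ cong x)
    (hBx : B ∈ cong x) (h : A 0 1 = A' 0 1) (hB : B 0 0 = A 0 0 * A' 0 0) (hB1 : B 0 1 = A 0 1) :
    p (emb12 A) * p (emb12 A') = p (emb12 B) := by
  obtain ⟨ha1, ha2, ha3, ha4⟩ := mem_cong_two.1 hA
  obtain ⟨hb1, hb2, hb3, hb4⟩ := mem_cong_two.1 hA'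
  have hdet : (!![A 0 0 * A' 0 0, A 0 1; A' 1 0 + A' 1 1 * A 1 0 * A' 0 0, A 1 1 * A' 1 1] :
      Matrix (Fin 2) (Fin 2) R).det = 1 := by
    have e1 := det_two A
    have e2 := det_two A'
    rw [← h] at e2
    rw [det_fin_two]
    simp
    linear_combination (A' 0 0 * A' 1 1) * e1 + e2
  set B' : SpecialLinearGroup (Fin 2) R := ⟨_, hdet⟩ with hB'
  have hB'x : B' ∈ cong x := by
    rw [mem_cong_two]
    refine ⟨?_, ha2, dvd_add hb3 ((ha3.mul_left _).mul_right _), ?_⟩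
    · have : B' 0 0 - 1 = (A 0 0 - 1) * A' 0 0 + (A' 0 0 - 1) := by simp [hB']; ring
      rw [this]; exact dvd_add (ha1.mul_right _) hb1
    · have : B' 1 1 - 1 = (A 1 1 - 1) * A' 1 1 + (A' 1 1 - 1) := by simp [hB']; ring
      rw [this]; exact dvd_add (ha4.mul_right _) hb4
  rw [map_emb12_eq hp hBx hB'x (by simp [hB', hB]) (by simp [hB', hB1])]
  have key := congrArg p (emb_mul_emb A A' B' h rfl rfl rfl rfl)
  simp only [map_mul] at key
  obtain ⟨y, hy⟩ := ha3.mul_right (A' 0 0)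
  rw [map_emb13 hp hcomm hA', map_el_congr hp (i := 2) (j := 1) (by decide) hb4,
    map_el_congr hp (i := 2) (j := 1) (by decide) ha4, hy, hp _ _ _ (by decide), mul_one,
    map_el_congr hp (i := 1) (j := 2) (r := -A 0 0) (s := -1) (by decide)
      (by rw [← dvd_neg]; convert ha1 using 1; ring)] at key
  have c1 := hcomm A hA 1 2 (-1) (by decide)
  have c2 := hcomm A hA 2 1 1 (by decide)
  have c3 := hcomm A' hA' 1 2 (-1) (by decide)
  have c4 := hcomm A' hA' 2 1 1 (by decide)
  have e : p (el 2 1 1) * p (emb12 A) * p (emb12 A') * p (el 1 2 (-1)) * p (el 2 1 1) =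
      p (el 2 1 1) * p (el 1 2 (-1)) * p (el 2 1 1) * (p (emb12 A) * p (emb12 A')) := by
    have d1 := (c1.mul_left c3).eq
    have d2 := (c2.mul_left c4).eq
    simp only [mul_assoc] at d1 d2 ⊢
    rw [← d2, ← mul_assoc (p (emb12 A')), ← mul_assoc (p (emb12 A)), d1]
    simp only [mul_assoc]
  rw [e] at key
  exact mul_left_cancel key

/-- Matrices of `SL₂` of level `x` commute modulo the elementary matrices of level `x`. -/
theorem commute_emb12 [IsDomain R] (hx : x ≠ 0)
    (hfin : ∀ c : R, c ≠ 0 → Finite (R ⧸ Ideal.span {c}))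
    {A A' : SpecialLinearGroup (Fin 2) R} (hA : A ∈ cong x) (hA' : A' ∈ cong x) :
    Commute (p (emb12 A)) (p (emb12 A')) := by
  have hconj : ∀ (A : SpecialLinearGroup (Fin 2) R) (t : R), A ∈ cong x →
      ∃ A' ∈ cong x, p (emb12 A') = p (emb12 A) ∧ A' 0 0 = A 0 0 + t * A 0 1 ∧ A' 0 1 = A 0 1 := by
    intro A t hA
    refine ⟨(el 1 0 t)⁻¹ * A * ((el 1 0 t)⁻¹)⁻¹,
      (inferInstance : (cong x).Normal).conj_mem A hA _, ?_, ?_, ?_⟩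
    · rw [inv_inv, map_mul, map_mul, map_mul, map_mul, map_inv, map_inv, emb12_el_10]
      have := (hcomm A hA 1 0 t (by decide)).eq
      rw [mul_assoc, this, inv_mul_cancel_left]
    · rw [inv_inv, el_inv (by decide), coe_mul, coe_mul, coe_el_two_10, coe_el_two_10]
      simp [Matrix.mul_apply, Matrix.vecMul, dotProduct, Fin.sum_univ_succ]; ring
    · rw [inv_inv, el_inv (by decide), coe_mul, coe_mul, coe_el_two_10, coe_el_two_10]
      simp [Matrix.mul_apply, Matrix.vecMul, dotProduct, Fin.sum_univ_succ]
  have hright : ∀ (A : SpecialLinearGroup (Fin 2) R) (t : R), A ∈ cong x →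
      ∃ A' ∈ cong x, p (emb12 A') = p (emb12 A) ∧ A' 0 0 = A 0 0 ∧
        A' 0 1 = A 0 1 + x * t * A 0 0 := by
    intro A t hA
    refine ⟨A * el 0 1 (x * t), (cong x).mul_mem hA ?_, ?_, ?_, ?_⟩
    · rw [mem_cong_two, coe_el_two_01]; simp
    · rw [map_mul, map_mul, emb12_el_01, hp _ _ _ (by decide), mul_one]
    · rw [coe_mul, coe_el_two_01]; simp [Matrix.mul_apply, Fin.sum_univ_succ]
    · rw [coe_mul, coe_el_two_01]; simp [Matrix.mul_apply, Fin.sum_univ_succ]; ring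
  -- equal upper right entries
  have hsame : ∀ A A' : SpecialLinearGroup (Fin 2) R, A ∈ cong x → A' ∈ cong x →
      A 0 1 = A' 0 1 → Commute (p (emb12 A)) (p (emb12 A')) := by
    intro A A' hA hA' h
    obtain ⟨ha1, ha2, ha3, ha4⟩ := mem_cong_two.1 hA
    obtain ⟨hb1, hb2, hb3, hb4⟩ := mem_cong_two.1 hA'
    have hdet : (!![A 0 0 * A' 0 0, A 0 1; A' 1 0 + A' 1 1 * A 1 0 * A' 0 0, A 1 1 * A' 1 1] :
        Matrix (Fin 2) (Fin 2) R).det = 1 := by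
      have e1 := det_two A
      have e2 := det_two A'
      rw [← h] at e2
      rw [det_fin_two]
      simp
      linear_combination (A' 0 0 * A' 1 1) * e1 + e2
    set B' : SpecialLinearGroup (Fin 2) R := ⟨_, hdet⟩ with hB'
    have hB'x : B' ∈ cong x := by
      rw [mem_cong_two]
      refine ⟨?_, ha2, dvd_add hb3 ((ha3.mul_left _).mul_right _), ?_⟩
      · have : B' 0 0 - 1 = (A 0 0 - 1) * A' 0 0 + (A' 0 0 - 1) := by simp [hB']; ring
        rw [this]; exact dvd_add (ha1.mul_right _) hb1
      · have : B' 1 1 - 1 = (A 1 1 - 1) * A' 1 1 + (A' 1 1 - 1) := by simp [hB']; ring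
        rw [this]; exact dvd_add (ha4.mul_right _) hb4
    rw [Commute, SemiconjBy, map_emb12_mul hp hcomm hA hA' hB'x h rfl rfl,
      map_emb12_mul hp hcomm hA' hA hB'x h.symm (mul_comm _ _) h]
  -- coprime diagonal entries
  have hcop : ∀ A A' : SpecialLinearGroup (Fin 2) R, A ∈ cong x → A' ∈ cong x →
      IsCoprime (A' 0 0) (A 0 0) → Commute (p (emb12 A)) (p (emb12 A')) := by
    rintro A A' hA hA' ⟨v, u, huv⟩
    obtain ⟨y, hy⟩ : x ∣ A' 0 1 - A 0 1 :=
      dvd_sub (mem_cong_two.1 hA').2.1 (mem_cong_two.1 hA).2.1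
    obtain ⟨C, hC, e1, -, e2⟩ := hright A (y * u) hA
    obtain ⟨C', hC', e1', -, e2'⟩ := hright A' (-(y * v)) hA'
    rw [← e1, ← e1']
    refine hsame C C' hC hC' ?_
    rw [e2, e2']
    linear_combination x * y * huv - hy
  have hne : ∀ A A' : SpecialLinearGroup (Fin 2) R, A ∈ cong x → A' ∈ cong x → A 0 0 ≠ 0 →
      Commute (p (emb12 A)) (p (emb12 A')) := by
    intro A A' hA hA' h0
    obtain ⟨t, ht⟩ := exists_isCoprime_add (hfin _ h0) (a := A' 0 0) (b := A' 0 1) (p := A' 1 1)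
      (q := -A' 1 0) (r := 0) (by linear_combination det_two A')
    obtain ⟨C, hC, e1, e2, -⟩ := hconj A' t hA'
    rw [← e1]
    exact hcop A C hA hC (by rwa [e2])
  by_cases h0 : A 0 0 = 0
  · obtain ⟨C, hC, e1, e2, -⟩ := hconj A 1 hA
    rw [← e1]
    refine hne C A' hC hA' ?_
    rw [e2, h0, zero_add, one_mul]
    intro h
    have := det_two A
    rw [h0, h] at this
    simp at this
  · exact hne A A' hA hA' h0

end Mennicke

end Matrix.SpecialLinearGroup

namespace Matrix.SpecialLinearGroup

section Central

variable {R : Type*} [CommRing R] {Q : Type*} [Group Q]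
variable {ι κ : Type*} [Fintype ι] [DecidableEq ι] [Fintype κ] [DecidableEq κ]

theorem std_conj_el_col {i0 i1 k : ι} (h0 : k ≠ i0) (h1 : k ≠ i1) (h01 : i0 ≠ i1)
    {g : SpecialLinearGroup ι R} (hg : g ∈ std {s | s ≠ i0 ∧ s ≠ i1}) (z : R) :
    ∃ u v, u = (↑g⁻¹ : Matrix ι ι R) i0 i0 ∧ v = (↑g⁻¹ : Matrix ι ι R) i0 i1 ∧
      g * el k i0 z * g⁻¹ = el k i0 (u * z) * el k i1 (v * z) := by
  have hgi := (std _).inv_mem hg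
  have hk := hg k ⟨h0, h1⟩
  refine ⟨_, _, rfl, rfl, ?_⟩
  generalize hG : g⁻¹ = G at *
  have hrow : (Pi.single i0 1 : ι → R) ᵥ* (G : Matrix ι ι R) =
      Pi.single i0 (G i0 i0) + Pi.single i1 (G i0 i1) := by
    ext l
    rw [single_one_vecMul, row_apply]
    by_cases hl0 : l = i0
    · subst hl0; simp [h01.symm]
    by_cases hl1 : l = i1
    · subst hl1; simp [h01]
    · have := congrFun (hgi l ⟨hl0, hl1⟩).1 i0
      rw [mulVec_single_eq] at this
      simp [hl0, hl1, this, Ne.symm hl0]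
  have hcol : (g : Matrix ι ι R) *ᵥ Pi.single k z = Pi.single k z := by
    have : (Pi.single k z : ι → R) = z • Pi.single k 1 := by simp [← Pi.single_smul]
    rw [this, mulVec_smul, hk.1]
  rw [el, ← hG, conj_tv _ _ _ (el_ok h0 _), hG, hrow, hcol,
    tv_add_right (single_dot_single h0.symm _ _) (single_dot_single h1.symm _ _),
    el_eq h0, el_eq h1]

variable {q : SpecialLinearGroup ι R →* Q} {x : R}

theorem map_el_eq (hq : ∀ (i j : ι) (z : R), i ≠ j → q (el i j (x * z)) = 1) {i j : ι}
    (hij : i ≠ j) {r s : R} (h : x ∣ r - s) : q (el i j r) = q (el i j s) := by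
  obtain ⟨z, hz⟩ := h
  rw [show r = x * z + s by rw [← hz]; ring, el_add hij, map_mul, hq _ _ _ hij, one_mul]

/-- Modulo elementary matrices of level `x`, a `2 × 2` block of the congruence subgroup of level `x`
commutes with all elementary matrices. The elementary matrices in the block itself are commutators
of those outside. -/
theorem commute_el (h3 : 3 ≤ Fintype.card ι)
    (hq : ∀ (i j : ι) (z : R), i ≠ j → q (el i j (x * z)) = 1) {i0 i1 : ι} (h01 : i0 ≠ i1)
    {g : SpecialLinearGroup ι R} (hgx : g ∈ cong x) (hg : g ∈ std {s | s ≠ i0 ∧ s ≠ i1})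
    {i j : ι} (hij : i ≠ j) (r : R) : Commute (q g) (q (el i j r)) := by
  have hgx' := (cong x).inv_mem hgx
  have hsw : ({s | s ≠ i0 ∧ s ≠ i1} : Set ι) = {s | s ≠ i1 ∧ s ≠ i0} := by
    ext s; exact and_comm
  have hconj : ∀ y, q (g * y * g⁻¹) = q y → Commute (q g) (q y) := by
    intro y hy
    rw [map_mul, map_mul, map_inv, mul_inv_eq_iff_eq_mul] at hy
    exact hy
  have row : ∀ i0 i1 : ι, i0 ≠ i1 → g ∈ std {s | s ≠ i0 ∧ s ≠ i1} → ∀ k r, k ≠ i0 → k ≠ i1 →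
      Commute (q g) (q (el i0 k r)) := by
    intro i0 i1 h01 hg k r h0 h1
    apply hconj
    have d0 := mem_cong.1 hgx i0 i0
    have d1 := mem_cong.1 hgx i1 i0
    rw [one_apply_eq] at d0
    rw [one_apply_ne h01.symm, sub_zero] at d1
    rw [std_conj_el h0 h1 h01 hg, map_mul, map_el_eq hq h0.symm (s := r),
      map_el_eq hq h1.symm (s := 0), el_zero, map_one, mul_one]
    · rw [sub_zero]; exact d1.mul_left _
    · convert d0.mul_left r using 1; ring
  have col : ∀ i0 i1 : ι, i0 ≠ i1 → g ∈ std {s | s ≠ i0 ∧ s ≠ i1} → ∀ k r, k ≠ i0 → k ≠ i1 →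
      Commute (q g) (q (el k i0 r)) := by
    intro i0 i1 h01 hg k r h0 h1
    apply hconj
    have d0 := mem_cong.1 hgx' i0 i0
    have d1 := mem_cong.1 hgx' i0 i1
    obtain ⟨u, v, hu, hv, huv⟩ := std_conj_el_col h0 h1 h01 hg r
    rw [one_apply_eq, ← hu] at d0
    rw [one_apply_ne h01, sub_zero, ← hv] at d1
    rw [huv, map_mul, map_el_eq hq h0 (s := r),
      map_el_eq hq h1 (s := 0), el_zero, map_one, mul_one]
    · rw [sub_zero]; exact d1.mul_right _
    · convert d0.mul_right r using 1; ring
  have both : ∀ i0 i1 : ι, i0 ≠ i1 → g ∈ std {s | s ≠ i0 ∧ s ≠ i1} → ∀ r,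
      Commute (q g) (q (el i0 i1 r)) := by
    intro i0 i1 h01 hg r
    obtain ⟨k, h0, h1⟩ := exists_third h3 i0 i1
    have hsw : ({s | s ≠ i0 ∧ s ≠ i1} : Set ι) = {s | s ≠ i1 ∧ s ≠ i0} := by
      ext s; exact and_comm
    have e := congrArg q (el_conj_row h0.symm h01 h1 1 r)
    rw [mul_one, map_mul, map_mul, map_mul, map_inv] at e
    rw [← inv_mul_eq_iff_eq_mul] at e
    rw [← e]
    have c1 := row i0 i1 h01 hg k r h0 h1
    have c2 := col i1 i0 h01.symm (hsw ▸ hg) k (-1) h1 h0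
    exact c1.inv_right.mul_right ((c2.mul_right c1).mul_right c2.inv_right)
  by_cases hi0 : i = i0
  · subst hi0
    by_cases hj1 : j = i1
    · subst hj1; exact both _ _ h01 hg r
    · exact row _ _ h01 hg _ _ hij.symm hj1
  by_cases hi1 : i = i1
  · subst hi1
    by_cases hj0 : j = i0
    · subst hj0; exact both _ _ hij (hsw ▸ hg) r
    · exact row _ _ h01.symm (hsw ▸ hg) _ _ hij.symm hj0
  by_cases hj0 : j = i0
  · subst hj0; exact col _ _ h01 hg _ _ hi0 hi1
  by_cases hj1 : j = i1
  · subst hj1; exact col _ _ h01.symm (hsw ▸ hg) _ _ hi1 hi0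
  apply hconj
  have hi := hg i ⟨hi0, hi1⟩
  have hj := (std _).inv_mem hg j ⟨hj0, hj1⟩
  have hcol : (g : Matrix ι ι R) *ᵥ Pi.single i r = Pi.single i r := by
    have : (Pi.single i r : ι → R) = r • Pi.single i 1 := by simp [← Pi.single_smul]
    rw [this, mulVec_smul, hi.1]
  rw [el, conj_tv _ _ _ (el_ok hij _), hj.2, hcol]

/-- `SL₂(R)` is generated by elementary matrices and any congruence subgroup of nonzero level. -/
theorem mem_of_el_of_cong {H : Subgroup (SpecialLinearGroup (Fin 2) R)}
    (h01 : ∀ r, el 0 1 r ∈ H) (h10 : ∀ r, el 1 0 r ∈ H) (hx : Finite (R ⧸ Ideal.span {x}))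
    (hH : cong x ≤ H) (A : SpecialLinearGroup (Fin 2) R) : A ∈ H := by
  obtain ⟨t, v, u, huv⟩ := exists_isCoprime_add hx (a := A 0 0) (b := A 0 1) (p := A 1 1)
      (q := -A 1 0) (r := 0) (by linear_combination det_two A)
  set A1 := A * el 1 0 t with hA1
  have e1 : A1 0 0 = A 0 0 + t * A 0 1 := by
    rw [hA1, coe_mul, coe_el_two_10]; simp [Matrix.mul_apply, Fin.sum_univ_succ]; ring
  rw [← e1] at huv
  set A2 := A1 * el 0 1 (v * (1 - A1 0 1)) with hA2
  have e2 : A2 0 0 = A1 0 0 ∧ A2 0 1 = A1 0 1 + A1 0 0 * (v * (1 - A1 0 1)) := by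
    rw [hA2, coe_mul, coe_el_two_01]; simp [Matrix.mul_apply, Fin.sum_univ_succ]; ring
  set A3 := A2 * el 1 0 (1 - A1 0 0) with hA3
  have e3 : A3 0 0 = A2 0 0 + A2 0 1 * (1 - A1 0 0) ∧ A3 0 1 = A2 0 1 := by
    rw [hA3, coe_mul, coe_el_two_10]; simp [Matrix.mul_apply, Fin.sum_univ_succ]
  set A4 := A3 * el 0 1 (-A2 0 1) with hA4
  have e4 : A4 0 0 = A3 0 0 ∧ A4 0 1 = A3 0 1 + A3 0 0 * (-A2 0 1) := by
    rw [hA4, coe_mul, coe_el_two_01]; simp [Matrix.mul_apply, Fin.sum_univ_succ]; ring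
  set A5 := el 1 0 (-A4 1 0) * A4 with hA5
  have e5 : A5 0 0 = A4 0 0 ∧ A5 0 1 = A4 0 1 ∧ A5 1 0 = A4 1 0 + (-A4 1 0) * A4 0 0 ∧
      A5 1 1 = A4 1 1 + (-A4 1 0) * A4 0 1 := by
    rw [hA5, coe_mul, coe_el_two_10]; simp [Matrix.mul_apply, Fin.sum_univ_succ, add_comm]; ring
  have d2 : x ∣ A2 0 1 - 1 := ⟨-u * (1 - A1 0 1), by
    rw [e2.2]; linear_combination (1 - A1 0 1) * huv⟩
  have d3 : x ∣ A3 0 0 - 1 := by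
    have : A3 0 0 - 1 = (A2 0 1 - 1) * (1 - A1 0 0) := by rw [e3.1, e2.1]; ring
    rw [this]; exact d2.mul_right _
  have d4 : x ∣ A4 0 1 := by
    have : A4 0 1 = (A3 0 0 - 1) * (-A2 0 1) := by rw [e4.2, e3.2]; ring
    rw [this]; exact d3.mul_right _
  have d4' : x ∣ A4 0 0 - 1 := by rwa [e4.1]
  have d5 : A5 ∈ cong x := by
    rw [mem_cong_two]
    refine ⟨by rwa [e5.1], by rwa [e5.2.1], ?_, ?_⟩
    · have : A5 1 0 = (A4 0 0 - 1) * (-A4 1 0) := by rw [e5.2.2.1]; ring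
      rw [this]; exact d4'.mul_right _
    · have e := det_two A5
      have : A5 1 1 - 1 = (A4 0 0 - 1) * (-A5 1 1) + A4 0 1 * A5 1 0 := by
        rw [← e5.1, ← e5.2.1]; linear_combination e
      rw [this]; exact dvd_add (d4'.mul_right _) (d4.mul_right _)
  have m5 := hH d5
  have m4 : A4 ∈ H := (H.mul_mem_cancel_left (h10 _)).1 m5
  have m3 : A3 ∈ H := (H.mul_mem_cancel_right (h01 _)).1 m4
  have m2 : A2 ∈ H := (H.mul_mem_cancel_right (h10 _)).1 m3
  have m1 : A1 ∈ H := (H.mul_mem_cancel_right (h01 _)).1 m2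
  exact (H.mul_mem_cancel_right (h10 _)).1 m1

theorem mem_cong_of_emb (e : Fin 3 ⊕ κ ≃ ι) {A : SpecialLinearGroup (Fin 2) R} :
    emb e (emb12 A) ∈ cong x ↔ A ∈ cong x := by
  constructor
  · intro h
    have hh := mem_cong.1 h
    have ent : ∀ i j : Fin 3, (emb e (emb12 A)) (e (Sum.inl i)) (e (Sum.inl j)) = emb12 A i j := by
      intro i j
      rw [coe_emb]; simp
    have h00 := hh (e (Sum.inl 0)) (e (Sum.inl 0))
    have h01 := hh (e (Sum.inl 0)) (e (Sum.inl 1))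
    have h10 := hh (e (Sum.inl 1)) (e (Sum.inl 0))
    have h11 := hh (e (Sum.inl 1)) (e (Sum.inl 1))
    rw [ent, coe_emb12] at h00 h01 h10 h11
    rw [mem_cong_two]
    simp at h00 h01 h10 h11
    exact ⟨h00, h01, h10, h11⟩
  · intro h
    obtain ⟨h1, h2, h3, h4⟩ := mem_cong_two.1 h
    rw [mem_cong]
    intro a b
    obtain ⟨a, rfl⟩ := e.surjective a
    obtain ⟨b, rfl⟩ := e.surjective b
    rw [coe_emb, coe_emb12]
    rcases a with a | a <;> rcases b with b | b
    · fin_cases a <;> fin_cases b <;> simp [h1, h2, h3, h4]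
    · simp
    · simp
    · simp [Matrix.one_apply]

/-- A homomorphism of `SL_ι(R)` which kills the elementary matrices of level `x` maps the congruence
subgroup of level `x` to the center of its image. -/
theorem commute_of_mem_cong [IsDomain R] (e : Fin 3 ⊕ κ ≃ ι)
    (hq : ∀ (i j : ι) (z : R), i ≠ j → q (el i j (x * z)) = 1) (hx : x ≠ 0)
    (hfin : ∀ c : R, c ≠ 0 → Finite (R ⧸ Ideal.span {c}))
    {h : SpecialLinearGroup ι R} (hh : h ∈ cong x) (g : SpecialLinearGroup ι R) :
    Commute (q h) (q g) := by
  have h3 : 3 ≤ Fintype.card ι := by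
    rw [← Fintype.card_congr e, Fintype.card_sum, Fintype.card_fin]; omega
  have h01 : e (Sum.inl 0) ≠ e (Sum.inl 1) := by simp
  set p := q.comp (emb e) with hpdef
  have hp : ∀ (i j : Fin 3) (z : R), i ≠ j → p (el i j (x * z)) = 1 := by
    intro i j z hij
    rw [hpdef, MonoidHom.comp_apply, emb_el e hij]
    exact hq _ _ _ (by simpa using hij)
  have hcomm : ∀ A : SpecialLinearGroup (Fin 2) R, A ∈ cong x → ∀ (i j : Fin 3) (r : R), i ≠ j →
      Commute (p (emb12 A)) (p (el i j r)) := by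
    intro A hA i j r hij
    rw [hpdef, MonoidHom.comp_apply, MonoidHom.comp_apply, emb_el e hij]
    exact commute_el h3 hq h01 ((mem_cong_of_emb e).2 hA) (emb_mem_std e A) (by simpa using hij) r
  -- a block of level `x` commutes with every block
  have hblk : ∀ A A' : SpecialLinearGroup (Fin 2) R, A ∈ cong x →
      Commute (p (emb12 A)) (p (emb12 A')) := by
    intro A A' hA
    have := mem_of_el_of_cong
      (H := (Subgroup.centralizer {p (emb12 A)}).comap (p.comp emb12)) (x := x) ?_ ?_ (hfin x hx) ?_
      A'
    · exact (Subgroup.mem_centralizer_singleton_iff.1 this).symm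
    · intro r
      refine Subgroup.mem_centralizer_singleton_iff.2 ?_
      rw [MonoidHom.comp_apply, emb12_el_01]
      exact (hcomm A hA _ _ _ (by decide)).symm.eq
    · intro r
      refine Subgroup.mem_centralizer_singleton_iff.2 ?_
      rw [MonoidHom.comp_apply, emb12_el_10]
      exact (hcomm A hA _ _ _ (by decide)).symm.eq
    · intro A' hA'
      exact Subgroup.mem_centralizer_singleton_iff.2
        (commute_emb12 hp hcomm hx hfin hA' hA).eq
  have hblk' : ∀ h : SpecialLinearGroup ι R, h ∈ cong x →
      h ∈ std {s | s ≠ e (Sum.inl 0) ∧ s ≠ e (Sum.inl 1)} → ∀ g, Commute (q h) (q g) := by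
    intro h hh hs g
    have hel : ∀ i j r, i ≠ j → el i j r ∈ (Subgroup.centralizer {q h}).comap q := fun i j r hij =>
      Subgroup.mem_centralizer_singleton_iff.2 (commute_el h3 hq h01 hh hs hij r).symm.eq
    have := cong_le (x := (1 : R)) (Hs := (Subgroup.centralizer {q h}).comap q)
      (fun i j z hij => hel i j _ hij)
      (fun i j r g hij hg => ((Subgroup.mul_mem_cancel_left _ (hel i j r hij)).1
        ((Subgroup.mul_mem_cancel_right _ (Subgroup.inv_mem _ (hel i j r hij))).1 hg)))
      hfin h01 ?_ g (by rw [cong_one]; trivial)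
    · exact (Subgroup.mem_centralizer_singleton_iff.1 this).symm
    · intro g _ hg
      obtain ⟨A, rfl, -⟩ := exists_emb e hs
      obtain ⟨A', rfl, -⟩ := exists_emb e hg
      exact Subgroup.mem_centralizer_singleton_iff.2
        (hblk A A' ((mem_cong_of_emb e).1 hh)).symm.eq
  have key := cong_le (x := x) (Hs := (Subgroup.centralizer (Set.range q)).comap q)
    (fun i j z hij => by rw [Subgroup.mem_comap, hq _ _ _ hij]; exact Subgroup.one_mem _)
    ?_ hfin h01 ?_ h hh
  · exact (Subgroup.mem_centralizer_iff.1 key _ ⟨g, rfl⟩).symm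
  · intro i j r g hij hg
    have hc := Subgroup.mem_centralizer_iff.1 hg _ ⟨el i j r, rfl⟩
    have : q (el i j r * g * (el i j r)⁻¹) = q g := by
      rw [map_mul, map_mul, map_inv] at hc ⊢
      have h2 := mul_left_cancel (a := q (el i j r)) (by simpa [mul_assoc] using hc)
      rw [mul_assoc]
      exact h2
    rw [Subgroup.mem_comap, ← this]
    exact hg
  · intro h hh hs
    refine Subgroup.mem_centralizer_iff.2 ?_
    rintro _ ⟨g, rfl⟩
    exact (hblk' h hh hs g).symm.eq

end Central

end Matrix.SpecialLinearGroup

/-! ### Residue rings modulo primes -/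

section Residue

variable {R : Type*} [CommRing R]

theorem dvd_of_mul_mem {M : Ideal R} {p : ℕ} (hp : p.Prime) (hpM : (p : R) ∈ M) {w : ℤ} {b : R}
    (h : (w : R) * b ∈ M) (hb : b ∉ M) : (p : ℤ) ∣ w := by
  by_contra hw
  obtain ⟨α, β, hαβ⟩ := ((Nat.prime_iff_prime_int.1 hp).irreducible.coprime_iff_not_dvd.2 hw).symm
  apply hb
  have h1 : (α : R) * w + β * p = 1 := by exact_mod_cast congrArg (Int.cast : ℤ → R) hαβ
  have h2 : b = α * (w * b) + (β * b) * p := by linear_combination (-b) * h1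
  rw [h2]
  exact M.add_mem (M.mul_mem_left _ h) (M.mul_mem_left _ hpM)

theorem eq_of_dvd_sub {p : ℕ} {s s' : Fin p} (h : (p : ℤ) ∣ (s : ℤ) - s') : s = s' := by
  have h1 := s.2
  have h2 := s'.2
  have := Int.eq_zero_of_abs_lt_dvd h (by rw [abs_lt]; omega)
  exact Fin.ext (by omega)

variable {D : ℕ} {v : Fin D → R}
  (hv : ∀ N : ℕ, N ≠ 0 → ∀ r : R, ∃ c : Fin D → ℤ, (N : R) ∣ r - ∑ i, (c i : R) * v i)
include hv

/-- There are at most `D` maximal ideals above `p`. -/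
theorem exists_isCoprime_add_prime {p : ℕ} (hp : p.Prime) (hpD : D < p) {a b : R}
    (hab : IsCoprime a b) {u : ℕ} (hu : u.Coprime p) :
    ∃ s : ℕ, IsCoprime (a + u * s * b) (p : R) := by
  by_contra! h
  have hmax : ∀ s : Fin p, ∃ M : Ideal R, M.IsMaximal ∧
      Ideal.span {a + u * (s : ℕ) * b, (p : R)} ≤ M := by
    intro s
    refine Ideal.exists_le_maximal _ fun he => h s ?_
    rw [Ideal.eq_top_iff_one, Ideal.mem_span_pair] at he
    exact he
  choose M hM hle using hmax
  have hpM : ∀ s, (p : R) ∈ M s := fun s => hle s (Ideal.subset_span (by simp))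
  have haM : ∀ s : Fin p, a + u * (s : ℕ) * b ∈ M s := fun s => hle s (Ideal.subset_span (by simp))
  have hne : ∀ s, (1 : R) ∉ M s := fun s h1 => (hM s).ne_top ((Ideal.eq_top_iff_one _).2 h1)
  have hbM : ∀ s, b ∉ M s := by
    intro s hb
    obtain ⟨α, β, hαβ⟩ := hab
    apply hne s
    have : (1 : R) = α * (a + u * (s : ℕ) * b) + (β - α * u * (s : ℕ)) * b := by
      linear_combination -hαβ
    rw [this]
    exact (M s).add_mem ((M s).mul_mem_left _ (haM s)) ((M s).mul_mem_left _ hb)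
  have hinj : ∀ s s', M s = M s' → s = s' := by
    intro s s' he
    have h1 : (((u : ℤ) * ((s : ℕ) - (s' : ℕ)) : ℤ) : R) * b ∈ M s := by
      have := (M s).sub_mem (haM s) (he ▸ haM s')
      convert this using 1
      push_cast; ring
    have h2 := dvd_of_mul_mem hp (hpM s) h1 (hbM s)
    refine eq_of_dvd_sub (((Nat.prime_iff_prime_int.1 hp).dvd_mul.1 h2).resolve_left ?_)
    intro h3
    have h4 : p ∣ u := by exact_mod_cast h3
    exact (Nat.Prime.coprime_iff_not_dvd hp).1 hu.symm h4
  have hpair : Pairwise (Function.onFun IsCoprime M) := by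
    intro s s' hss
    have := hM s
    have := hM s'
    exact Ideal.isCoprime_of_isMaximal fun he => hss (hinj _ _ he)
  let f : (Fin p → Fin p) → ∀ s, R ⧸ M s := fun y s => Ideal.Quotient.mk (M s) ((y s : ℕ) : R)
  have hf : Function.Injective f := by
    intro y y' hyy
    ext1 s
    have h1 := Ideal.Quotient.eq.1 (congrFun hyy s)
    refine eq_of_dvd_sub (dvd_of_mul_mem hp (hpM s) (b := 1) ?_ (hne s))
    rw [mul_one]; push_cast; exact h1
  let g : (Fin D → Fin p) → ∀ s, R ⧸ M s := fun y s =>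
    Ideal.Quotient.mk (M s) (∑ i, ((y i : ℕ) : R) * v i)
  have hg : Function.Surjective g := by
    intro z
    obtain ⟨r, hr⟩ := Ideal.pi_quotient_surjective hpair z
    obtain ⟨c, hc⟩ := hv p hp.ne_zero r
    have hp0 : (0 : ℤ) < p := by exact_mod_cast hp.pos
    refine ⟨fun i => ⟨(c i % p).toNat, ?_⟩, ?_⟩
    · have h1 := Int.emod_lt_of_pos (c i) hp0
      have h2 := Int.emod_nonneg (c i) hp0.ne'
      omega
    · ext1 s
      rw [← hr s]
      refine (Ideal.Quotient.eq.2 ?_).symm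
      have h1 : (p : R) ∣ r - ∑ i, (((c i % p).toNat : ℕ) : R) * v i := by
        have : r - ∑ i, (((c i % p).toNat : ℕ) : R) * v i =
            (r - ∑ i, (c i : R) * v i) + ∑ i, ((c i : R) - (((c i % p).toNat : ℕ) : R)) * v i := by
          simp only [sub_mul, Finset.sum_sub_distrib]; ring
        rw [this]
        refine dvd_add hc (Finset.dvd_sum fun i _ => Dvd.dvd.mul_right ?_ _)
        refine ⟨((c i / p : ℤ) : R), ?_⟩
        have h2 := Int.emod_nonneg (c i) hp0.ne'
        have h3 : ((c i % p).toNat : ℤ) = c i - p * (c i / p) := by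
          rw [Int.toNat_of_nonneg h2, Int.emod_def]
        have h4 : (((c i % p).toNat : ℕ) : R) = c i - p * ((c i / p : ℤ) : R) := by
          exact_mod_cast congrArg (Int.cast : ℤ → R) h3
        rw [h4]; ring
      exact (M s).mem_of_dvd h1 (hpM s)
  have hcard := Fintype.card_le_of_injective (fun y => Function.surjInv hg (f y))
    ((Function.injective_surjInv hg).comp hf)
  simp only [Fintype.card_fun, Fintype.card_fin] at hcard
  exact absurd ((Nat.pow_le_pow_iff_right hp.one_lt).1 hcard) (by omega)

/-- Avoiding the primes dividing `n`: those dividing `m` cause no harm, and above each of the others, being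
larger than `D`, there are fewer maximal ideals than residue classes to choose from. -/
theorem exists_isCoprime_add_mul {m : ℕ} (hm : ∀ p : ℕ, p.Prime → p ≤ D → p ∣ m) {n : ℕ}
    (hn : n ≠ 0) : ∀ {a b : R}, IsCoprime a b → IsCoprime a (m : R) →
    ∃ t : ℕ, IsCoprime (a + m * t * b) (n : R) := by
  induction n using induction_on_primes with
  | zero => exact absurd rfl hn
  | one => intro a b _ _; exact ⟨0, by simpa using isCoprime_one_right⟩
  | prime_mul p n hp ih =>
    intro a b hab ham
    obtain ⟨t, ht⟩ := ih (by rintro rfl; simp at hn) hab ham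
    by_cases hpm : p ∣ m * n
    · refine ⟨t, ?_⟩
      have h1 : IsCoprime (a + m * t * b) (m : R) := by
        have := ham.add_mul_left_left (t * b)
        rwa [← mul_assoc] at this
      have h2 : IsCoprime (a + m * t * b) (p : R) := by
        refine (h1.mul_right ht).of_isCoprime_of_dvd_right ?_
        exact_mod_cast Nat.cast_dvd_cast (α := R) hpm
      rw [Nat.cast_mul]
      exact h2.mul_right ht
    · obtain ⟨s, hs⟩ := exists_isCoprime_add_prime hv hp
        (by by_contra h; exact hpm ((hm p hp (by omega)).mul_right _))
        (a := a + m * t * b) (b := b) (hab.add_mul_right_left _)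
        ((Nat.Prime.coprime_iff_not_dvd hp).2 hpm).symm
      refine ⟨t + n * s, ?_⟩
      have e : a + m * ((t + n * s : ℕ) : R) * b = a + m * t * b + ((m * n : ℕ) : R) * s * b := by
        push_cast; ring
      rw [e, Nat.cast_mul p n]
      refine hs.mul_right ?_
      have := ht.add_mul_left_left (m * s * b)
      convert this using 1
      push_cast; ring

omit hv in
/-- Multiplication by a unit of an `𝔽_q`-algebra with `d` generators as a vector space is an element of
`GL_d'(𝔽_q)` for some `d' ≤ d`, so the order of the unit divides the order of this group. -/
theorem pow_card_modEq_one {d : ℕ} (q : ℕ) [Fact q.Prime] {V : Type*} [CommRing V]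
    [Module (ZMod q) V] (w : Fin d → V)
    (hw : ∀ y, ∃ c : Fin d → ℤ, y = ∑ i, (c i : V) * w i) (a : Vˣ) :
    ∃ d' ≤ d, a ^ (∏ i : Fin d', (q ^ d' - q ^ (i : ℕ))) = 1 := by
  have hspan : Submodule.span (ZMod q) (Set.range w) = (⊤ : Submodule (ZMod q) V) := by
    refine eq_top_iff.2 fun y _ => ?_
    obtain ⟨c, rfl⟩ := hw y
    refine Submodule.sum_mem _ fun i _ => ?_
    have := zsmul_mem (Submodule.subset_span (R := ZMod q) (Set.mem_range_self (f := w) i)) (c i)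
    rwa [zsmul_eq_mul] at this
  have hfg : Module.Finite (ZMod q) V :=
    ⟨⟨(Set.finite_range w).toFinset, by simpa using hspan⟩⟩
  refine ⟨Module.finrank (ZMod q) V, ?_, ?_⟩
  · simpa using finrank_le_of_span_eq_top hspan
  let L : V →* Module.End (ZMod q) V :=
    { toFun := fun a => (AddMonoidHom.mulLeft a).toZModLinearMap q
      map_one' := by ext; simp
      map_mul' := by intro a b; ext; simp [mul_assoc] }
  let e : Module.End (ZMod q) V ≃ₐ[ZMod q] Matrix (Fin (Module.finrank (ZMod q) V))
      (Fin (Module.finrank (ZMod q) V)) (ZMod q) :=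
    LinearMap.toMatrixAlgEquiv (Module.finBasis (ZMod q) V)
  let φ : V →* Matrix (Fin (Module.finrank (ZMod q) V))
      (Fin (Module.finrank (ZMod q) V)) (ZMod q) := (e : _ →* _).comp L
  have hφ : Function.Injective φ := by
    refine e.injective.comp fun y z h => ?_
    simpa [L] using congrArg (fun f : Module.End (ZMod q) V => f 1) h
  apply Units.map_injective hφ
  rw [map_pow, map_one]
  have := Matrix.card_GL_field (𝔽 := ZMod q) (Module.finrank (ZMod q) V)
  rw [ZMod.card] at this
  rw [← this]
  exact pow_card_eq_one'

/-- The order of a unit modulo a prime `q` divides the order of some `GL_d(𝔽_q)` with `d ≤ D`. -/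
theorem exists_dvd_pow_sub_one {q : ℕ} (hq : q.Prime) {a : R} (ha : IsCoprime a (q : R)) :
    ∃ d ≤ D, (q : R) ∣ a ^ (∏ i : Fin d, (q ^ d - q ^ (i : ℕ))) - 1 := by
  haveI := Fact.mk hq
  have hu : IsUnit (Ideal.Quotient.mk (Ideal.span {(q : R)}) a) := by
    obtain ⟨α, β, h⟩ := ha
    refine IsUnit.of_mul_eq_one (Ideal.Quotient.mk _ α) ?_
    rw [← map_mul, ← map_one (Ideal.Quotient.mk _)]
    refine Ideal.Quotient.eq.2 (Ideal.mem_span_singleton.2 ⟨-β, ?_⟩)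
    linear_combination h
  letI : Module (ZMod q) (R ⧸ Ideal.span {(q : R)}) := AddCommGroup.zmodModule (fun y => by
      obtain ⟨y, rfl⟩ := Ideal.Quotient.mk_surjective y
      rw [nsmul_eq_mul, ← map_natCast (Ideal.Quotient.mk _), ← map_mul]
      exact Ideal.Quotient.eq_zero_iff_mem.2 (Ideal.mem_span_singleton.2 (dvd_mul_right _ _)))
  obtain ⟨d, hd, h⟩ := pow_card_modEq_one q (V := R ⧸ Ideal.span {(q : R)})
    (fun i => Ideal.Quotient.mk _ (v i)) (fun y => by
      obtain ⟨y, rfl⟩ := Ideal.Quotient.mk_surjective y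
      obtain ⟨c, hc⟩ := hv q hq.ne_zero y
      refine ⟨c, ?_⟩
      have := Ideal.Quotient.eq.2 (Ideal.mem_span_singleton.2 hc)
      rw [this]
      simp) hu.unit
  refine ⟨d, hd, ?_⟩
  have h' := congrArg Units.val h
  rw [Units.val_pow_eq_pow_val, IsUnit.unit_spec, Units.val_one, ← map_pow,
    ← map_one (Ideal.Quotient.mk _)] at h'
  exact Ideal.mem_span_singleton.1 (Ideal.Quotient.eq.1 h')

end Residue

/-! ### Valuations of the orders of finite linear groups -/

/-- If none of `q, ..., q ^ D` is `1` modulo `l ^ e`, the power of `l` dividing the order of `GL_d(𝔽_q)` is at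
most `l ^ (D (e - 1))`. -/
theorem pow_dvd_card {l q e d D k : ℕ} (hl : l.Prime) (he : 1 ≤ e) (hd : d ≤ D)
    (hq : ∀ i, 1 ≤ i → i ≤ D → ¬ l ^ e ∣ q ^ i - 1) (hlq : ¬ l ∣ q)
    (hk : l ^ k ∣ ∏ i : Fin d, (q ^ d - q ^ (i : ℕ))) : k ≤ D * (e - 1) := by
  have hfac : ∀ i : Fin d, q ^ d - q ^ (i : ℕ) ≠ 0 ∧
      (q ^ d - q ^ (i : ℕ)).factorization l ≤ e - 1 := by
    intro i
    have hi := i.2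
    have h1 : q ^ d - q ^ (i : ℕ) = q ^ (i : ℕ) * (q ^ (d - i) - 1) := by
      rw [Nat.mul_sub, mul_one, ← pow_add, Nat.add_sub_cancel' hi.le]
    have h2 : ¬ l ^ e ∣ q ^ d - q ^ (i : ℕ) := by
      rw [h1]
      intro h
      refine hq (d - i) (by omega) (by omega) (Nat.Coprime.dvd_of_dvd_mul_left ?_ h)
      exact Nat.Coprime.pow _ _ ((Nat.Prime.coprime_iff_not_dvd hl).2 hlq)
    have h3 : q ^ d - q ^ (i : ℕ) ≠ 0 := fun h => h2 (h ▸ dvd_zero _)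
    refine ⟨h3, ?_⟩
    by_contra h4
    exact h2 ((hl.pow_dvd_iff_le_factorization h3).2 (by omega))
  have h0 : ∏ i : Fin d, (q ^ d - q ^ (i : ℕ)) ≠ 0 := Finset.prod_ne_zero_iff.2 fun i _ => (hfac i).1
  rw [hl.pow_dvd_iff_le_factorization h0, Nat.factorization_prod fun i _ => (hfac i).1] at hk
  rw [Finsupp.finsetSum_apply] at hk
  calc k ≤ _ := hk
    _ ≤ ∑ i : Fin d, (e - 1) := Finset.sum_le_sum fun i _ => (hfac i).2
    _ = d * (e - 1) := by simp
    _ ≤ D * (e - 1) := Nat.mul_le_mul_right _ hd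

/-- For every prime `l` some residue class modulo a power of `l` consists of integers `q` for which
the `l`-part of the order of `GL_d(𝔽_q)`, `d ≤ D`, is bounded independently of `q`. -/
theorem exists_residue (D : ℕ) {l : ℕ} (hl : l.Prime) : ∃ c e : ℕ, 1 ≤ e ∧ l.Coprime c ∧
    (∀ i, 1 ≤ i → i ≤ D → ¬ l ^ e ∣ c ^ i - 1) ∧
    l ^ (D * (e - 1)) ∣ (2 ^ D).factorial ^ (D * (2 * D)) := by
  by_cases h : 2 ^ D < l
  · by_cases h2 : l = 2
    · have hD : D = 0 := by
        by_contra hD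
        have : 2 ^ 1 ≤ 2 ^ D := Nat.pow_le_pow_right (by norm_num) (by omega)
        omega
      subst hD
      exact ⟨1, 1, le_rfl, by simp, fun i _ _ => by omega, by simp⟩
    refine ⟨2, 1, le_rfl, ?_, ?_, by simp⟩
    · exact (Nat.coprime_primes hl Nat.prime_two).2 h2
    · intro i hi hiD hdvd
      rw [pow_one] at hdvd
      have h1 : 2 ^ i ≤ 2 ^ D := Nat.pow_le_pow_right (by norm_num) hiD
      have h3 : 2 ^ 1 ≤ 2 ^ i := Nat.pow_le_pow_right (by norm_num) hi
      have := Nat.le_of_dvd (by omega) hdvd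
      omega
  · refine ⟨l + 1, 2 * D + 1, by omega, by simp, ?_, ?_⟩
    · intro i hi hiD hdvd
      have h2 := hl.two_le
      have h1 : (l + 1) ^ i ≤ (l ^ 2) ^ D :=
        (Nat.pow_le_pow_left (by nlinarith) i).trans (Nat.pow_le_pow_right (by positivity) hiD)
      have h3 : (l + 1) ^ 1 ≤ (l + 1) ^ i := Nat.pow_le_pow_right (by omega) hi
      have h5 : (l ^ 2) ^ D ≤ l ^ (2 * D + 1) := by
        rw [← pow_mul]; exact Nat.pow_le_pow_right (by omega) (by omega)
      rw [pow_one] at h3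
      generalize (l + 1) ^ i = z at *
      have h4 := Nat.le_of_dvd (by omega) hdvd
      omega
    · rw [Nat.add_sub_cancel]
      exact pow_dvd_pow_of_dvd (Nat.dvd_factorial hl.pos (by omega)) _

/-! ### A congruence between a ring element and integers -/

section NumberFieldCongruence

open Polynomial

variable {R K : Type*} [CommRing R] [Field K]

/-- Clearing denominators: an integral polynomial in a fraction `θ c / θ b`. -/
theorem exists_pow_mul_aeval (θ : R →+* K) {b c : R} {x : K} (h : θ b * x = θ c) (Q : ℤ[X]) :
    ∃ (N : ℕ) (r : R), θ b ^ N * aeval x Q = θ r := by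
  induction Q using Polynomial.induction_on' with
  | add p q hp hq =>
    obtain ⟨N, r, h1⟩ := hp
    obtain ⟨M, s, h2⟩ := hq
    refine ⟨N + M, b ^ M * r + b ^ N * s, ?_⟩
    rw [map_add (aeval x), map_add θ, map_mul, map_mul, ← h1, ← h2, map_pow, map_pow]
    ring
  | monomial n z =>
    refine ⟨n, z * c ^ n, ?_⟩
    rw [aeval_monomial, map_mul, map_pow, ← h, map_intCast, eq_intCast, mul_pow]
    ring

/-- Among the fractions `a / b + k m b`, two generate the same subfield, which then contains `b`;
so an integer multiple of `b` is an integral polynomial in one of these fractions, and this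
polynomial relation becomes a congruence modulo `a + k m b² + t b`, uniformly in `t`. -/
theorem exists_dvd_mul_sub [NumberField K] (θ : R →+* K) (hθ : Function.Injective θ) (a : R) {b : R}
    (hb : b ≠ 0) {m : ℕ} (hm : m ≠ 0) : ∃ (k : ℕ) (D : ℤ), D ≠ 0 ∧ ∀ t : ℤ, ∃ (J : ℤ) (N : ℕ),
      a + k * m * b ^ 2 + t * b ∣ b ^ N * (D * b - J) := by
  have hb' : θ b ≠ 0 := by rwa [Ne, map_eq_zero_iff θ hθ]
  let x : ℕ → K := fun k => θ (a + k * m * b ^ 2) / θ b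
  have : Finite (IntermediateField ℚ K) :=
    Field.exists_primitive_element_iff_finite_intermediateField ℚ K |>.1
      ⟨Algebra.IsAlgebraic.of_finite ℚ K, Field.exists_primitive_element ℚ K⟩
  obtain ⟨k, l, hkl, he⟩ := Finite.exists_ne_map_eq_of_infinite
    (fun k : ℕ => IntermediateField.adjoin ℚ {x k})
  have hxk : ∀ k, x k ∈ IntermediateField.adjoin ℚ {x k} := fun k =>
    IntermediateField.mem_adjoin_simple_self ℚ (x k)
  have hxl : x l ∈ IntermediateField.adjoin ℚ {x k} := by
    have := hxk l
    rwa [← show IntermediateField.adjoin ℚ {x k} = IntermediateField.adjoin ℚ {x l} from he] at this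
  have hsub : x k - x l = (((k : ℚ) - l) * m : ℚ) • θ b := by
    rw [Algebra.smul_def]
    simp only [x, map_add, map_mul, map_natCast, map_pow, map_sub]
    field_simp
    ring
  have hne : (((k : ℚ) - l) * m : ℚ) ≠ 0 := by
    refine mul_ne_zero (sub_ne_zero.2 (by exact_mod_cast hkl)) (by exact_mod_cast hm)
  have hmem : θ b ∈ IntermediateField.adjoin ℚ {x k} := by
    have h1 := (IntermediateField.adjoin ℚ {x k}).toSubalgebra.smul_mem
      (sub_mem (hxk k) hxl) (((k : ℚ) - l) * m : ℚ)⁻¹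
    rwa [hsub, smul_smul, inv_mul_cancel₀ hne, one_smul] at h1
  obtain ⟨P0, hP0⟩ : ∃ P : ℚ[X], aeval (x k) P = θ b := by
    have h1 : θ b ∈ (IntermediateField.adjoin ℚ {x k}).toSubalgebra := hmem
    rw [IntermediateField.adjoin_simple_toSubalgebra_of_isAlgebraic
      (Algebra.IsAlgebraic.isAlgebraic (x k)), Algebra.adjoin_singleton_eq_range_aeval] at h1
    exact h1
  obtain ⟨D, hD0, hD⟩ := IsLocalization.integerNormalization_spec (nonZeroDivisors ℤ) P0
  set P := IsLocalization.integerNormalization (nonZeroDivisors ℤ) P0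
  refine ⟨k, D, nonZeroDivisors.ne_zero hD0, fun t => ?_⟩
  have hPx : aeval (x k) P = (D : K) * θ b := by
    have h1 := congrArg (aeval (x k)) hD
    rw [aeval_map_algebraMap] at h1
    rw [h1, map_zsmul, hP0, zsmul_eq_mul]
  obtain ⟨Q, hQ⟩ := X_sub_C_dvd_sub_C_eval (a := -t) (p := P)
  have hx : θ b * x k = θ (a + k * m * b ^ 2) := mul_div_cancel₀ _ hb'
  obtain ⟨N, r, hr⟩ := exists_pow_mul_aeval θ hx Q
  refine ⟨P.eval (-t), N + 1, r, hθ ?_⟩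
  have h2 := congrArg (aeval (x k)) hQ
  simp only [map_sub, map_mul, aeval_X, aeval_C, hPx, eq_intCast, Int.cast_neg, map_neg, map_intCast] at h2
  rw [map_mul, map_mul, map_add, ← hr, ← hx, map_pow, map_sub, map_mul, map_mul, map_intCast,
    map_intCast, map_intCast, h2]
  ring

end NumberFieldCongruence

/-! ### Mennicke symbols have finite exponent -/

namespace Matrix.SpecialLinearGroup

section Mennicke

variable {R : Type*} [CommRing R] {Q : Type*} [Group Q]

/-- A homomorphism on `SL₂(R)` that is a (Mennicke) symbol in the first row `(a, b)`: it is trivial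
on elementary matrices, depends on the first row only, and is multiplicative in `a`. -/
structure IsMennicke (F : SpecialLinearGroup (Fin 2) R →* Q) : Prop where
  el01 : ∀ r, F (el 0 1 r) = 1
  el10 : ∀ r, F (el 1 0 r) = 1
  row : ∀ A A' : SpecialLinearGroup (Fin 2) R, A 0 0 = A' 0 0 → A 0 1 = A' 0 1 → F A = F A'
  mul : ∀ A A' B : SpecialLinearGroup (Fin 2) R, A 0 1 = A' 0 1 → B 0 0 = A 0 0 * A' 0 0 →
    B 0 1 = A 0 1 → F A * F A' = F B

variable {F : SpecialLinearGroup (Fin 2) R →* Q}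

theorem IsMennicke.col0 (hF : IsMennicke F) (A : SpecialLinearGroup (Fin 2) R) (t : R) :
    ∃ A' : SpecialLinearGroup (Fin 2) R, F A' = F A ∧ A' 0 0 = A 0 0 + t * A 0 1 ∧
      A' 0 1 = A 0 1 := by
  refine ⟨A * el 1 0 t, by rw [map_mul, hF.el10, mul_one], ?_, ?_⟩ <;>
  · rw [coe_mul, coe_el_two_10]
    simp [Matrix.mul_apply, Fin.sum_univ_succ]
    try ring1

theorem IsMennicke.col1 (hF : IsMennicke F) (A : SpecialLinearGroup (Fin 2) R) (t : R) :
    ∃ A' : SpecialLinearGroup (Fin 2) R, F A' = F A ∧ A' 0 0 = A 0 0 ∧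
      A' 0 1 = A 0 1 + t * A 0 0 := by
  refine ⟨A * el 0 1 t, by rw [map_mul, hF.el01, mul_one], ?_, ?_⟩ <;>
  · rw [coe_mul, coe_el_two_01]
    simp [Matrix.mul_apply, Fin.sum_univ_succ]
    try ring1

theorem IsMennicke.eq_one_of_eq_one (hF : IsMennicke F) {A : SpecialLinearGroup (Fin 2) R}
    (h : A 0 0 = 1) : F A = 1 := by
  rw [hF.row A (el 0 1 (A 0 1)) (by rw [coe_el_two_01]; simp [h]) (by rw [coe_el_two_01]; simp),
    hF.el01]

theorem IsMennicke.eq_one_of_isUnit_right (hF : IsMennicke F) {A : SpecialLinearGroup (Fin 2) R}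
    (h : IsUnit (A 0 1)) : F A = 1 := by
  obtain ⟨u, hu⟩ := h.exists_left_inv
  obtain ⟨A', h1, h2, -⟩ := hF.col0 A ((1 - A 0 0) * u)
  rw [← h1]
  apply hF.eq_one_of_eq_one
  rw [h2]
  linear_combination (1 - A 0 0) * hu

theorem IsMennicke.eq_one_of_isUnit_left (hF : IsMennicke F) {A : SpecialLinearGroup (Fin 2) R}
    (h : IsUnit (A 0 0)) : F A = 1 := by
  obtain ⟨u, hu⟩ := h.exists_left_inv
  obtain ⟨A', h1, -, h2⟩ := hF.col1 A ((1 - A 0 1) * u)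
  rw [← h1]
  apply hF.eq_one_of_isUnit_right
  have : A' 0 1 = 1 := by rw [h2]; linear_combination (1 - A 0 1) * hu
  rw [this]; exact isUnit_one

theorem exists_of_isCoprime {a b : R} (h : IsCoprime a b) :
    ∃ A : SpecialLinearGroup (Fin 2) R, A 0 0 = a ∧ A 0 1 = b := by
  obtain ⟨u, v, h⟩ := h
  exact ⟨⟨!![a, b; -v, u], by rw [det_fin_two_of]; linear_combination h⟩, rfl, rfl⟩

theorem IsMennicke.exists_pow (hF : IsMennicke F) (A : SpecialLinearGroup (Fin 2) R) (k : ℕ) :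
    ∃ B : SpecialLinearGroup (Fin 2) R, B 0 0 = A 0 0 ^ k ∧ B 0 1 = A 0 1 ∧ F B = F A ^ k := by
  induction k with
  | zero =>
    refine ⟨el 0 1 (A 0 1), ?_, ?_, ?_⟩
    · rw [coe_el_two_01]; simp
    · rw [coe_el_two_01]; simp
    · rw [hF.el01, pow_zero]
  | succ k ih =>
    obtain ⟨B, h1, h2, h3⟩ := ih
    obtain ⟨C, h4, h5⟩ := exists_of_isCoprime ((isCoprime_row A 0).pow_left (m := k + 1))
    refine ⟨C, h4, h5, ?_⟩
    rw [pow_succ, ← h3]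
    exact (hF.mul B A C h2 (by rw [h4, h1, pow_succ]) (by rw [h5, h2])).symm

theorem IsMennicke.pow_eq_one (hF : IsMennicke F) {A : SpecialLinearGroup (Fin 2) R} {k : ℕ}
    (h : A 0 1 ∣ A 0 0 ^ k - 1) : F A ^ k = 1 := by
  obtain ⟨B, h1, h2, h3⟩ := hF.exists_pow A k
  obtain ⟨r, hr⟩ := h
  obtain ⟨C, h4, h5, -⟩ := hF.col0 B (-r)
  rw [← h3, ← h4]
  apply hF.eq_one_of_eq_one
  rw [h5, h1, h2]
  linear_combination hr

end Mennicke

section Exponent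

/-- The integers in a principal ideal with finite quotient are the multiples of a positive one. -/
theorem exists_dvd_intCast_iff {R : Type*} [CommRing R] {a : R} (h : Finite (R ⧸ Ideal.span {a})) :
    ∃ m : ℕ, m ≠ 0 ∧ ∀ z : ℤ, a ∣ (z : R) ↔ (m : ℤ) ∣ z := by
  refine ⟨ringChar (R ⧸ Ideal.span {a}), CharP.char_ne_zero_of_finite (R ⧸ Ideal.span {a}) _,
    fun z => ?_⟩
  rw [← CharP.intCast_eq_zero_iff (R ⧸ Ideal.span {a}) (ringChar (R ⧸ Ideal.span {a})) z,
    ← Ideal.mem_span_singleton, ← Ideal.Quotient.eq_zero_iff_mem, map_intCast]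

theorem isCoprime_int {R : Type*} [CommRing R] {a : R} {m : ℕ} (hm : m ≠ 0)
    (h : ∀ z : ℤ, a ∣ (z : R) ↔ (m : ℤ) ∣ z) {z : ℤ} (hz : IsCoprime a (z : R)) :
    IsCoprime (m : ℤ) z := by
  rw [Int.isCoprime_iff_gcd_eq_one]
  obtain ⟨s, hs⟩ := Int.gcd_dvd_left (a := (m : ℤ)) (b := z)
  obtain ⟨t, ht⟩ := Int.gcd_dvd_right (a := (m : ℤ)) (b := z)
  have h1 : (m : ℤ) ∣ z * s := ⟨t, by rw [ht]; nth_rw 2 [hs]; ring⟩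
  rw [← h, Int.cast_mul] at h1
  have h2 : (m : ℤ) ∣ s := (h s).1 (hz.dvd_of_dvd_mul_left h1)
  obtain ⟨w, hw⟩ := h2
  have hs0 : s ≠ 0 := by
    rintro rfl
    rw [mul_zero] at hs
    exact hm (by exact_mod_cast hs)
  have h3 : s * ((Int.gcd m z : ℤ) * w) = s * 1 := by
    rw [mul_one]; nth_rw 2 [hw]; nth_rw 2 [hs]; ring
  have h4 := mul_left_cancel₀ hs0 h3
  have := Int.isUnit_iff.1 (IsUnit.of_mul_eq_one _ h4)
  have h5 : (0 : ℤ) ≤ (Int.gcd m z : ℤ) := Int.natCast_nonneg _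
  omega

/-- Dirichlet's theorem combined with the Chinese remainder theorem. -/
theorem exists_prime_dvd_sub {m n : ℕ} (hm : m ≠ 0) (hn : n ≠ 0) {j c : ℤ}
    (hmn : IsCoprime (m : ℤ) n) (hj : IsCoprime (m : ℤ) j) (hc : IsCoprime (n : ℤ) c) :
    ∃ q : ℕ, q.Prime ∧ (m : ℤ) ∣ q - j ∧ (n : ℤ) ∣ q - c := by
  obtain ⟨α, β, h⟩ := hmn
  set z : ℤ := j * β * n + c * α * m with hz
  have h1 : z = j + m * (c * α - j * α) := by rw [hz]; linear_combination j * h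
  have h2 : z = c + n * (j * β - c * β) := by rw [hz]; linear_combination c * h
  have h3 : IsCoprime ((m * n : ℕ) : ℤ) z := by
    rw [Nat.cast_mul]
    refine IsCoprime.mul_left ?_ ?_
    · rw [h1]; exact hj.add_mul_left_right _
    · rw [h2]; exact hc.add_mul_left_right _
  have : NeZero (m * n) := ⟨mul_ne_zero hm hn⟩
  obtain ⟨q, -, hq, hqz⟩ := Nat.forall_exists_prime_gt_and_eq_mod
    ((ZMod.coe_int_isUnit_iff_isCoprime z (m * n)).2 h3) 0
  have h4 : ((m * n : ℕ) : ℤ) ∣ q - z := by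
    rw [← ZMod.intCast_eq_intCast_iff_dvd_sub, ← hqz, Int.cast_natCast]
  rw [Nat.cast_mul] at h4
  refine ⟨q, hq, ?_, ?_⟩
  · rw [show (q : ℤ) - j = q - z + m * (c * α - j * α) by linear_combination h1]
    exact (dvd_of_mul_right_dvd h4).add (dvd_mul_right _ _)
  · rw [show (q : ℤ) - c = q - z + n * (j * β - c * β) by linear_combination h2]
    exact (dvd_of_mul_left_dvd h4).add (dvd_mul_right _ _)

variable {R K : Type*} [CommRing R] [IsDomain R] [CharZero R] [Field K] [NumberField K]
variable {Q : Type*} [Group Q] {F : SpecialLinearGroup (Fin 2) R →* Q} {D : ℕ} {v : Fin D → R}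

/-- For each prime `l`, a symbol has the same value as one of the form `(a, q)` with a rational
prime `q` in a prescribed residue class modulo a power of `l`, and its order divides the order of
some `GL_d(𝔽_q)`, whose `l`-part is bounded. -/
theorem IsMennicke.exists_prime_part (hF : IsMennicke F)
    (hv : ∀ N : ℕ, N ≠ 0 → ∀ r : R, ∃ c : Fin D → ℤ, (N : R) ∣ r - ∑ i, (c i : R) * v i)
    (hfin : ∀ c : R, c ≠ 0 → Finite (R ⧸ Ideal.span {c}))
    (θ : R →+* K) (hθ : Function.Injective θ) (A : SpecialLinearGroup (Fin 2) R)
    {l : ℕ} (hl : l.Prime) :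
    ∃ M : ℕ, F A ^ M = 1 ∧ ∀ k, l ^ k ∣ M → l ^ k ∣ (2 ^ D).factorial ^ (D * (2 * D)) := by
  by_cases hb : A 0 1 = 0
  · refine ⟨1, ?_, fun k hk => hk.trans (one_dvd _)⟩
    rw [pow_one]
    refine hF.eq_one_of_isUnit_left (IsUnit.of_mul_eq_one (A 1 1) ?_)
    have := det_two A
    rw [hb] at this
    linear_combination this
  by_cases hu : IsUnit (A 0 1)
  · exact ⟨1, by rw [pow_one, hF.eq_one_of_isUnit_right hu], fun k hk => hk.trans (one_dvd _)⟩
  set b := A 0 1 with hbdef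
  have hm0 : D.factorial * l ≠ 0 := mul_ne_zero (Nat.factorial_ne_zero _) hl.ne_zero
  -- make the first entry prime to `D! l`
  obtain ⟨t0, ht0⟩ := exists_isCoprime_add (c := ((D.factorial * l : ℕ) : R))
    (hfin _ (by exact_mod_cast hm0)) (a := A 0 0) (b := b) (p := A 1 1) (q := -A 1 0) (r := 0)
    (by rw [hbdef]; linear_combination det_two A)
  obtain ⟨A1, hF1, ha1, hb1⟩ := hF.col0 A t0
  rw [← hbdef] at ha1 hb1
  rw [← ha1] at ht0
  obtain ⟨k, D0, hD0, hk⟩ := exists_dvd_mul_sub θ hθ (A1 0 0) hb hm0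
  obtain ⟨A2, hF2, ha2, hb2⟩ := hF.col0 A1 (k * (D.factorial * l : ℕ) * b)
  rw [hb1] at ha2 hb2
  have hc2 : IsCoprime (A2 0 0) b := by rw [← hb2]; exact isCoprime_row A2 0
  have hm2 : IsCoprime (A2 0 0) ((D.factorial * l : ℕ) : R) := by
    have := ht0.add_mul_left_left (k * b * b)
    rwa [show A1 0 0 + ((D.factorial * l : ℕ) : R) * (k * b * b) = A2 0 0 by rw [ha2]; ring] at this
  obtain ⟨t, ht⟩ := exists_isCoprime_add_mul hv
    (fun p hp hpD => (hp.dvd_factorial.2 hpD).mul_right l)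
    (mul_ne_zero (Int.natAbs_ne_zero.2 hD0) hl.ne_zero) hc2 hm2
  obtain ⟨A3, hF3, ha3, hb3⟩ := hF.col0 A2 ((D.factorial * l : ℕ) * t)
  rw [hb2] at ha3 hb3
  rw [← ha3] at ht
  obtain ⟨J, N, hJ⟩ := hk ((D.factorial * l : ℕ) * t)
  set a := A3 0 0 with hadef
  have hab : IsCoprime a b := by rw [← hb3]; exact isCoprime_row A3 0
  have hJ2 : a ∣ D0 * b - J := by
    refine (hab.pow_right (n := N)).dvd_of_dvd_mul_left ?_
    convert hJ using 1
    rw [ha3, ha2]; push_cast; ring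
  have ha0 : a ≠ 0 := by
    intro h0
    rw [h0] at hab
    exact hu (isCoprime_zero_left.1 hab)
  obtain ⟨m, hm, hma⟩ := exists_dvd_intCast_iff (hfin a ha0)
  have htD : IsCoprime a (D0 : R) := by
    refine ht.of_isCoprime_of_dvd_right ?_
    have : (D0 : ℤ) ∣ ((D0.natAbs * l : ℕ) : ℤ) := by
      rw [Nat.cast_mul]; exact (Int.dvd_natAbs.2 dvd_rfl).mul_right _
    simpa only [eq_intCast, Int.cast_natCast] using map_dvd (Int.castRingHom R) this
  have htl : IsCoprime a ((l : ℤ) : R) := by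
    refine ht.of_isCoprime_of_dvd_right ?_
    push_cast; exact dvd_mul_left _ _
  obtain ⟨w, u, huw⟩ := isCoprime_int hm hma htD
  have hmR : a ∣ (m : R) := by exact_mod_cast (hma m).2 dvd_rfl
  -- modulo `a`, the entry `b` is the integer `J u`
  have hbj : a ∣ b - ((J * u : ℤ) : R) := by
    have h1 : b - ((J * u : ℤ) : R) = u * (D0 * b - J) + b * w * m := by
      have := congrArg (Int.cast : ℤ → R) huw
      push_cast at this ⊢
      linear_combination (-b) * this
    rw [h1]
    exact (hJ2.mul_left _).add (hmR.mul_left _)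
  have hjm : IsCoprime (m : ℤ) (J * u) := by
    apply isCoprime_int hm hma
    obtain ⟨s, hs⟩ := hbj
    have := hab.add_mul_left_right (-s)
    rwa [show b + a * -s = ((J * u : ℤ) : R) by linear_combination hs] at this
  obtain ⟨c, e, he, hlc, hce, hE⟩ := exists_residue D hl
  obtain ⟨q, hq, hqm, hql⟩ := exists_prime_dvd_sub (j := J * u) (c := c) hm
    (pow_ne_zero e hl.ne_zero) (by push_cast; exact (isCoprime_int hm hma htl).pow_right) hjm
    (by exact_mod_cast (Nat.Coprime.pow_left e hlc).isCoprime)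
  have hqb : a ∣ (q : R) - b := by
    have h1 := ((hma _).2 hqm).sub hbj
    push_cast at h1
    convert h1 using 1; ring
  obtain ⟨s, hs⟩ := hqb
  obtain ⟨A4, hF4, ha4, hb4⟩ := hF.col1 A3 s
  have hb4' : A4 0 1 = q := by rw [hb4, hb3]; linear_combination -hs
  have haq : IsCoprime (A4 0 0) (q : R) := by rw [← hb4']; exact isCoprime_row A4 0
  obtain ⟨d, hd, hdvd⟩ := exists_dvd_pow_sub_one hv hq haq
  rw [← hb4'] at hdvd
  have hpow := hF.pow_eq_one hdvd
  rw [hF4, hF3, hF2, hF1] at hpow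
  refine ⟨_, hpow, fun k' hk' => ?_⟩
  have hqc : q ≡ c [MOD l ^ e] := by
    rw [Nat.ModEq.comm, Nat.modEq_iff_dvd]; exact_mod_cast hql
  refine (pow_dvd_pow l (pow_dvd_card hl he hd (fun i h1 hi h => ?_) (fun h => ?_) hk')).trans hE
  · apply hce i h1 hi
    have h2 : 1 ≡ q ^ i [MOD l ^ e] := (Nat.modEq_iff_dvd' (Nat.one_le_pow _ _ hq.pos)).2 h
    rcases Nat.eq_zero_or_pos (c ^ i) with h0 | h0
    · rw [h0]; exact dvd_zero _
    · exact (Nat.modEq_iff_dvd' h0).1 (h2.trans (hqc.pow i))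
  · have h1 : l ∣ c := ((hqc.of_dvd (dvd_pow_self l (by omega))).dvd_iff dvd_rfl).1 h
    exact hl.one_lt.ne' (Nat.Coprime.eq_one_of_dvd hlc h1)

/-- Every symbol is killed by an exponent depending only on `D`. -/
theorem IsMennicke.pow_factorial (hF : IsMennicke F)
    (hv : ∀ N : ℕ, N ≠ 0 → ∀ r : R, ∃ c : Fin D → ℤ, (N : R) ∣ r - ∑ i, (c i : R) * v i)
    (hfin : ∀ c : R, c ≠ 0 → Finite (R ⧸ Ideal.span {c}))
    (θ : R →+* K) (hθ : Function.Injective θ) (A : SpecialLinearGroup (Fin 2) R) :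
    F A ^ (2 ^ D).factorial ^ (D * (2 * D)) = 1 := by
  rw [← orderOf_dvd_iff_pow_eq_one, Nat.dvd_iff_prime_pow_dvd_dvd]
  intro l k hl hk
  obtain ⟨M, hM, h⟩ := hF.exists_prime_part hv hfin θ hθ A hl
  exact h k (hk.trans (orderOf_dvd_of_pow_eq_one hM))

end Exponent

end Matrix.SpecialLinearGroup

namespace Matrix.SpecialLinearGroup

section AbelianExponent

variable {ι κ R K : Type*} [Fintype ι] [DecidableEq ι] [Fintype κ] [DecidableEq κ]
variable [CommRing R] [IsDomain R] [CharZero R] [Field K] [NumberField K]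
variable {Q : Type*} [CommGroup Q]

/-- Homomorphisms from `SL_n(R)`, `n ≥ 3`, to commutative groups have a common finite exponent. -/
theorem pow_factorial_eq_one (e : Fin 3 ⊕ κ ≃ ι) {D : ℕ} {v : Fin D → R}
    (hv : ∀ N : ℕ, N ≠ 0 → ∀ r : R, ∃ c : Fin D → ℤ, (N : R) ∣ r - ∑ i, (c i : R) * v i)
    (hfin : ∀ c : R, c ≠ 0 → Finite (R ⧸ Ideal.span {c}))
    (θ : R →+* K) (hθ : Function.Injective θ) (f : SpecialLinearGroup ι R →* Q)
    (g : SpecialLinearGroup ι R) : f g ^ (2 ^ D).factorial ^ (D * (2 * D)) = 1 := by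
  have h3 : 3 ≤ Fintype.card ι := by
    rw [← Fintype.card_congr e, Fintype.card_sum, Fintype.card_fin]; omega
  -- elementary matrices are commutators
  have hel : ∀ i j r, i ≠ j → f (el i j r) = 1 := by
    intro i k r hik
    obtain ⟨j, hji, hjk⟩ := exists_third h3 i k
    have := congrArg f (el_conj_row hji.symm hik hjk r 1)
    rw [map_mul, map_mul, map_mul, map_inv, mul_right_comm, mul_inv_cancel, one_mul, one_mul] at this
    exact left_eq_mul.1 this
  have hp : ∀ (i j : Fin 3) (r : R), i ≠ j → (f.comp (emb e)) (el i j r) = 1 := by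
    intro i j r hij
    rw [MonoidHom.comp_apply, emb_el e hij]
    exact hel _ _ _ (fun h => hij (Sum.inl_injective (e.injective h)))
  have hc : ∀ A : SpecialLinearGroup (Fin 2) R, A ∈ cong 1 := fun A => by
    rw [cong_one]; trivial
  have hp' : ∀ (i j : Fin 3) (r : R), i ≠ j → (f.comp (emb e)) (el i j (1 * r)) = 1 :=
    fun i j r h => hp i j _ h
  have hF : IsMennicke ((f.comp (emb e)).comp emb12) := by
    refine ⟨fun r => ?_, fun r => ?_, fun A A' h0 h1 => ?_, fun A A' B h0 h1 h2 => ?_⟩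
    · rw [MonoidHom.comp_apply, emb12_el_01]; exact hp _ _ _ (by decide)
    · rw [MonoidHom.comp_apply, emb12_el_10]; exact hp _ _ _ (by decide)
    · exact map_emb12_eq hp' (hc _) (hc _) h0 h1
    · exact map_emb12_mul hp' (fun A _ i j r _ => Commute.all _ _) (hc _) (hc _) (hc _) h0 h1 h2
  have hg : g ∈ ((powMonoidHom ((2 ^ D).factorial ^ (D * (2 * D)))).comp f).ker := by
    refine cong_le (x := 1) (i0 := e (Sum.inl 0)) (i1 := e (Sum.inl 1)) (fun i j z h => ?_)
      (fun i j r g h hg => ?_) hfin ?_ (fun g _ hg => ?_) g (by simp [cong_one])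
    · rw [MonoidHom.mem_ker, MonoidHom.comp_apply, hel i j _ h, map_one]
    · have := (MonoidHom.normal_ker _).conj_mem _ hg (el i j r)⁻¹
      convert this using 1; group
    · exact fun h => absurd (Sum.inl_injective (e.injective h)) (by decide)
    · obtain ⟨A, rfl, -⟩ := exists_emb e hg
      exact hF.pow_factorial hv hfin θ hθ A
  exact hg

end AbelianExponent

end Matrix.SpecialLinearGroup

/-! ### Arithmetic of localizations of orders -/

section Localization

variable {B R : Type*} [CommRing B] [IsDomain B] [CommRing R] [Algebra B R]
variable (S : Submonoid B)

/-- A nonzero `b : B` has finite residue ring, so elements of `S` have a power congruent to a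
smaller power modulo `b`; hence `B → R / b` is surjective. -/
theorem exists_dvd_sub_algebraMap [Ring.HasFiniteQuotients B] [IsLocalization S R] {b : B}
    (hb : b ≠ 0) (r : R) : ∃ c : B, algebraMap B R b ∣ r - algebraMap B R c := by
  obtain ⟨a, s, rfl⟩ := IsLocalization.exists_mk'_eq S r
  have : Finite (B ⧸ Ideal.span {b}) :=
    Ring.HasFiniteQuotients.finiteQuotient (by rwa [Ne, Ideal.span_singleton_eq_bot])
  obtain ⟨i, j, hij, he⟩ := Finite.exists_ne_map_eq_of_infinite
    (fun i : ℕ => Ideal.Quotient.mk (Ideal.span {b}) ((s : B) ^ i))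
  wlog hlt : i < j generalizing i j
  · exact this j i hij.symm he.symm (by omega)
  obtain ⟨k, rfl⟩ := Nat.exists_eq_add_of_lt hlt
  obtain ⟨t, ht⟩ := Ideal.mem_span_singleton.1 (Ideal.Quotient.eq.1 he)
  have hs : IsUnit (algebraMap B R s) := IsLocalization.map_units R s
  refine ⟨a * s ^ k, ?_⟩
  have h1 : algebraMap B R s * IsLocalization.mk' R a s = algebraMap B R a := by
    rw [mul_comm]; exact IsLocalization.mk'_spec R a s
  rw [← ((hs.pow i).mul hs).dvd_mul_left]
  refine Dvd.intro (algebraMap B R (t * a)) ?_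
  have h2 := congrArg (algebraMap B R) ht
  simp only [map_mul, map_sub, map_pow] at h2 ⊢
  linear_combination (-algebraMap B R a) * h2 - algebraMap B R s ^ i * h1

theorem finite_quotient_localization [Ring.HasFiniteQuotients B] [IsLocalization S R] {c : R}
    (hc : c ≠ 0) : Finite (R ⧸ Ideal.span {c}) := by
  obtain ⟨b, s, rfl⟩ := IsLocalization.exists_mk'_eq S c
  have hb : b ≠ 0 := by rintro rfl; exact hc (IsLocalization.mk'_zero s)
  have hcb : IsLocalization.mk' R b s ∣ algebraMap B R b :=
    Dvd.intro (algebraMap B R s) (IsLocalization.mk'_spec R b s)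
  have : Finite (B ⧸ Ideal.span {b}) :=
    Ring.HasFiniteQuotients.finiteQuotient (by rwa [Ne, Ideal.span_singleton_eq_bot])
  let F : B ⧸ Ideal.span {b} →+* R ⧸ Ideal.span {IsLocalization.mk' R b s} :=
    Ideal.Quotient.lift (Ideal.span {b}) ((Ideal.Quotient.mk _).comp (algebraMap B R)) (by
      intro x hx
      rw [RingHom.comp_apply, Ideal.Quotient.eq_zero_iff_mem, Ideal.mem_span_singleton]
      exact hcb.trans (map_dvd _ (Ideal.mem_span_singleton.1 hx)))
  refine Finite.of_surjective F fun y => ?_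
  obtain ⟨r, rfl⟩ := Ideal.Quotient.mk_surjective y
  obtain ⟨x, hx⟩ := exists_dvd_sub_algebraMap S hb r
  refine ⟨Ideal.Quotient.mk _ x, ?_⟩
  rw [Ideal.Quotient.lift_mk, RingHom.comp_apply, eq_comm, Ideal.Quotient.eq,
    Ideal.mem_span_singleton]
  exact hcb.trans hx

theorem exists_generators [Ring.HasFiniteQuotients B] [CharZero B] [Module.Finite ℤ B]
    [IsLocalization S R] : ∃ (D : ℕ) (v : Fin D → R), ∀ N : ℕ, N ≠ 0 → ∀ r : R,
      ∃ c : Fin D → ℤ, (N : R) ∣ r - ∑ i, (c i : R) * v i := by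
  obtain ⟨D, w, hw⟩ := Module.Finite.exists_fin (R := ℤ) (M := B)
  refine ⟨D, fun i => algebraMap B R (w i), fun N hN r => ?_⟩
  obtain ⟨b, hb⟩ := exists_dvd_sub_algebraMap S (b := (N : B)) (by exact_mod_cast hN) r
  obtain ⟨c, hc⟩ := (Submodule.mem_span_range_iff_exists_fun ℤ).1
    (show b ∈ Submodule.span ℤ (Set.range w) by rw [hw]; trivial)
  refine ⟨c, ?_⟩
  rw [← hc, map_natCast, map_sum] at hb
  simpa only [zsmul_eq_mul, map_mul, map_intCast] using hb

end Localization

/-! ### Finiteness of the image when the kernel contains elementary matrices -/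

namespace Matrix.SpecialLinearGroup

/-- An extremal character restricts to an injective multiplicative function on the center of the
quotient by its kernel; an exponent of this center thus bounds its order. -/
theorem finite_center_of_pow {Γ : Type*} [Group Γ] {φ : Γ → ℂ} (hφ : IsExtremalCharacter φ)
    {N : Subgroup Γ} [N.Normal] (hN : ∀ g, g ∈ N ↔ φ g = 1) {M : ℕ} (hM : 0 < M)
    (h : ∀ g : Γ, (QuotientGroup.mk g : Γ ⧸ N) ^ M = 1) :
    Finite (Subgroup.center (Γ ⧸ N)) := by
  have hmul : ∀ z : Γ, (QuotientGroup.mk z : Γ ⧸ N) ∈ Subgroup.center (Γ ⧸ N) →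
      ∀ g, φ (g * z) = φ z * φ g := by
    intro z hz g
    refine hφ.mul_of_central (fun g => ?_) g
    rw [← hN, ← QuotientGroup.eq_one_iff]
    have := Subgroup.mem_center_iff.1 hz (QuotientGroup.mk g)
    rw [QuotientGroup.mk_mul, QuotientGroup.mk_mul, QuotientGroup.mk_mul, QuotientGroup.mk_inv,
      QuotientGroup.mk_inv, mul_assoc, ← this]
    group
  have hpow : ∀ z : Γ, (QuotientGroup.mk z : Γ ⧸ N) ∈ Subgroup.center (Γ ⧸ N) →
      ∀ k : ℕ, φ (z ^ k) = φ z ^ k := by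
    intro z hz k
    induction k with
    | zero => rw [pow_zero, pow_zero]; exact (hN 1).1 N.one_mem
    | succ k ih => rw [pow_succ, hmul z hz, ih, pow_succ, mul_comm]
  have hroot : ∀ z : Γ, (QuotientGroup.mk z : Γ ⧸ N) ∈ Subgroup.center (Γ ⧸ N) → φ z ^ M = 1 := by
    intro z hz
    rw [← hpow z hz, ← hN, ← QuotientGroup.eq_one_iff, QuotientGroup.mk_pow, h]
  have hout : ∀ z : Subgroup.center (Γ ⧸ N),
      (QuotientGroup.mk (Quotient.out z.1) : Γ ⧸ N) ∈ Subgroup.center (Γ ⧸ N) := fun z => by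
    rw [QuotientGroup.out_eq']; exact z.2
  refine Finite.of_injective (fun z : Subgroup.center (Γ ⧸ N) =>
    (⟨φ (Quotient.out z.1), (Polynomial.mem_nthRootsFinset hM 1).2 (hroot _ (hout z))⟩ :
      Polynomial.nthRootsFinset M (1 : ℂ))) fun z w hzw => ?_
  have h1 : φ (Quotient.out z.1) = φ (Quotient.out w.1) := congrArg Subtype.val hzw
  have h2 : φ (Quotient.out z.1 * ((Quotient.out z.1)⁻¹ * Quotient.out w.1)) =
      φ ((Quotient.out z.1)⁻¹ * Quotient.out w.1) * φ (Quotient.out z.1) := by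
    refine hmul _ ?_ _
    rw [QuotientGroup.mk_mul, QuotientGroup.mk_inv]
    exact mul_mem (inv_mem (hout z)) (hout w)
  rw [mul_inv_cancel_left, ← h1] at h2
  have h3 : φ (Quotient.out z.1) ≠ 0 := fun h0 => by
    have := hroot _ (hout z)
    rw [h0, zero_pow hM.ne'] at this
    exact zero_ne_one this
  have h4 := (hN _).2 (mul_right_cancel₀ h3 ((one_mul _).trans h2)).symm
  rw [← QuotientGroup.eq, QuotientGroup.out_eq', QuotientGroup.out_eq'] at h4
  exact Subtype.ext h4

variable {ι κ R K : Type*} [Fintype ι] [DecidableEq ι] [Fintype κ] [DecidableEq κ]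
variable [CommRing R] [IsDomain R] [CharZero R] [Field K] [NumberField K]

theorem finiteIndex_cong {x : R} (h : Finite (R ⧸ Ideal.span {x})) :
    (cong x : Subgroup (SpecialLinearGroup ι R)).FiniteIndex := by
  have : Finite (Matrix ι ι (R ⧸ Ideal.span {x})) := inferInstanceAs (Finite (ι → ι → _))
  have : Finite (SpecialLinearGroup ι (R ⧸ Ideal.span {x})) :=
    Finite.of_injective _ Subtype.val_injective
  exact Subgroup.finiteIndex_ker _

/-- If the kernel of an extremal character contains the elementary matrices of some level `x`, the
quotient by the kernel has center of finite index, and the transfer to the center shows that this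
quotient has finite exponent; so it is finite. -/
theorem factorsThroughFiniteQuotient (e : Fin 3 ⊕ κ ≃ ι) {D : ℕ} {v : Fin D → R}
    (hv : ∀ N : ℕ, N ≠ 0 → ∀ r : R, ∃ c : Fin D → ℤ, (N : R) ∣ r - ∑ i, (c i : R) * v i)
    (hfin : ∀ c : R, c ≠ 0 → Finite (R ⧸ Ideal.span {c}))
    (θ : R →+* K) (hθ : Function.Injective θ) {φ : SpecialLinearGroup ι R → ℂ}
    (hφ : IsExtremalCharacter φ) {x : R} (hx : x ≠ 0)
    (h : ∀ i j z, i ≠ j → φ (el i j (x * z)) = 1) : FactorsThroughFiniteQuotient φ := by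
  have hc := hφ.isCharacter
  have hnor : hc.ker.Normal := hc.normal_ker
  set G := SpecialLinearGroup ι R ⧸ hc.ker
  let q : SpecialLinearGroup ι R →* G := QuotientGroup.mk' hc.ker
  have hq : ∀ i j z, i ≠ j → q (el i j (x * z)) = 1 := fun i j z hij =>
    (QuotientGroup.eq_one_iff _).2 (hc.mem_ker.2 (h i j z hij))
  have hle : cong x ≤ (Subgroup.center G).comap q := by
    intro g hg
    rw [Subgroup.mem_comap, Subgroup.mem_center_iff]
    intro y
    obtain ⟨y, rfl⟩ := QuotientGroup.mk'_surjective hc.ker y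
    exact (commute_of_mem_cong e hq hx hfin hg y).eq.symm
  have : (cong x : Subgroup (SpecialLinearGroup ι R)).FiniteIndex := finiteIndex_cong (hfin x hx)
  have : ((Subgroup.center G).comap q).FiniteIndex := Subgroup.finiteIndex_of_le hle
  have : (Subgroup.center G).FiniteIndex := by
    constructor
    rw [← Subgroup.index_comap_of_surjective _ (QuotientGroup.mk'_surjective hc.ker)]
    exact this.index_ne_zero
  have hexp : ∀ g : SpecialLinearGroup ι R,
      (QuotientGroup.mk g : G) ^ ((Subgroup.center G).index *
        (2 ^ D).factorial ^ (D * (2 * D))) = 1 := by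
    intro g
    let _ : CommGroup (Subgroup.center G) := { (inferInstance : Group (Subgroup.center G)) with
      mul_comm := fun a b => Subtype.ext (Subgroup.mem_center_iff.1 b.2 a) }
    have h1 := pow_factorial_eq_one (Q := Subgroup.center G) e hv hfin θ hθ
      (((MonoidHom.transferCenterPow G).comp q)) g
    have h2 := congrArg Subtype.val h1
    rw [pow_mul]
    rw [SubmonoidClass.coe_pow, MonoidHom.comp_apply, MonoidHom.transferCenterPow_apply] at h2
    exact h2
  have hfinC : Finite (Subgroup.center G) := finite_center_of_pow hφ (fun g => hc.mem_ker)
    (Nat.mul_pos (Nat.pos_of_ne_zero this.index_ne_zero)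
      (Nat.pow_pos (Nat.factorial_pos _))) hexp
  have hfinG : Finite G := by
    have : Finite (G ⧸ Subgroup.center G) := Subgroup.finite_quotient_of_finiteIndex
    exact Finite.of_equiv _ (Subgroup.groupEquivQuotientProdSubgroup (s := Subgroup.center G)).symm
  refine ⟨hc.ker, hnor, Subgroup.finiteIndex_of_finite_quotient, fun g g' hg => ?_⟩
  have := hc.mul_of_eq_one (hc.mem_ker.1 hg) g
  rw [mul_inv_cancel_left] at this
  exact this.symm

end Matrix.SpecialLinearGroup

theorem character_rigidity_SLn_localization
    (K : Type*) [Field K] [NumberField K]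
    (B : Subalgebra ℤ K) (hB : (Subalgebra.toSubmodule B).FG)
    [IsFractionRing B K]
    (S : Submonoid B) (hS : (0 : B) ∉ S)
    (R : Type*) [CommRing R] [IsDomain R] [Algebra B R] [IsLocalization S R]
    (n : ℕ) (hn : 3 ≤ n)
    (τ : Matrix.SpecialLinearGroup (Fin n) R → ℂ)
    (hτ : IsExtremalCharacter τ) :
    FactorsThroughFiniteQuotient τ ∨
    ∀ g : Matrix.SpecialLinearGroup (Fin n) R,
      g ∉ Subgroup.center (Matrix.SpecialLinearGroup (Fin n) R) → τ g = 0 := by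
  have : Module.Finite ℤ B := Module.Finite.iff_fg.2 hB
  have hS' : S ≤ nonZeroDivisors B := fun s hs =>
    mem_nonZeroDivisors_of_ne_zero (fun h => hS (h ▸ hs))
  have hinj : Function.Injective (algebraMap B R) := IsLocalization.injective R hS'
  have : CharZero R := charZero_of_injective_algebraMap hinj
  have hunit : ∀ s : S, IsUnit (algebraMap B K s) := fun s =>
    IsUnit.mk0 _ fun h => hS (by
      rw [map_eq_zero_iff _ (IsFractionRing.injective B K)] at h
      exact h ▸ s.2)
  have hθ : Function.Injective (IsLocalization.lift hunit : R →+* K) :=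
    (IsLocalization.lift_injective_iff hunit).2 fun x y =>
      ⟨fun h => congrArg _ (hinj h), fun h => congrArg _ (IsFractionRing.injective B K h)⟩
  have hfin : ∀ c : R, c ≠ 0 → Finite (R ⧸ Ideal.span {c}) := fun c hc =>
    finite_quotient_localization S hc
  obtain ⟨D, v, hv⟩ := exists_generators (R := R) S
  let e : Fin 3 ⊕ Fin (n - 3) ≃ Fin n := finSumFinEquiv.trans (finCongr (by omega))
  have h3 : 3 ≤ Fintype.card (Fin n) := by rwa [Fintype.card_fin]
  rcases hτ.dichotomy h3 hfin with h | ⟨x, hx, h⟩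
  · exact Or.inr (hτ.isCharacter.eq_zero_of_not_mem_center h3 h)
  · exact Or.inl (Matrix.SpecialLinearGroup.factorsThroughFiniteQuotient e hv hfin _ hθ hτ hx h)
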